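/- arXiv:1801.08733 — 2 statements merged into one kernel-verified Lean document; each statement's English description precedes it below -/
import Mathlib

section
/- There exists a function ε(n) tending to 0 as n → ∞ such that for all sufficiently large n, every multiplicative 3-Sidon subset A of {1,2,…,n} satisfies |A| ≤ π(n) + π(n/2) + n^{2/3}(log n)^{2^{1/3} − 1/3 + ε(n)}. Equivalently: for every ε > 0 there exists N such that for all n ≥ N, every multiplicative 3-Sidon subset A of {1,2,…,n} satisfies |A| ≤ π(n) + π(n/2) + n^{2/3}(log n)^{2^{1/3} − 1/3 + ε}. -/
/-- A finite set of naturals is a multiplicative 3-Sidon set if there do not exist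
pairwise distinct elements `s₁, s₂, s₃, t₁, t₂, t₃` of it with `s₁s₂s₃ = t₁t₂t₃`. -/
def MulSidon3 (A : Finset ℕ) : Prop :=
  ¬ ∃ s₁ s₂ s₃ t₁ t₂ t₃ : ℕ, s₁ ∈ A ∧ s₂ ∈ A ∧ s₃ ∈ A ∧ t₁ ∈ A ∧ t₂ ∈ A ∧ t₃ ∈ A ∧
    ([s₁, s₂, s₃, t₁, t₂, t₃] : List ℕ).Nodup ∧ s₁ * s₂ * s₃ = t₁ * t₂ * t₃

/-!
If every `a ∈ A` is factored as `f a * (a / f a)`, then the pairs `(f a, a / f a)` are the edges of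
a bipartite graph. The alternating edges of a hexagon in it would give `s₁ s₂ s₃ = t₁ t₂ t₃`, so the
graph is `C₆`-free, and with sides `X` and `Y` it has `O((|X| |Y|) ^ (2 / 3) + |X| + |Y|)` edges.

Let `T = n ^ (1 / 3)`. If `a` has a prime factor `p > T ^ 2`, factor it as `p * (a / p)`, where
`a / p ≤ T`. The primes above `n / 2` have degree at most one, and the degrees in excess of two sum
to `O(T ^ 2)`, whence at most `π(n) + π(n / 2) + O(T ^ 2)` such `a`.

From any other `a ≥ T`, remove the smallest prime factors one at a time until a divisor
`u ∈ [T, T ^ 2]` remains; no prime factor of `a / u` exceeds one of `u`. Split `A` dyadically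
according to `u`. With `y ≈ exp (√log n)`, either all primes of `a / u` are below `y` or all primes
of `u` are at least `y`, and in both cases a sieve bound saves a factor `√log n` on one of the two
sides. Hence each of the `O(log n)` dyadic pieces has `O(T ^ 2 / log n ^ (1 / 3))` elements. The
total is `O(n ^ (2 / 3) * log n ^ (2 / 3))`, and `2 / 3 < 2 ^ (1 / 3) - 1 / 3`.
-/

open Finset
open ArithmeticFunction (vonMangoldt vonMangoldt_nonneg vonMangoldt_sum)

/-! ### Hexagon-free bipartite graphs -/

theorem three_le_add_add_of_mul_mul_eq_one {x y z : ℝ} (hx : 0 ≤ x) (hy : 0 ≤ y)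
    (hz : 0 ≤ z) (h : x * y * z = 1) : 3 ≤ x + y + z := by
  have amgm := Real.geom_mean_le_arith_mean3_weighted (w₁ := 1 / 3) (w₂ := 1 / 3) (w₃ := 1 / 3)
    (by norm_num) (by norm_num) (by norm_num) hx hy hz (by norm_num)
  rw [← Real.mul_rpow hx hy, ← Real.mul_rpow (mul_nonneg hx hy) hz, h, Real.one_rpow] at amgm
  linarith

-- Low-degree edges are paid for by the terms `6 / d`; for the others `d ≤ 3 * a` and AM-GM applies.
theorem three_le_div_add_mul_inv_add_mul_inv {s t : ℝ} (hs : 0 < s) (ht : 0 < t) {a b d₁ d₂ : ℕ}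
    (hd₁ : 0 < d₁) (hd₂ : 0 < d₂) (ha : d₁ ≤ a + 2) (hb : d₂ ≤ b + 2) :
    3 ≤ (b * a : ℕ) / (s * t) + (6 + 3 * s) * (d₁ : ℝ)⁻¹ + (6 + 3 * t) * (d₂ : ℝ)⁻¹ := by
  have three_le {u : ℝ} (hu : 0 < u) {d : ℕ} (hd : 0 < d) (hd2 : d ≤ 2) :
      3 ≤ (6 + 3 * u) * (d : ℝ)⁻¹ := by
    have : (d : ℝ) ≤ 2 := by exact_mod_cast hd2
    rw [← div_eq_mul_inv, le_div_iff₀ (by positivity)]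
    linarith
  have div_le {u : ℝ} (hu : 0 < u) {d c : ℕ} (hd : 2 < d) (hc : d ≤ c + 2) :
      u / c ≤ (6 + 3 * u) * (d : ℝ)⁻¹ := by
    have hc0 : (0 : ℝ) < c := by exact_mod_cast (by lia : 0 < c)
    have hdc : (d : ℝ) ≤ 3 * c := by exact_mod_cast (by lia : d ≤ 3 * c)
    have hd0 : (0 : ℝ) < d := by exact_mod_cast (by lia : 0 < d)
    rw [← div_eq_mul_inv, div_le_div_iff₀ hc0 hd0]
    nlinarith
  have : 0 ≤ ((b * a : ℕ) : ℝ) / (s * t) := by positivity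
  have : 0 ≤ (6 + 3 * s) * (d₁ : ℝ)⁻¹ := by positivity
  have : 0 ≤ (6 + 3 * t) * (d₂ : ℝ)⁻¹ := by positivity
  obtain hd₁' | hd₁' := le_or_gt d₁ 2
  · linarith [three_le hs hd₁ hd₁']
  obtain hd₂' | hd₂' := le_or_gt d₂ 2
  · linarith [three_le ht hd₂ hd₂']
  have ha0 : (0 : ℝ) < a := by exact_mod_cast (by lia : 0 < a)
  have hb0 : (0 : ℝ) < b := by exact_mod_cast (by lia : 0 < b)
  have amgm : 3 ≤ ((b * a : ℕ) : ℝ) / (s * t) + s / a + t / b :=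
    three_le_add_add_of_mul_mul_eq_one (by positivity) (by positivity) (by positivity) (by
      push_cast
      field_simp)
  linarith [div_le hs hd₁' ha, div_le ht hd₂' hb]

/-- A finite bipartite graph with sides in `α` and `β`, given by its edges. -/
abbrev BipartiteEdges (α β : Type*) := Finset (α × β)

namespace BipartiteEdges

variable {α β : Type*}

/-- The graph with its two sides exchanged, which lets every one-sided statement be used for both
sides. -/
def transpose (E : BipartiteEdges α β) : BipartiteEdges β α :=
  E.map (Equiv.prodComm α β).toEmbedding

@[simp]
theorem mem_transpose {E : BipartiteEdges α β} {e : β × α} : e ∈ E.transpose ↔ e.swap ∈ E := by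
  simp [transpose, Finset.mem_map_equiv]

@[simp]
theorem transpose_transpose (E : BipartiteEdges α β) : E.transpose.transpose = E := by
  ext e
  simp

@[simp]
theorem card_transpose (E : BipartiteEdges α β) : #E.transpose = #E :=
  card_map _

theorem sum_transpose {M : Type*} [AddCommMonoid M] (E : BipartiteEdges α β) (f : β × α → M) :
    ∑ e ∈ E.transpose, f e = ∑ e ∈ E, f e.swap :=
  sum_map _ _ _

/-- The graph contains no hexagon. -/
def C6Free (E : BipartiteEdges α β) : Prop :=
  ∀ ⦃x₁ x₂ x₃ : α⦄ ⦃y₁ y₂ y₃ : β⦄, x₁ ≠ x₂ → x₁ ≠ x₃ → x₂ ≠ x₃ → y₁ ≠ y₂ → y₁ ≠ y₃ → y₂ ≠ y₃ →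
    (x₁, y₁) ∈ E → (x₂, y₁) ∈ E → (x₂, y₂) ∈ E → (x₃, y₂) ∈ E → (x₃, y₃) ∈ E → (x₁, y₃) ∉ E

theorem C6Free.transpose {E : BipartiteEdges α β} (h : E.C6Free) : E.transpose.C6Free := by
  intro y₁ y₂ y₃ x₁ x₂ x₃ hy₁₂ hy₁₃ hy₂₃ hx₁₂ hx₁₃ hx₂₃ h₁ h₂ h₃ h₄ h₅ h₆
  simp only [mem_transpose, Prod.swap_prod_mk] at h₁ h₂ h₃ h₄ h₅ h₆
  exact h hx₁₂ hx₁₃ hx₂₃ hy₂₃ hy₁₂.symm hy₁₃.symm h₂ h₃ h₄ h₅ h₆ h₁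

section Neighbourhoods

variable [DecidableEq α] [DecidableEq β]

/-- The neighbours in `β` of a vertex in `α`. Neighbours of `y : β` are `E.transpose.nbhd y`. -/
def nbhd (E : BipartiteEdges α β) (x : α) : Finset β :=
  {e ∈ E | e.1 = x}.image Prod.snd

@[simp]
theorem mem_nbhd {E : BipartiteEdges α β} {x : α} {y : β} : y ∈ E.nbhd x ↔ (x, y) ∈ E := by
  simp [nbhd]

theorem card_nbhd (E : BipartiteEdges α β) (x : α) : #(E.nbhd x) = #{e ∈ E | e.1 = x} := by
  refine card_image_of_injOn fun e he f hf hef ↦ ?_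
  simp only [coe_filter, Set.mem_ofPred_eq] at he hf
  exact Prod.ext (he.2.trans hf.2.symm) hef

theorem sum_inv_card_nbhd_le {E : BipartiteEdges α β} {X : Finset α} (hX : ∀ e ∈ E, e.1 ∈ X) :
    ∑ e ∈ E, (#(E.nbhd e.1) : ℝ)⁻¹ ≤ #X := by
  calc ∑ e ∈ E, (#(E.nbhd e.1) : ℝ)⁻¹
      = ∑ x ∈ X, ∑ e ∈ E with e.1 = x, (#(E.nbhd e.1) : ℝ)⁻¹ :=
        (sum_fiberwise_of_maps_to hX _).symm
    _ = ∑ x ∈ X, (#(E.nbhd x) : ℝ) * (#(E.nbhd x) : ℝ)⁻¹ := by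
        refine sum_congr rfl fun x _ ↦ ?_
        rw [sum_congr rfl (g := fun _ ↦ (#(E.nbhd x) : ℝ)⁻¹) fun e he ↦ by
          rw [(mem_filter.1 he).2], sum_const, nsmul_eq_mul, card_nbhd]
    _ ≤ ∑ _x ∈ X, (1 : ℝ) := sum_le_sum fun _ _ ↦ mul_inv_le_one
    _ = #X := by simp

/-- For an edge `xy`, the other neighbours `y'` of `x` that are *light* with respect to `y`:
`y` and `y'` have at most two common neighbours. -/
def lightNbhd (E : BipartiteEdges α β) (x : α) (y : β) : Finset β :=
  {y' ∈ E.nbhd x | y' ≠ y ∧ #(E.transpose.nbhd y ∩ E.transpose.nbhd y') ≤ 2}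

theorem mem_lightNbhd {E : BipartiteEdges α β} {x : α} {y y' : β} :
    y' ∈ E.lightNbhd x y ↔
      (x, y') ∈ E ∧ y' ≠ y ∧ #(E.transpose.nbhd y ∩ E.transpose.nbhd y') ≤ 2 := by
  simp [lightNbhd]

theorem C6Free.heavy_unique {E : BipartiteEdges α β} (h : E.C6Free) {x : α} {y y₁ y₂ : β}
    (hy₁ : (x, y₁) ∈ E) (hne₁ : y₁ ≠ y)
    (hheavy₁ : 2 < #(E.transpose.nbhd y ∩ E.transpose.nbhd y₁))
    (hy₂ : (x, y₂) ∈ E) (hne₂ : y₂ ≠ y)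
    (hheavy₂ : 2 < #(E.transpose.nbhd y ∩ E.transpose.nbhd y₂)) : y₁ = y₂ := by
  by_contra hne
  obtain ⟨x₁, hx₁, hx₁x⟩ : ∃ x₁ ∈ E.transpose.nbhd y ∩ E.transpose.nbhd y₁, x₁ ∉ ({x} : Finset α) :=
    exists_mem_notMem_of_card_lt_card (by rw [card_singleton]; lia)
  obtain ⟨x₂, hx₂, hx₂x⟩ : ∃ x₂ ∈ E.transpose.nbhd y ∩ E.transpose.nbhd y₂,
      x₂ ∉ ({x, x₁} : Finset α) :=
    exists_mem_notMem_of_card_lt_card (card_le_two.trans_lt hheavy₂)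
  simp only [mem_inter, mem_nbhd, mem_transpose, Prod.swap_prod_mk] at hx₁ hx₂
  simp only [mem_insert, mem_singleton, not_or] at hx₁x hx₂x
  exact h (Ne.symm hx₁x) (Ne.symm hx₂x.1) (Ne.symm hx₂x.2) hne₁ hne hne₂.symm
    hy₁ hx₁.2 hx₁.1 hx₂.1 hx₂.2 hy₂

theorem C6Free.card_nbhd_le {E : BipartiteEdges α β} (h : E.C6Free) (x : α) (y : β) :
    #(E.nbhd x) ≤ #(E.lightNbhd x y) + 2 := by
  set heavy := {y' ∈ E.nbhd x | y' ≠ y ∧ 2 < #(E.transpose.nbhd y ∩ E.transpose.nbhd y')}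
    with h_heavy
  have card_heavy : #heavy ≤ 1 := by
    refine card_le_one.2 fun y₁ hy₁ y₂ hy₂ ↦ ?_
    simp only [h_heavy, mem_filter, mem_nbhd] at hy₁ hy₂
    exact h.heavy_unique hy₁.1 hy₁.2.1 hy₁.2.2 hy₂.1 hy₂.2.1 hy₂.2.2
  have cover : E.nbhd x ⊆ E.lightNbhd x y ∪ insert y heavy := by
    intro y' hy'
    simp only [h_heavy, mem_union, mem_insert, mem_filter, mem_lightNbhd, mem_nbhd] at hy' ⊢
    grind
  calc #(E.nbhd x) ≤ #(E.lightNbhd x y) + #(insert y heavy) :=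
        (card_le_card cover).trans (card_union_le _ _)
    _ ≤ #(E.lightNbhd x y) + 2 := by
        have := card_insert_le y heavy
        lia

/-- The edges `xy` for which `x' y x y'` is a path both of whose end pairs `x', x` and `y, y'` are
light. -/
def middleEdges (E : BipartiteEdges α β) (x' : α) (y' : β) : BipartiteEdges α β :=
  {e ∈ E | x' ∈ E.transpose.lightNbhd e.2 e.1 ∧ y' ∈ E.lightNbhd e.1 e.2}

theorem mem_middleEdges {E : BipartiteEdges α β} {x' : α} {y' : β} {e : α × β} :
    e ∈ E.middleEdges x' y' ↔
      e ∈ E ∧ x' ∈ E.transpose.lightNbhd e.2 e.1 ∧ y' ∈ E.lightNbhd e.1 e.2 :=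
  mem_filter

theorem transpose_middleEdges (E : BipartiteEdges α β) (x' : α) (y' : β) :
    (E.middleEdges x' y').transpose = E.transpose.middleEdges y' x' := by
  ext e
  simp [mem_middleEdges, and_comm]

theorem card_middleEdges_le_of_fst_eq {E : BipartiteEdges α β} {x' : α} {y' : β}
    (hfst : ∀ e ∈ E.middleEdges x' y', ∀ f ∈ E.middleEdges x' y', e.1 = f.1) :
    #(E.middleEdges x' y') ≤ 2 := by
  obtain hempty | ⟨⟨x, y⟩, hxy⟩ := (E.middleEdges x' y').eq_empty_or_nonempty
  · simp [hempty]
  have hlight := (mem_lightNbhd.1 (mem_middleEdges.1 hxy).2.1).2.2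
  rw [transpose_transpose] at hlight
  refine (card_le_card_of_injOn Prod.snd (fun e he ↦ ?_) fun e he f hf hef ↦ ?_).trans hlight
  · obtain ⟨heE, hx', -⟩ := mem_middleEdges.1 he
    have hx : e.1 = x := hfst e he _ hxy
    simpa [← hx, heE] using (mem_lightNbhd.1 hx').1
  · exact Prod.ext (hfst e he f hf) hef

theorem C6Free.fst_eq_or_snd_eq {E : BipartiteEdges α β} (h : E.C6Free) {x' : α} {y' : β}
    {e f : α × β} (he : e ∈ E.middleEdges x' y') (hf : f ∈ E.middleEdges x' y') :
    e.1 = f.1 ∨ e.2 = f.2 := by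
  simp only [mem_middleEdges, mem_lightNbhd, mem_transpose, Prod.swap_prod_mk] at he hf
  obtain ⟨heE, ⟨hxe, hxe', -⟩, hye, hye', -⟩ := he
  obtain ⟨hfE, ⟨hxf, hxf', -⟩, hyf, hyf', -⟩ := hf
  by_contra! hne
  exact h hxe' hxf' hne.1 hye'.symm hne.2 hyf' hxe heE hye hyf hfE hxf

omit [DecidableEq α] [DecidableEq β] in
theorem forall_fst_eq_or_forall_snd_eq {E : BipartiteEdges α β}
    (h : ∀ e ∈ E, ∀ f ∈ E, e.1 = f.1 ∨ e.2 = f.2) :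
    (∀ e ∈ E, ∀ f ∈ E, e.1 = f.1) ∨ ∀ e ∈ E, ∀ f ∈ E, e.2 = f.2 := by
  by_contra! ⟨⟨e, he, f, hf, hef⟩, ⟨e', he', f', hf', hef'⟩⟩
  have := h e he f hf
  have := h e he e' he'
  have := h e he f' hf'
  have := h f hf e' he'
  have := h f hf f' hf'
  have := h e' he' f' hf'
  grind

theorem C6Free.card_middleEdges_le {E : BipartiteEdges α β} (h : E.C6Free) (x' : α) (y' : β) :
    #(E.middleEdges x' y') ≤ 2 := by
  obtain hfst | hsnd := forall_fst_eq_or_forall_snd_eq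
    fun e he f hf ↦ h.fst_eq_or_snd_eq (x' := x') (y' := y') he hf
  · exact card_middleEdges_le_of_fst_eq hfst
  · rw [← card_transpose, transpose_middleEdges]
    refine card_middleEdges_le_of_fst_eq fun e he f hf ↦ ?_
    rw [← transpose_middleEdges, mem_transpose] at he hf
    exact hsnd _ he _ hf

theorem C6Free.sum_card_lightNbhd_mul_le {E : BipartiteEdges α β} (h : E.C6Free) {X : Finset α}
    {Y : Finset β} (hE : E ⊆ X ×ˢ Y) :
    ∑ e ∈ E, #(E.transpose.lightNbhd e.2 e.1) * #(E.lightNbhd e.1 e.2) ≤ 2 * (#X * #Y) := by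
  have card_eq : ∀ e ∈ E, #(E.transpose.lightNbhd e.2 e.1) * #(E.lightNbhd e.1 e.2) =
      #{q ∈ X ×ˢ Y | e ∈ E.middleEdges q.1 q.2} := by
    intro e he
    rw [← card_product]
    congr 1
    ext ⟨x', y'⟩
    have hX : x' ∈ E.transpose.lightNbhd e.2 e.1 → x' ∈ X := fun hx' ↦
      (mem_product.1 (hE (mem_transpose.1 (mem_lightNbhd.1 hx').1))).1
    have hY : y' ∈ E.lightNbhd e.1 e.2 → y' ∈ Y := fun hy' ↦
      (mem_product.1 (hE (mem_lightNbhd.1 hy').1)).2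
    simp only [mem_product, mem_filter, mem_middleEdges]
    tauto
  have middle_subset (q : α × β) : {e ∈ E | e ∈ E.middleEdges q.1 q.2} ⊆ E.middleEdges q.1 q.2 :=
    fun e he ↦ (mem_filter.1 he).2
  calc ∑ e ∈ E, #(E.transpose.lightNbhd e.2 e.1) * #(E.lightNbhd e.1 e.2)
      = ∑ e ∈ E, #{q ∈ X ×ˢ Y | e ∈ E.middleEdges q.1 q.2} := sum_congr rfl card_eq
    _ = ∑ q ∈ X ×ˢ Y, #{e ∈ E | e ∈ E.middleEdges q.1 q.2} :=
        sum_card_bipartiteAbove_eq_sum_card_bipartiteBelow _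
    _ ≤ ∑ _q ∈ X ×ˢ Y, 2 := sum_le_sum fun q _ ↦
        (card_le_card (middle_subset q)).trans (h.card_middleEdges_le q.1 q.2)
    _ = 2 * (#X * #Y) := by rw [sum_const, card_product, smul_eq_mul, mul_comm]

omit [DecidableEq α] [DecidableEq β] in
theorem C6Free.three_mul_card_le {E : BipartiteEdges α β} (h : E.C6Free) {X : Finset α}
    {Y : Finset β} (hE : E ⊆ X ×ˢ Y) {s t : ℝ} (hs : 0 < s) (ht : 0 < t) :
    3 * (#E : ℝ) ≤ 2 * (#X * #Y) / (s * t) + (6 + 3 * s) * #X + (6 + 3 * t) * #Y := by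
  classical
  have hX : ∑ e ∈ E, (#(E.nbhd e.1) : ℝ)⁻¹ ≤ #X :=
    sum_inv_card_nbhd_le fun e he ↦ (mem_product.1 (hE he)).1
  have hY : ∑ e ∈ E, (#(E.transpose.nbhd e.2) : ℝ)⁻¹ ≤ #Y := by
    have := sum_inv_card_nbhd_le (E := E.transpose) (X := Y)
      fun e he ↦ (mem_product.1 (hE (mem_transpose.1 he))).2
    rwa [sum_transpose] at this
  have hXY : (∑ e ∈ E, ((#(E.transpose.lightNbhd e.2 e.1) * #(E.lightNbhd e.1 e.2) : ℕ) : ℝ)) ≤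
      2 * (#X * #Y) := by exact_mod_cast h.sum_card_lightNbhd_mul_le hE
  have pos_of_mem {e : α × β} (he : e ∈ E) :
      0 < #(E.nbhd e.1) ∧ 0 < #(E.transpose.nbhd e.2) :=
    ⟨card_pos.2 ⟨e.2, by simpa using he⟩, card_pos.2 ⟨e.1, by simpa using he⟩⟩
  calc 3 * (#E : ℝ) = ∑ _e ∈ E, (3 : ℝ) := by rw [sum_const, nsmul_eq_mul, mul_comm]
    _ ≤ ∑ e ∈ E, ((#(E.transpose.lightNbhd e.2 e.1) * #(E.lightNbhd e.1 e.2) : ℕ) / (s * t) +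
          (6 + 3 * s) * (#(E.nbhd e.1) : ℝ)⁻¹ + (6 + 3 * t) * (#(E.transpose.nbhd e.2) : ℝ)⁻¹) :=
        sum_le_sum fun e he ↦ three_le_div_add_mul_inv_add_mul_inv hs ht
          (pos_of_mem he).1 (pos_of_mem he).2
          (h.card_nbhd_le e.1 e.2) (h.transpose.card_nbhd_le e.2 e.1)
    _ ≤ 2 * (#X * #Y) / (s * t) + (6 + 3 * s) * #X + (6 + 3 * t) * #Y := by
        rw [sum_add_distrib, sum_add_distrib, ← sum_div, ← mul_sum, ← mul_sum]
        gcongr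

omit [DecidableEq α] [DecidableEq β] in
theorem C6Free.card_le {E : BipartiteEdges α β} (h : E.C6Free) {X : Finset α} {Y : Finset β}
    (hE : E ⊆ X ×ˢ Y) :
    (#E : ℝ) ≤ 2 * (#X + #Y) + 3 * ((#X : ℝ) * #Y) ^ ((2 : ℝ) / 3) := by
  obtain rfl | ⟨e, he⟩ := E.eq_empty_or_nonempty
  · simp only [card_empty, Nat.cast_zero]
    positivity
  have hX : (0 : ℝ) < #X := by exact_mod_cast card_pos.2 ⟨_, (mem_product.1 (hE he)).1⟩
  have hY : (0 : ℝ) < #Y := by exact_mod_cast card_pos.2 ⟨_, (mem_product.1 (hE he)).2⟩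
  set r : ℝ := ((#X : ℝ) * #Y) ^ ((2 : ℝ) / 3)
  have hr : 0 < r := by positivity
  have r_cubed : r ^ 3 = ((#X : ℝ) * #Y) ^ 2 := by
    rw [← Real.rpow_mul_natCast (by positivity), ← Real.rpow_natCast]
    norm_num
  have key := h.three_mul_card_le hE (div_pos hr hX) (div_pos hr hY)
  have main_term : 2 * ((#X : ℝ) * #Y) / (r / #X * (r / #Y)) = 2 * r := by
    field_simp
    linarith
  rw [main_term, add_mul, add_mul, mul_assoc 3, mul_assoc 3, div_mul_cancel₀ _ hX.ne',
    div_mul_cancel₀ _ hY.ne'] at key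
  linarith

-- Győri's argument: count triples `(x, y, y')` with `xy ∈ E` and `y'` light.
theorem C6Free.sum_card_nbhd_sub_two_le {E : BipartiteEdges α β} (h : E.C6Free) {Y : Finset β}
    (hY : ∀ e ∈ E, e.2 ∈ Y) (X : Finset α) : ∑ x ∈ X, (#(E.nbhd x) - 2) ≤ 2 * #Y ^ 2 := by
  let lightPairs (x : α) : Finset (β × β) :=
    {q ∈ Y ×ˢ Y | (x, q.1) ∈ E ∧ q.2 ∈ E.lightNbhd x q.1}
  have card_le_lightPairs : ∀ x ∈ X, #(E.nbhd x) - 2 ≤ #(lightPairs x) := by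
    intro x _
    obtain hempty | ⟨y, hy⟩ := (E.nbhd x).eq_empty_or_nonempty
    · simp [hempty]
    have hxy := mem_nbhd.1 hy
    refine (Nat.sub_le_of_le_add (h.card_nbhd_le x y)).trans
      (card_le_card_of_injOn (fun y' ↦ (y, y')) (fun y' hy' ↦ ?_)
        (Prod.mk_right_injective y).injOn)
    exact mem_filter.2 ⟨mem_product.2 ⟨hY _ hxy, hY _ (mem_lightNbhd.1 hy').1⟩, hxy, hy'⟩
  have card_ends_le (q : β × β) : #{x ∈ X | (x, q.1) ∈ E ∧ q.2 ∈ E.lightNbhd x q.1} ≤ 2 := by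
    obtain hempty | ⟨x, hx⟩ :=
      {x ∈ X | (x, q.1) ∈ E ∧ q.2 ∈ E.lightNbhd x q.1}.eq_empty_or_nonempty
    · simp [hempty]
    refine (card_le_card fun z hz ↦ ?_).trans (mem_lightNbhd.1 (mem_filter.1 hx).2.2).2.2
    obtain ⟨-, hz₁, hz₂⟩ := mem_filter.1 hz
    simp [hz₁, (mem_lightNbhd.1 hz₂).1]
  calc ∑ x ∈ X, (#(E.nbhd x) - 2) ≤ ∑ x ∈ X, #(lightPairs x) := sum_le_sum card_le_lightPairs
    _ = ∑ q ∈ Y ×ˢ Y, #{x ∈ X | (x, q.1) ∈ E ∧ q.2 ∈ E.lightNbhd x q.1} :=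
        sum_card_bipartiteAbove_eq_sum_card_bipartiteBelow _
    _ ≤ ∑ _q ∈ Y ×ˢ Y, 2 := sum_le_sum fun q _ ↦ card_ends_le q
    _ = 2 * #Y ^ 2 := by rw [sum_const, card_product, smul_eq_mul]; ring

end Neighbourhoods

-- A prime `p > n / 2` is adjacent at most to `1`, any other prime is charged `2 + (deg p - 2)`.
theorem C6Free.card_le_primeCounting {E : BipartiteEdges ℕ ℕ} (h : E.C6Free)
    {n k : ℕ} (hprime : ∀ e ∈ E, e.1.Prime) (hk : ∀ e ∈ E, e.2 ∈ Icc 1 k)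
    (hn : ∀ e ∈ E, e.1 * e.2 ≤ n) :
    #E ≤ Nat.primeCounting n + Nat.primeCounting (n / 2) + 2 * k ^ 2 := by
  have fst_mem : ∀ e ∈ E, e.1 ∈ Nat.primesLE n := fun e he ↦ Nat.mem_primesLE.2
    ⟨(Nat.le_mul_of_pos_right _ (mem_Icc.1 (hk e he)).1).trans (hn e he), hprime e he⟩
  have degree_le : ∀ p ∈ Nat.primesLE n,
      #(E.nbhd p) ≤ (#(E.nbhd p) - 2) + (1 + if p ≤ n / 2 then 1 else 0) := by
    intro p _
    split_ifs with hp
    · lia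
    have : E.nbhd p ⊆ {1} := by
      intro m hm
      rw [mem_nbhd] at hm
      have hm₀ := (mem_Icc.1 (hk _ hm)).1
      have hm₁ := hn _ hm
      by_contra hne
      have : p * 2 ≤ p * m := Nat.mul_le_mul_left p (by grind)
      grind
    have := card_le_card this
    grind
  calc #E = ∑ p ∈ Nat.primesLE n, #(E.nbhd p) := by
        simp only [card_nbhd]
        exact card_eq_sum_card_fiberwise fst_mem
    _ ≤ ∑ p ∈ Nat.primesLE n, ((#(E.nbhd p) - 2) + (1 + if p ≤ n / 2 then 1 else 0)) :=
        sum_le_sum degree_le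
    _ = ∑ p ∈ Nat.primesLE n, (#(E.nbhd p) - 2) +
          (#(Nat.primesLE n) + #{p ∈ Nat.primesLE n | p ≤ n / 2}) := by
        rw [sum_add_distrib, sum_add_distrib, card_filter, card_eq_sum_ones]
    _ ≤ 2 * k ^ 2 + (#(Nat.primesLE n) + #(Nat.primesLE (n / 2))) := by
        gcongr ?_ + (_ + ?_)
        · simpa using h.sum_card_nbhd_sub_two_le hk (Nat.primesLE n)
        · refine card_le_card fun p hp ↦ ?_
          simp only [mem_filter, Nat.mem_primesLE] at hp ⊢
          exact ⟨hp.2, hp.1.2⟩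
    _ = Nat.primeCounting n + Nat.primeCounting (n / 2) + 2 * k ^ 2 := by
        rw [Nat.primesLE_card_eq_primeCounting, Nat.primesLE_card_eq_primeCounting]
        ring

end BipartiteEdges

/-! ### Factorizations of multiplicative 3-Sidon sets -/

/-- The bipartite graph of the factorizations `a = f a * (a / f a)`, `a ∈ A`. -/
def factorGraph (f : ℕ → ℕ) (A : Finset ℕ) : BipartiteEdges ℕ ℕ :=
  A.image fun a ↦ (f a, a / f a)

section FactorGraph

variable {f : ℕ → ℕ} {A : Finset ℕ}

theorem fst_mul_snd_mem_of_mem_factorGraph (hf : ∀ a ∈ A, f a ∣ a) {e : ℕ × ℕ}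
    (he : e ∈ factorGraph f A) :
    e.1 * e.2 ∈ A ∧ (f (e.1 * e.2), e.1 * e.2 / f (e.1 * e.2)) = e := by
  obtain ⟨a, ha, rfl⟩ := mem_image.1 he
  simp only [Nat.mul_div_cancel' (hf a ha), ha, and_self]

theorem injOn_fst_mul_snd_factorGraph (hf : ∀ a ∈ A, f a ∣ a) :
    Set.InjOn (fun e : ℕ × ℕ ↦ e.1 * e.2) (factorGraph f A : Finset (ℕ × ℕ)) := by
  intro e he e' he' hee'
  rw [← (fst_mul_snd_mem_of_mem_factorGraph hf he).2,
    ← (fst_mul_snd_mem_of_mem_factorGraph hf he').2]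
  exact congrArg (fun a ↦ (f a, a / f a)) hee'

theorem card_factorGraph (hf : ∀ a ∈ A, f a ∣ a) : #(factorGraph f A) = #A := by
  refine card_image_of_injOn fun a ha b hb hab ↦ ?_
  rw [← Nat.mul_div_cancel' (hf a ha), ← Nat.mul_div_cancel' (hf b hb)]
  exact congrArg (fun e : ℕ × ℕ ↦ e.1 * e.2) hab

end FactorGraph

namespace MulSidon3

variable {A B : Finset ℕ}

theorem mono (hA : MulSidon3 A) (hBA : B ⊆ A) : MulSidon3 B := by
  rintro ⟨s₁, s₂, s₃, t₁, t₂, t₃, hs₁, hs₂, hs₃, ht₁, ht₂, ht₃, h⟩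
  exact hA ⟨s₁, s₂, s₃, t₁, t₂, t₃, hBA hs₁, hBA hs₂, hBA hs₃, hBA ht₁, hBA ht₂, hBA ht₃, h⟩

-- The products of the alternating edges of a hexagon agree.
theorem c6Free (hA : MulSidon3 A) {E : BipartiteEdges ℕ ℕ} (hE : ∀ e ∈ E, e.1 * e.2 ∈ A)
    (hinj : Set.InjOn (fun e : ℕ × ℕ ↦ e.1 * e.2) (E : Finset (ℕ × ℕ))) : E.C6Free := by
  intro x₁ x₂ x₃ y₁ y₂ y₃ hx₁₂ hx₁₃ hx₂₃ hy₁₂ hy₁₃ hy₂₃ h₁₁ h₂₁ h₂₂ h₃₂ h₃₃ h₁₃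
  let edges := [(x₁, y₁), (x₂, y₂), (x₃, y₃), (x₂, y₁), (x₃, y₂), (x₁, y₃)]
  have edges_nodup : edges.Nodup := by
    simp [edges, hx₁₂, hx₁₃, hx₂₃, hy₁₂, hy₁₃, hy₂₃, hx₁₂.symm, hx₁₃.symm, hx₂₃.symm, hy₁₂.symm,
      hy₁₃.symm, hy₂₃.symm]
  have edges_mem : ∀ e ∈ edges, e ∈ E := by
    simp [edges, h₁₁, h₂₁, h₂₂, h₃₂, h₃₃, h₁₃]
  refine hA ⟨_, _, _, _, _, _, hE _ h₁₁, hE _ h₂₂, hE _ h₃₃, hE _ h₂₁, hE _ h₃₂, hE _ h₁₃, ?_,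
    by ring⟩
  exact edges_nodup.map_on fun e he e' he' ↦ hinj (edges_mem e he) (edges_mem e' he')

theorem c6Free_factorGraph (hA : MulSidon3 A) {f : ℕ → ℕ} (hf : ∀ a ∈ A, f a ∣ a) :
    (factorGraph f A).C6Free :=
  hA.c6Free (fun _ he ↦ (fst_mul_snd_mem_of_mem_factorGraph hf he).1)
    (injOn_fst_mul_snd_factorGraph hf)

theorem card_le_of_factorization (hA : MulSidon3 A) {f : ℕ → ℕ} {X Y : Finset ℕ}
    (hf : ∀ a ∈ A, f a ∣ a) (hX : ∀ a ∈ A, f a ∈ X) (hY : ∀ a ∈ A, a / f a ∈ Y) :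
    (#A : ℝ) ≤ 2 * (#X + #Y) + 3 * ((#X : ℝ) * #Y) ^ ((2 : ℝ) / 3) := by
  rw [← card_factorGraph hf]
  exact (hA.c6Free_factorGraph hf).card_le
    (image_subset_iff.2 fun a ha ↦ mem_product.2 ⟨hX a ha, hY a ha⟩)

theorem card_le_of_exists_prime_dvd (hA : MulSidon3 A) {n k : ℕ} (hn : A ⊆ Icc 1 n)
    (hk : ∀ a ∈ A, ∃ p, p.Prime ∧ p ∣ a ∧ a / p ≤ k) :
    #A ≤ Nat.primeCounting n + Nat.primeCounting (n / 2) + 2 * k ^ 2 := by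
  choose! p p_prime p_dvd div_p_le using hk
  rw [← card_factorGraph p_dvd]
  refine (hA.c6Free_factorGraph p_dvd).card_le_primeCounting ?_ ?_ ?_ <;>
    refine forall_mem_image.2 fun a ha ↦ ?_
  · exact p_prime a ha
  · have := (mem_Icc.1 (hn ha)).1
    exact mem_Icc.2
      ⟨Nat.div_pos (Nat.le_of_dvd this (p_dvd a ha)) (p_prime a ha).pos, div_p_le a ha⟩
  · rw [Nat.mul_div_cancel' (p_dvd a ha)]
    exact (mem_Icc.1 (hn ha)).2

end MulSidon3

/-! ### Divisor-closed sets -/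

theorem sum_inv_le_one_add_log {S : Finset ℕ} (h0 : 0 ∉ S) {x : ℝ} (hx : 1 ≤ x)
    (hS : ∀ w ∈ S, (w : ℝ) ≤ x) : ∑ w ∈ S, (w : ℝ)⁻¹ ≤ 1 + Real.log x := by
  have subset_Icc : S ⊆ Icc 1 ⌊x⌋₊ := fun w hw ↦
    mem_Icc.2 ⟨Nat.one_le_iff_ne_zero.2 (ne_of_mem_of_not_mem hw h0), Nat.le_floor (hS w hw)⟩
  calc ∑ w ∈ S, (w : ℝ)⁻¹ ≤ ∑ w ∈ Icc 1 ⌊x⌋₊, (w : ℝ)⁻¹ :=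
        sum_le_sum_of_subset_of_nonneg subset_Icc fun _ _ _ ↦ by positivity
    _ = harmonic ⌊x⌋₊ := by rw [harmonic_eq_sum_Icc]; push_cast; rfl
    _ ≤ 1 + Real.log x := harmonic_floor_le_one_add_log x hx

theorem psi_le_six_mul {x : ℝ} (hx : 0 ≤ x) : Chebyshev.psi x ≤ 6 * x := by
  have log_four : Real.log 4 ≤ 2 := by
    rw [show (4 : ℝ) = 2 ^ 2 by norm_num, Real.log_pow]
    push_cast
    linarith [Real.log_two_lt_d9]
  exact (Chebyshev.psi_le_const_mul_self hx).trans (by gcongr; linarith)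

/-- A finite set of positive integers that contains all divisors of its elements. -/
def DivisorClosed (S : Finset ℕ) : Prop :=
  0 ∉ S ∧ ∀ u ∈ S, ∀ d, d ∣ u → d ∈ S

namespace DivisorClosed

variable {S : Finset ℕ}

theorem ne_zero (hS : DivisorClosed S) {u : ℕ} (hu : u ∈ S) : u ≠ 0 :=
  ne_of_mem_of_not_mem hu hS.1

theorem pos (hS : DivisorClosed S) {u : ℕ} (hu : u ∈ S) : (0 : ℝ) < u :=
  Nat.cast_pos.2 (Nat.pos_of_ne_zero (hS.ne_zero hu))

-- This is `log = Λ * ζ`, summed over the set.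
theorem sum_mul_log (hS : DivisorClosed S) (h : ℕ → ℝ) :
    ∑ u ∈ S, h u * Real.log u =
      ∑ w ∈ S, ∑ m ∈ S with m * w ∈ S, vonMangoldt m * h (m * w) := by
  have divisorsAntidiagonal_eq : ∀ u ∈ S, u.divisorsAntidiagonal =
      {q ∈ {q ∈ S ×ˢ S | q.1 * q.2 ∈ S} | q.1 * q.2 = u} := by
    intro u hu
    ext q
    simp only [Nat.mem_divisorsAntidiagonal, mem_filter, mem_product]
    refine ⟨fun ⟨hq, _⟩ ↦ ?_, fun ⟨_, hq⟩ ↦ ⟨hq, hS.ne_zero hu⟩⟩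
    subst hq
    exact ⟨⟨⟨hS.2 _ hu _ (dvd_mul_right _ _), hS.2 _ hu _ (dvd_mul_left _ _)⟩, hu⟩, rfl⟩
  calc ∑ u ∈ S, h u * Real.log u
      = ∑ u ∈ S, ∑ q ∈ u.divisorsAntidiagonal, vonMangoldt q.1 * h (q.1 * q.2) := by
        refine sum_congr rfl fun u _ ↦ ?_
        rw [← vonMangoldt_sum, mul_comm, sum_mul,
          Nat.sum_divisorsAntidiagonal fun m w ↦ vonMangoldt m * h (m * w)]
        refine sum_congr rfl fun d hd ↦ ?_
        rw [Nat.mul_div_cancel' (Nat.dvd_of_mem_divisors hd)]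
    _ = ∑ q ∈ S ×ˢ S with q.1 * q.2 ∈ S, vonMangoldt q.1 * h (q.1 * q.2) := by
        rw [← sum_fiberwise_of_maps_to (t := S) (g := fun q : ℕ × ℕ ↦ q.1 * q.2)
          fun q hq ↦ (mem_filter.1 hq).2]
        exact sum_congr rfl fun u hu ↦ by rw [divisorsAntidiagonal_eq u hu]
    _ = ∑ w ∈ S, ∑ m ∈ S with m * w ∈ S, vonMangoldt m * h (m * w) := by
        simp only [sum_filter]
        exact sum_product_right _ _ _

theorem sum_log_le (hS : DivisorClosed S) {x : ℝ} (hx : ∀ u ∈ S, (u : ℝ) ≤ x) :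
    ∑ u ∈ S, Real.log u ≤ 6 * x * ∑ w ∈ S, (w : ℝ)⁻¹ := by
  calc ∑ u ∈ S, Real.log u = ∑ w ∈ S, ∑ m ∈ S with m * w ∈ S, vonMangoldt m := by
        simpa using hS.sum_mul_log 1
    _ ≤ ∑ w ∈ S, Chebyshev.psi (x / w) := by
        refine sum_le_sum fun w hw ↦ sum_le_sum_of_subset_of_nonneg (fun m hm ↦ ?_)
          fun _ _ _ ↦ vonMangoldt_nonneg
        obtain ⟨hmS, hmw⟩ := mem_filter.1 hm
        refine mem_Ioc.2 ⟨Nat.pos_of_ne_zero (hS.ne_zero hmS), Nat.le_floor ?_⟩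
        rw [le_div_iff₀ (hS.pos hw)]
        exact_mod_cast hx _ hmw
    _ ≤ ∑ w ∈ S, 6 * (x / w) :=
        sum_le_sum fun w hw ↦ psi_le_six_mul (div_nonneg ((hS.pos hw).le.trans (hx w hw))
          (hS.pos hw).le)
    _ = 6 * x * ∑ w ∈ S, (w : ℝ)⁻¹ := by
        rw [mul_sum]
        exact sum_congr rfl fun w _ ↦ by ring

theorem card_mul_log_le (hS : DivisorClosed S) {x : ℝ} (hx : ∀ u ∈ S, (u : ℝ) ≤ x) :
    #S * Real.log x ≤ 7 * x * ∑ w ∈ S, (w : ℝ)⁻¹ := by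
  have log_le : ∀ u ∈ S, Real.log x ≤ Real.log u + x * (u : ℝ)⁻¹ := by
    intro u hu
    have hu0 := hS.pos hu
    have := Real.log_le_self (div_nonneg (hu0.le.trans (hx u hu)) hu0.le)
    rw [Real.log_div (by linarith [hx u hu]) hu0.ne', div_eq_mul_inv] at this
    linarith
  calc #S * Real.log x = ∑ _u ∈ S, Real.log x := by rw [sum_const, nsmul_eq_mul]
    _ ≤ ∑ u ∈ S, Real.log u + x * ∑ u ∈ S, (u : ℝ)⁻¹ := by
        rw [mul_sum, ← sum_add_distrib]
        exact sum_le_sum log_le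
    _ ≤ 7 * x * ∑ w ∈ S, (w : ℝ)⁻¹ := by linarith [hS.sum_log_le hx]

theorem sum_inv_mul_log_le (hS : DivisorClosed S) {M : ℝ}
    (hΛ : ∑ m ∈ S, vonMangoldt m * (m : ℝ)⁻¹ ≤ M) :
    ∑ u ∈ S, (u : ℝ)⁻¹ * Real.log u ≤ M * ∑ w ∈ S, (w : ℝ)⁻¹ := by
  rw [hS.sum_mul_log fun u ↦ (u : ℝ)⁻¹, mul_sum]
  refine sum_le_sum fun w _ ↦ ?_
  calc ∑ m ∈ S with m * w ∈ S, vonMangoldt m * ((m * w : ℕ) : ℝ)⁻¹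
      ≤ ∑ m ∈ S, vonMangoldt m * ((m * w : ℕ) : ℝ)⁻¹ :=
        sum_le_sum_of_subset_of_nonneg (filter_subset _ _)
          fun _ _ _ ↦ mul_nonneg vonMangoldt_nonneg (by positivity)
    _ = (∑ m ∈ S, vonMangoldt m * (m : ℝ)⁻¹) * (w : ℝ)⁻¹ := by
        rw [sum_mul]
        exact sum_congr rfl fun m _ ↦ by push_cast; ring
    _ ≤ M * (w : ℝ)⁻¹ := by gcongr

-- On average `log u ≤ M` for the weights `1 / u`, so half of the weight is on `u ≤ exp (2 * M)`.
theorem sum_inv_le (hS : DivisorClosed S) {M : ℝ} (hM : 0 < M)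
    (hΛ : ∑ m ∈ S, vonMangoldt m * (m : ℝ)⁻¹ ≤ M) : ∑ w ∈ S, (w : ℝ)⁻¹ ≤ 2 + 4 * M := by
  set small : Finset ℕ := {u ∈ S | (u : ℝ) ≤ Real.exp (2 * M)}
  set large : Finset ℕ := {u ∈ S | ¬ (u : ℝ) ≤ Real.exp (2 * M)}
  have sum_eq : ∑ u ∈ S, (u : ℝ)⁻¹ = ∑ u ∈ small, (u : ℝ)⁻¹ + ∑ u ∈ large, (u : ℝ)⁻¹ :=
    (sum_filter_add_sum_filter_not S _ _).symm
  have small_le : ∑ u ∈ small, (u : ℝ)⁻¹ ≤ 1 + 2 * M := by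
    rw [← Real.log_exp (2 * M)]
    exact sum_inv_le_one_add_log (fun h ↦ hS.1 (mem_filter.1 h).1)
      (Real.one_le_exp (by positivity)) fun u hu ↦ by simpa using (mem_filter.1 hu).2
  have large_le : 2 * M * ∑ u ∈ large, (u : ℝ)⁻¹ ≤ M * ∑ u ∈ S, (u : ℝ)⁻¹ := by
    refine le_trans ?_ (hS.sum_inv_mul_log_le hΛ)
    rw [mul_sum]
    refine (sum_le_sum fun u hu ↦ ?_).trans (sum_le_sum_of_subset_of_nonneg (filter_subset _ _)
      fun _ _ _ ↦ mul_nonneg (by positivity) (Real.log_natCast_nonneg _))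
    obtain ⟨huS, hu⟩ := mem_filter.1 hu
    rw [mul_comm]
    gcongr
    exact (Real.le_log_iff_exp_le (hS.pos huS)).2 (not_le.1 hu).le
  have : 2 * ∑ u ∈ large, (u : ℝ)⁻¹ ≤ ∑ u ∈ S, (u : ℝ)⁻¹ :=
    le_of_mul_le_mul_left (by linarith) hM
  linarith

end DivisorClosed

/-! ### Integers with only small or only large prime factors -/

-- This follows from `∑ log n = ∑ Λ m * ⌊N / m⌋` and `N / m ≤ 2 * ⌊N / m⌋`.
theorem sum_vonMangoldt_mul_inv_le (N : ℕ) :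
    ∑ m ∈ Ioc 0 N, vonMangoldt m * (m : ℝ)⁻¹ ≤ 2 * Real.log N := by
  obtain rfl | hN := N.eq_zero_or_pos
  · simp
  have hN0 : (0 : ℝ) < N := Nat.cast_pos.2 hN
  have inv_le : ∀ m ∈ Ioc 0 N, N * (m : ℝ)⁻¹ ≤ 2 * (N / m : ℕ) := by
    intro m hm
    obtain ⟨hm0, hmN⟩ := mem_Ioc.1 hm
    have hdiv := Nat.div_pos hmN hm0
    have : (N : ℝ) ≤ 2 * (N / m : ℕ) * m := by
      have := Nat.lt_div_mul_add (a := N) hm0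
      exact_mod_cast (by nlinarith : N ≤ 2 * (N / m) * m)
    rwa [← div_eq_mul_inv, div_le_iff₀ (Nat.cast_pos.2 hm0)]
  refine le_of_mul_le_mul_left ?_ hN0
  calc N * ∑ m ∈ Ioc 0 N, vonMangoldt m * (m : ℝ)⁻¹
      ≤ 2 * ∑ m ∈ Ioc 0 N, vonMangoldt m * (N / m : ℕ) := by
        rw [mul_sum, mul_sum]
        refine sum_le_sum fun m hm ↦ ?_
        rw [mul_left_comm, mul_left_comm 2]
        exact mul_le_mul_of_nonneg_left (inv_le m hm) vonMangoldt_nonneg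
    _ = 2 * ∑ n ∈ Ioc 0 N, Real.log n := by
        rw [← ArithmeticFunction.sum_Ioc_mul_zeta_eq_sum, ArithmeticFunction.vonMangoldt_mul_zeta]
        simp only [ArithmeticFunction.log_apply]
    _ ≤ 2 * ∑ _n ∈ Ioc 0 N, Real.log N := by
        gcongr with n hn
        · exact_mod_cast (mem_Ioc.1 hn).1
        · exact (mem_Ioc.1 hn).2
    _ = N * (2 * Real.log N) := by
        rw [sum_const, Nat.card_Ioc, nsmul_eq_mul, Nat.sub_zero]
        ring

theorem sum_vonMangoldt_prime_pow_mul_inv_le {p : ℕ} (hp : p.Prime) (K : ℕ) :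
    ∑ k ∈ range K, vonMangoldt (p ^ (k + 1)) * ((p ^ (k + 1) : ℕ) : ℝ)⁻¹ ≤
      2 * (vonMangoldt p * (p : ℝ)⁻¹) := by
  have inv_le : (p : ℝ)⁻¹ ≤ 1 / 2 := by
    rw [one_div]
    exact inv_anti₀ two_pos (by exact_mod_cast hp.two_le)
  calc ∑ k ∈ range K, vonMangoldt (p ^ (k + 1)) * ((p ^ (k + 1) : ℕ) : ℝ)⁻¹
      = vonMangoldt p * (p : ℝ)⁻¹ * ∑ k ∈ range K, (p : ℝ)⁻¹ ^ k := by
        rw [mul_sum]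
        refine sum_congr rfl fun k _ ↦ ?_
        rw [ArithmeticFunction.vonMangoldt_apply_pow k.succ_ne_zero, Nat.cast_pow, pow_succ,
          mul_inv, inv_pow]
        ring
    _ ≤ vonMangoldt p * (p : ℝ)⁻¹ * ∑ k ∈ range K, (1 / 2 : ℝ) ^ k := by
        have : 0 ≤ vonMangoldt p := vonMangoldt_nonneg
        gcongr
    _ ≤ vonMangoldt p * (p : ℝ)⁻¹ * 2 :=
        mul_le_mul_of_nonneg_left (sum_geometric_two_le K)
          (mul_nonneg vonMangoldt_nonneg (by positivity))
    _ = 2 * (vonMangoldt p * (p : ℝ)⁻¹) := mul_comm _ _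

theorem sum_smoothNumbersUpTo_vonMangoldt_mul_le (N y : ℕ) {g : ℕ → ℝ} (hg : ∀ m, 0 ≤ g m) :
    ∑ m ∈ N.smoothNumbersUpTo y, vonMangoldt m * g m ≤
      ∑ p ∈ y.primesBelow, ∑ k ∈ range N, vonMangoldt (p ^ (k + 1)) * g (p ^ (k + 1)) := by
  have inj : Set.InjOn (fun q : ℕ × ℕ ↦ q.1 ^ (q.2 + 1))
      (y.primesBelow ×ˢ range N : Finset (ℕ × ℕ)) := by
    intro q hq q' hq' h
    have := Nat.Prime.pow_inj (Nat.prime_of_mem_primesBelow (mem_product.1 hq).1)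
      (Nat.prime_of_mem_primesBelow (mem_product.1 hq').1) h
    exact Prod.ext this.1 this.2
  rw [← sum_product' (f := fun p k ↦ vonMangoldt (p ^ (k + 1)) * g (p ^ (k + 1))),
    ← sum_image (f := fun m ↦ vonMangoldt m * g m) inj,
    ← sum_filter_of_ne fun m _ h ↦ left_ne_zero_of_mul h]
  refine sum_le_sum_of_subset_of_nonneg (fun m hm ↦ ?_)
    fun m _ _ ↦ mul_nonneg vonMangoldt_nonneg (hg m)
  obtain ⟨hm, hΛ⟩ := mem_filter.1 hm
  obtain ⟨p, k, hp, hk, rfl⟩ :=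
    (isPrimePow_nat_iff _).1 (ArithmeticFunction.vonMangoldt_ne_zero_iff.1 hΛ)
  obtain ⟨hle, hsmooth⟩ := Nat.mem_smoothNumbersUpTo.1 hm
  have hpy := Nat.mem_smoothNumbers'.1 hsmooth p hp (dvd_pow_self p hk.ne')
  have hkN : k < N := (Nat.lt_pow_self hp.one_lt).trans_le hle
  refine mem_image.2 ⟨(p, k - 1), mem_product.2 ⟨Nat.mem_primesBelow.2 ⟨hpy, hp⟩, ?_⟩, ?_⟩
  · exact mem_range.2 ((Nat.sub_le _ _).trans_lt hkN)
  · exact congrArg (p ^ ·) (Nat.sub_add_cancel hk)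

theorem sum_smoothNumbersUpTo_vonMangoldt_mul_inv_le (N y : ℕ) :
    ∑ m ∈ N.smoothNumbersUpTo y, vonMangoldt m * (m : ℝ)⁻¹ ≤ 4 * Real.log y := by
  calc ∑ m ∈ N.smoothNumbersUpTo y, vonMangoldt m * (m : ℝ)⁻¹
      ≤ ∑ p ∈ y.primesBelow, ∑ k ∈ range N,
          vonMangoldt (p ^ (k + 1)) * ((p ^ (k + 1) : ℕ) : ℝ)⁻¹ :=
        sum_smoothNumbersUpTo_vonMangoldt_mul_le N y fun m ↦ by positivity
    _ ≤ ∑ p ∈ y.primesBelow, 2 * (vonMangoldt p * (p : ℝ)⁻¹) := sum_le_sum fun p hp ↦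
        sum_vonMangoldt_prime_pow_mul_inv_le (Nat.prime_of_mem_primesBelow hp) N
    _ ≤ 2 * ∑ m ∈ Ioc 0 y, vonMangoldt m * (m : ℝ)⁻¹ := by
        rw [← mul_sum]
        gcongr
        exact fun p hp ↦ mem_Ioc.2
          ⟨(Nat.prime_of_mem_primesBelow hp).pos, (Nat.lt_of_mem_primesBelow hp).le⟩
    _ ≤ 4 * Real.log y := by linarith [sum_vonMangoldt_mul_inv_le y]

theorem divisorClosed_smoothNumbersUpTo (N y : ℕ) : DivisorClosed (N.smoothNumbersUpTo y) := by
  simp only [DivisorClosed, Nat.mem_smoothNumbersUpTo]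
  refine ⟨fun h ↦ Nat.ne_zero_of_mem_smoothNumbers h.2 rfl, fun u hu d hd ↦ ?_⟩
  have hu0 := Nat.pos_of_ne_zero (Nat.ne_zero_of_mem_smoothNumbers hu.2)
  exact ⟨(Nat.le_of_dvd hu0 hd).trans hu.1, Nat.mem_smoothNumbers_of_dvd hu.2 hd⟩

theorem card_smoothNumbersUpTo_mul_log_le {y : ℕ} (hy : 2 ≤ y) {x : ℝ} (hx : 0 ≤ x) :
    #(⌊x⌋₊.smoothNumbersUpTo y) * Real.log x ≤ 7 * x * (2 + 16 * Real.log y) := by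
  have closed := divisorClosed_smoothNumbersUpTo ⌊x⌋₊ y
  have log_pos : 0 < Real.log y := Real.log_pos (by exact_mod_cast hy)
  have sum_inv_le : ∑ w ∈ ⌊x⌋₊.smoothNumbersUpTo y, (w : ℝ)⁻¹ ≤ 2 + 4 * (4 * Real.log y) :=
    closed.sum_inv_le (by positivity) (sum_smoothNumbersUpTo_vonMangoldt_mul_inv_le _ _)
  calc #(⌊x⌋₊.smoothNumbersUpTo y) * Real.log x
      ≤ 7 * x * ∑ w ∈ ⌊x⌋₊.smoothNumbersUpTo y, (w : ℝ)⁻¹ := closed.card_mul_log_le fun u hu ↦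
        (Nat.le_floor_iff hx).1 (Nat.mem_smoothNumbersUpTo.1 hu).1
    _ ≤ 7 * x * (2 + 16 * Real.log y) := by
        gcongr
        linarith

/-- The positive integers up to `N` without prime factors below `y`. In contrast,
`Nat.roughNumbersUpTo` consists of the integers with at least one prime factor not below `y`. -/
def coprimeToPrimesBelow (N y : ℕ) : Finset ℕ :=
  {u ∈ Icc 1 N | ∀ p ∈ u.primeFactors, y ≤ p}

theorem mem_coprimeToPrimesBelow {N y u : ℕ} :
    u ∈ coprimeToPrimesBelow N y ↔ 1 ≤ u ∧ u ≤ N ∧ ∀ p, p.Prime → p ∣ u → y ≤ p := by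
  simp only [coprimeToPrimesBelow, mem_filter, mem_Icc, Nat.mem_primeFactors]
  grind

theorem divisorClosed_coprimeToPrimesBelow (N y : ℕ) :
    DivisorClosed (coprimeToPrimesBelow N y) := by
  simp only [DivisorClosed, mem_coprimeToPrimesBelow]
  refine ⟨by lia, fun u ⟨hu0, huN, hu⟩ d hd ↦ ⟨Nat.pos_of_dvd_of_pos hd hu0,
    (Nat.le_of_dvd hu0 hd).trans huN, fun p hp hpd ↦ hu p hp (hpd.trans hd)⟩⟩

theorem injOn_mul_coprimeToPrimesBelow (N y : ℕ) :
    Set.InjOn (fun q : ℕ × ℕ ↦ q.1 * q.2)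
      (Icc 1 (y - 1) ×ˢ coprimeToPrimesBelow N y : Finset (ℕ × ℕ)) := by
  have dvd_of_mul_eq {m w m' w' : ℕ} (hm : m ∈ Icc 1 (y - 1))
      (hw' : w' ∈ coprimeToPrimesBelow N y) (h : m * w = m' * w') : m ∣ m' := by
    refine (Nat.Coprime.dvd_of_dvd_mul_right ?_ (h ▸ dvd_mul_right m w) : m ∣ m')
    refine Nat.coprime_of_dvd fun p hp hpm hpw' ↦ ?_
    have := (mem_coprimeToPrimesBelow.1 hw').2.2 p hp hpw'
    obtain ⟨hm1, hmy⟩ := mem_Icc.1 hm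
    have := Nat.le_of_dvd hm1 hpm
    lia
  intro q hq q' hq' h
  obtain ⟨hq₁, hq₂⟩ := mem_product.1 hq
  obtain ⟨hq₁', hq₂'⟩ := mem_product.1 hq'
  have hfst : q.1 = q'.1 :=
    Nat.dvd_antisymm (dvd_of_mul_eq hq₁ hq₂' h) (dvd_of_mul_eq hq₁' hq₂ h.symm)
  have h' : q.1 * q.2 = q.1 * q'.2 := h.trans (by rw [hfst])
  exact Prod.ext hfst (Nat.eq_of_mul_eq_mul_left (mem_Icc.1 hq₁).1 h')

theorem log_mul_sum_inv_coprimeToPrimesBelow_le {y : ℕ} (hy : 1 ≤ y) {x : ℝ} (hx : 1 ≤ x) :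
    Real.log y * ∑ w ∈ coprimeToPrimesBelow ⌊x⌋₊ y, (w : ℝ)⁻¹ ≤ 1 + Real.log y + Real.log x := by
  have hy' : (1 : ℝ) ≤ y := by exact_mod_cast hy
  have log_le : Real.log y ≤ ∑ m ∈ Icc 1 (y - 1), (m : ℝ)⁻¹ := by
    have := log_add_one_le_harmonic (y - 1)
    rw [Nat.sub_add_cancel hy, harmonic_eq_sum_Icc] at this
    push_cast at this
    exact this
  set products := (Icc 1 (y - 1) ×ˢ coprimeToPrimesBelow ⌊x⌋₊ y).image fun q ↦ q.1 * q.2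
    with h_products
  calc Real.log y * ∑ w ∈ coprimeToPrimesBelow ⌊x⌋₊ y, (w : ℝ)⁻¹
      ≤ (∑ m ∈ Icc 1 (y - 1), (m : ℝ)⁻¹) * ∑ w ∈ coprimeToPrimesBelow ⌊x⌋₊ y, (w : ℝ)⁻¹ := by
        gcongr
    _ = ∑ k ∈ products, (k : ℝ)⁻¹ := by
        rw [sum_image (injOn_mul_coprimeToPrimesBelow _ _), sum_mul_sum, ← sum_product']
        simp only [Nat.cast_mul, mul_inv]
    _ ≤ 1 + Real.log (y * x) := by
        refine sum_inv_le_one_add_log ?_ (one_le_mul_of_one_le_of_one_le hy' hx) ?_ <;>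
          simp only [h_products, mem_image, mem_product, mem_Icc, mem_coprimeToPrimesBelow]
        · rintro ⟨⟨m, w⟩, ⟨⟨hm, -⟩, hw, -⟩, h⟩
          exact (Nat.mul_pos hm hw).ne' h
        · rintro _ ⟨⟨m, w⟩, ⟨⟨-, hm⟩, -, hw, -⟩, rfl⟩
          rw [Nat.cast_mul]
          have hmy : m ≤ y := hm.trans (Nat.sub_le _ _)
          have hwx : (w : ℝ) ≤ x := (Nat.le_floor_iff (by positivity)).1 hw
          gcongr
    _ = 1 + Real.log y + Real.log x := by
        rw [Real.log_mul (by positivity) (by positivity), add_assoc]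

theorem card_coprimeToPrimesBelow_mul_log_mul_log_le {y : ℕ} (hy : 1 ≤ y) {x : ℝ} (hx : 1 ≤ x) :
    #(coprimeToPrimesBelow ⌊x⌋₊ y) * (Real.log y * Real.log x) ≤
      7 * x * (1 + Real.log y + Real.log x) := by
  have card_mul_log_le := (divisorClosed_coprimeToPrimesBelow ⌊x⌋₊ y).card_mul_log_le (x := x)
    fun u hu ↦ (Nat.le_floor_iff (by positivity)).1 (mem_coprimeToPrimesBelow.1 hu).2.1
  calc #(coprimeToPrimesBelow ⌊x⌋₊ y) * (Real.log y * Real.log x)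
      = Real.log y * (#(coprimeToPrimesBelow ⌊x⌋₊ y) * Real.log x) := by ring
    _ ≤ Real.log y * (7 * x * ∑ w ∈ coprimeToPrimesBelow ⌊x⌋₊ y, (w : ℝ)⁻¹) := by gcongr
    _ = 7 * x * (Real.log y * ∑ w ∈ coprimeToPrimesBelow ⌊x⌋₊ y, (w : ℝ)⁻¹) := by ring
    _ ≤ 7 * x * (1 + Real.log y + Real.log x) := by
        gcongr
        exact log_mul_sum_inv_coprimeToPrimesBelow_le hy hx

theorem exists_two_le_and_le_log_and_log_le {s : ℝ} (hs : 1 ≤ s) :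
    ∃ y : ℕ, 2 ≤ y ∧ s ≤ Real.log y ∧ Real.log y ≤ s + 1 := by
  have exp_le : Real.exp s ≤ ⌈Real.exp s⌉₊ := Nat.le_ceil _
  have two_le : (2 : ℝ) ≤ ⌈Real.exp s⌉₊ := by linarith [Real.add_one_le_exp s]
  refine ⟨⌈Real.exp s⌉₊, by exact_mod_cast two_le, ?_, ?_⟩
  · exact (Real.le_log_iff_exp_le (by positivity)).2 exp_le
  · rw [Real.log_le_iff_le_exp (by positivity), Real.exp_add]
    have := Nat.ceil_lt_add_one (Real.exp_pos s).le
    nlinarith [Real.add_one_le_exp s, Real.add_one_le_exp (1 : ℝ)]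

-- With `log y ≈ s` both sets have density `O(1 / s)` up to any `x` with `log x ≥ s² / 3`.
theorem exists_card_smooth_le_and_card_coprime_le {s : ℝ} (hs : 1 ≤ s) :
    ∃ y : ℕ, ∀ x : ℝ, 1 ≤ x → s ^ 2 / 3 ≤ Real.log x →
      (#(⌊x⌋₊.smoothNumbersUpTo y) : ℝ) ≤ 714 / s * x ∧
      (#(coprimeToPrimesBelow ⌊x⌋₊ y) : ℝ) ≤ 714 / s * x := by
  have hs0 : 0 < s := by linarith
  obtain ⟨y, two_le_y, s_le_log_y, log_y_le⟩ := exists_two_le_and_le_log_and_log_le hs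
  refine ⟨y, fun x hx hlog ↦ ?_⟩
  have hx0 : 0 < x := by linarith
  have log_x_pos : 0 < Real.log x := hlog.trans_lt' (by positivity)
  have log_y_pos : 0 < Real.log y := by linarith
  constructor
  · refine le_of_mul_le_mul_right ?_ log_x_pos
    calc #(⌊x⌋₊.smoothNumbersUpTo y) * Real.log x ≤ 7 * x * (2 + 16 * Real.log y) :=
          card_smoothNumbersUpTo_mul_log_le two_le_y hx0.le
      _ ≤ 7 * x * (34 * s) := by gcongr; linarith
      _ = 714 / s * x * (s ^ 2 / 3) := by field_simp; ring
      _ ≤ 714 / s * x * Real.log x := by gcongr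
  · have mul_add_le : s * (1 + Real.log y + Real.log x) ≤ 102 * (Real.log y * Real.log x) := by
      have : s * (s ^ 2 / 3) ≤ Real.log y * Real.log x := by gcongr
      have : s * Real.log x ≤ Real.log y * Real.log x := by gcongr
      have : Real.log y * (s ^ 2 / 3) ≤ Real.log y * Real.log x := by gcongr
      nlinarith [mul_pos hs0 hs0]
    refine le_of_mul_le_mul_right ?_ (mul_pos log_y_pos log_x_pos)
    calc #(coprimeToPrimesBelow ⌊x⌋₊ y) * (Real.log y * Real.log x)
        ≤ 7 * x * (1 + Real.log y + Real.log x) :=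
          card_coprimeToPrimesBelow_mul_log_mul_log_le (by lia : 1 ≤ y) hx
      _ = 7 / s * x * (s * (1 + Real.log y + Real.log x)) := by field_simp
      _ ≤ 7 / s * x * (102 * (Real.log y * Real.log x)) :=
          mul_le_mul_of_nonneg_left mul_add_le (by positivity)
      _ = 714 / s * x * (Real.log y * Real.log x) := by ring

theorem exists_dvd_and_forall_prime_dvd_div_le {T : ℝ} (hT : 1 ≤ T) {a : ℕ} (ha : T ≤ a)
    (hprime : ∀ p : ℕ, p.Prime → p ∣ a → (p : ℝ) ≤ T ^ 2) :
    ∃ u, u ∣ a ∧ T ≤ u ∧ (u : ℝ) ≤ T ^ 2 ∧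
      ∀ p q : ℕ, p.Prime → q.Prime → p ∣ a / u → q ∣ u → p ≤ q := by
  induction a using Nat.strong_induction_on with
  | _ a ih =>
    have ha0 : 0 < a := by
      have : (0 : ℝ) < a := by linarith
      exact_mod_cast this
    obtain haT | haT := le_or_gt (a : ℝ) (T ^ 2)
    · refine ⟨a, dvd_rfl, ha, haT, fun p q hp _ hpa _ ↦ ?_⟩
      rw [Nat.div_self ha0] at hpa
      exact absurd (Nat.eq_one_of_dvd_one hpa) hp.ne_one
    set p := a.minFac
    have hne : a ≠ 1 := by
      rintro rfl
      rw [Nat.cast_one] at haT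
      nlinarith
    have hp : p.Prime := Nat.minFac_prime hne
    obtain ⟨b, hb⟩ : p ∣ a := a.minFac_dvd
    have not_prime : ¬ a.Prime := fun h ↦ haT.not_ge (hprime a h dvd_rfl)
    have p_sq_le : p ^ 2 ≤ a := Nat.minFac_sq_le_self ha0 not_prime
    have p_le_b : p ≤ b := by
      rw [hb, sq] at p_sq_le
      exact Nat.le_of_mul_le_mul_left p_sq_le hp.pos
    have hTb : T ≤ b := by
      have : (p : ℝ) ≤ b := by exact_mod_cast p_le_b
      rw [hb, Nat.cast_mul] at haT
      nlinarith
    obtain ⟨u, hub, hTu, huT, hu⟩ := ih b (by nlinarith [hp.two_le]) hTb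
      fun q hq hqb ↦ hprime q hq (hb ▸ dvd_mul_of_dvd_right hqb p)
    have hua : u ∣ a := hb ▸ dvd_mul_of_dvd_right hub p
    refine ⟨u, hua, hTu, huT, fun q r hq hr hqa hru ↦ ?_⟩
    rw [hb, Nat.mul_div_assoc p hub] at hqa
    obtain hqp | hqb := (Nat.Prime.dvd_mul hq).1 hqa
    · rw [(Nat.prime_dvd_prime_iff_eq hq hp).1 hqp]
      exact Nat.minFac_le_of_dvd hr.two_le (hru.trans hua)
    · exact hu q r hq hr hqb hru

/-! ### The cardinality of multiplicative 3-Sidon sets -/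

theorem mem_Icc_one_floor_of_dvd {a d : ℕ} (ha : a ≠ 0) (hd : d ∣ a) {x : ℝ} (hx : (d : ℝ) ≤ x) :
    d ∈ Icc 1 ⌊x⌋₊ :=
  mem_Icc.2 ⟨Nat.pos_of_dvd_of_pos hd (Nat.pos_of_ne_zero ha), Nat.le_floor hx⟩

theorem exists_mul_two_pow_le_and_le_mul_two_pow {T u : ℝ} (hT : 0 < T) (hTu : T ≤ u)
    (huT : u ≤ T ^ 2) {K : ℕ} (hTK : T < 2 ^ K) :
    ∃ i < K, T * 2 ^ i ≤ u ∧ u ≤ T * 2 ^ (i + 1) := by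
  obtain ⟨i, hi, hi'⟩ := exists_nat_pow_near ((one_le_div hT).2 hTu) (one_lt_two (α := ℝ))
  rw [le_div_iff₀' hT] at hi
  rw [div_lt_iff₀' hT] at hi'
  have two_pow_lt : (2 : ℝ) ^ i < 2 ^ K := by
    refine lt_of_le_of_lt (le_of_mul_le_mul_left ?_ hT) hTK
    exact (hi.trans huT).trans_eq (sq T)
  exact ⟨i, (pow_lt_pow_iff_right₀ one_lt_two).1 two_pow_lt, hi, hi'.le⟩

theorem sum_range_dyadic_le {T : ℝ} (hT : 0 ≤ T) {K : ℕ} (hK : 2 ^ K ≤ 2 * T) :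
    ∑ i ∈ range K, (T * 2 ^ (i + 1) + T ^ 2 / 2 ^ i) ≤ 6 * T ^ 2 := by
  have sum_two_pow : ∑ i ∈ range K, T * 2 ^ (i + 1) ≤ 4 * T ^ 2 := calc
    ∑ i ∈ range K, T * 2 ^ (i + 1) = 2 * T * ∑ i ∈ range K, (2 : ℝ) ^ i := by
      rw [mul_sum]
      exact sum_congr rfl fun i _ ↦ by ring
    _ = 2 * T * (2 ^ K - 1) := by rw [geom_sum_eq (by norm_num)]; norm_num
    _ ≤ 4 * T ^ 2 := by nlinarith
  have sum_half_pow : ∑ i ∈ range K, T ^ 2 / 2 ^ i ≤ 2 * T ^ 2 := calc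
    ∑ i ∈ range K, T ^ 2 / 2 ^ i = T ^ 2 * ∑ i ∈ range K, (1 / 2 : ℝ) ^ i := by
      rw [mul_sum]
      exact sum_congr rfl fun i _ ↦ by rw [one_div_pow, mul_one_div]
    _ ≤ T ^ 2 * 2 := by gcongr; exact sum_geometric_two_le K
    _ = 2 * T ^ 2 := mul_comm _ _
  rw [sum_add_distrib]
  linarith

theorem rpow_two_thirds_le_of_sq_le_cube {x z : ℝ} (hx : 0 ≤ x) (hz : 0 ≤ z) (h : x ^ 2 ≤ z ^ 3) :
    x ^ ((2 : ℝ) / 3) ≤ z := by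
  refine (pow_le_pow_iff_left₀ (Real.rpow_nonneg hx _) hz three_ne_zero).1 ?_
  rw [← Real.rpow_mul_natCast hx]
  norm_num [h]

theorem exists_lt_two_pow_le_two_mul {T : ℝ} (hT : 1 ≤ T) :
    ∃ K : ℕ, T < 2 ^ K ∧ 2 ^ K ≤ 2 * T ∧ (K : ℝ) ≤ 1 + 3 / 2 * Real.log T := by
  obtain ⟨k, hk, hk'⟩ := exists_nat_pow_near hT (one_lt_two (α := ℝ))
  refine ⟨k + 1, hk', by rw [pow_succ']; linarith, ?_⟩
  have mul_log_two_le : k * Real.log 2 ≤ Real.log T := by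
    rw [← Real.log_pow]
    exact Real.log_le_log (by positivity) hk
  have : (0 : ℝ) ≤ k := k.cast_nonneg
  push_cast
  nlinarith [Real.log_two_gt_d9]

namespace MulSidon3

variable {A : Finset ℕ} {f : ℕ → ℕ} {T P Q κ : ℝ} {y K : ℕ}

theorem card_le_of_card_le (hA : MulSidon3 A) {X Y : Finset ℕ} (hf : ∀ a ∈ A, f a ∣ a)
    (hX : ∀ a ∈ A, f a ∈ X) (hY : ∀ a ∈ A, a / f a ∈ Y) {R : ℝ}
    (hP : (#X : ℝ) ≤ P) (hQ : (#Y : ℝ) ≤ Q) (hR : (#X : ℝ) * #Y ≤ R) :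
    (#A : ℝ) ≤ 2 * (P + Q) + 3 * R ^ ((2 : ℝ) / 3) :=
  (hA.card_le_of_factorization hf hX hY).trans (by gcongr)

theorem card_le_of_div_mem_smoothNumbers (hA : MulSidon3 A) (h0 : 0 ∉ A) (hf : ∀ a ∈ A, f a ∣ a)
    (hP0 : 0 ≤ P) (hQ0 : 0 ≤ Q) (hP : ∀ a ∈ A, (f a : ℝ) ≤ P)
    (hQ : ∀ a ∈ A, ((a / f a : ℕ) : ℝ) ≤ Q) (hfy : ∀ a ∈ A, a / f a ∈ Nat.smoothNumbers y)
    (hsmooth : (#(⌊Q⌋₊.smoothNumbersUpTo y) : ℝ) ≤ κ * Q) :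
    (#A : ℝ) ≤ 2 * (P + Q) + 3 * (κ * (P * Q)) ^ ((2 : ℝ) / 3) := by
  have card_left_le : (#(Icc 1 ⌊P⌋₊) : ℝ) ≤ P := by
    simpa only [Nat.card_Icc, Nat.add_sub_cancel] using Nat.floor_le hP0
  have card_right_le : (#(⌊Q⌋₊.smoothNumbersUpTo y) : ℝ) ≤ Q := by
    have := Nat.smoothNumbersUpTo_card_add_roughNumbersUpTo_card ⌊Q⌋₊ y
    exact (Nat.le_floor_iff hQ0).1 (by lia)
  refine hA.card_le_of_card_le hf
    (fun a ha ↦ mem_Icc_one_floor_of_dvd (ne_of_mem_of_not_mem ha h0) (hf a ha) (hP a ha))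
    (fun a ha ↦ Nat.mem_smoothNumbersUpTo.2 ⟨Nat.le_floor (hQ a ha), hfy a ha⟩)
    card_left_le card_right_le ?_
  exact (mul_le_mul card_left_le hsmooth (Nat.cast_nonneg _) hP0).trans_eq (by ring)

theorem card_le_of_forall_prime_ge (hA : MulSidon3 A) (h0 : 0 ∉ A) (hf : ∀ a ∈ A, f a ∣ a)
    (hP0 : 0 ≤ P) (hQ0 : 0 ≤ Q) (hP : ∀ a ∈ A, (f a : ℝ) ≤ P)
    (hQ : ∀ a ∈ A, ((a / f a : ℕ) : ℝ) ≤ Q) (hfy : ∀ a ∈ A, ∀ p, p.Prime → p ∣ f a → y ≤ p)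
    (hrough : (#(coprimeToPrimesBelow ⌊P⌋₊ y) : ℝ) ≤ κ * P) :
    (#A : ℝ) ≤ 2 * (P + Q) + 3 * (κ * (P * Q)) ^ ((2 : ℝ) / 3) := by
  have card_left_le : (#(coprimeToPrimesBelow ⌊P⌋₊ y) : ℝ) ≤ P :=
    (Nat.le_floor_iff hP0).1 ((card_filter_le _ _).trans (by simp))
  have card_right_le : (#(Icc 1 ⌊Q⌋₊) : ℝ) ≤ Q := by
    simpa only [Nat.card_Icc, Nat.add_sub_cancel] using Nat.floor_le hQ0
  refine hA.card_le_of_card_le hf (fun a ha ↦ ?_)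
    (fun a ha ↦ mem_Icc_one_floor_of_dvd (ne_of_mem_of_not_mem ha h0)
      (Nat.div_dvd_of_dvd (hf a ha)) (hQ a ha))
    card_left_le card_right_le ?_
  · obtain ⟨hfa, hfaP⟩ := mem_Icc.1
      (mem_Icc_one_floor_of_dvd (ne_of_mem_of_not_mem ha h0) (hf a ha) (hP a ha))
    exact mem_coprimeToPrimesBelow.2 ⟨hfa, hfaP, hfy a ha⟩
  · exact (mul_le_mul hrough card_right_le (Nat.cast_nonneg _)
      ((Nat.cast_nonneg _).trans hrough)).trans_eq (by ring)

theorem card_le_of_separated (hA : MulSidon3 A) (h0 : 0 ∉ A) (hf : ∀ a ∈ A, f a ∣ a)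
    (hsep : ∀ a ∈ A, ∀ p q : ℕ, p.Prime → q.Prime → p ∣ a / f a → q ∣ f a → p ≤ q)
    (hP0 : 0 ≤ P) (hQ0 : 0 ≤ Q) (hP : ∀ a ∈ A, (f a : ℝ) ≤ P)
    (hQ : ∀ a ∈ A, ((a / f a : ℕ) : ℝ) ≤ Q)
    (hsmooth : (#(⌊Q⌋₊.smoothNumbersUpTo y) : ℝ) ≤ κ * Q)
    (hrough : (#(coprimeToPrimesBelow ⌊P⌋₊ y) : ℝ) ≤ κ * P) :
    (#A : ℝ) ≤ 4 * (P + Q) + 6 * (κ * (P * Q)) ^ ((2 : ℝ) / 3) := by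
  have card_smooth_le : (#{a ∈ A | a / f a ∈ Nat.smoothNumbers y} : ℝ) ≤
      2 * (P + Q) + 3 * (κ * (P * Q)) ^ ((2 : ℝ) / 3) :=
    (hA.mono (filter_subset _ _)).card_le_of_div_mem_smoothNumbers
      (fun h ↦ h0 (mem_filter.1 h).1) (fun a ha ↦ hf a (mem_filter.1 ha).1) hP0 hQ0
      (fun a ha ↦ hP a (mem_filter.1 ha).1) (fun a ha ↦ hQ a (mem_filter.1 ha).1)
      (fun a ha ↦ (mem_filter.1 ha).2) hsmooth
  have card_rough_le : (#{a ∈ A | a / f a ∉ Nat.smoothNumbers y} : ℝ) ≤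
      2 * (P + Q) + 3 * (κ * (P * Q)) ^ ((2 : ℝ) / 3) := by
    refine (hA.mono (filter_subset _ _)).card_le_of_forall_prime_ge
      (fun h ↦ h0 (mem_filter.1 h).1) (fun a ha ↦ hf a (mem_filter.1 ha).1) hP0 hQ0
      (fun a ha ↦ hP a (mem_filter.1 ha).1) (fun a ha ↦ hQ a (mem_filter.1 ha).1)
      (fun a ha q hq hqa ↦ ?_) hrough
    obtain ⟨ha, not_smooth⟩ := mem_filter.1 ha
    simp only [Nat.mem_smoothNumbers', not_forall, not_lt] at not_smooth
    obtain ⟨p, hp, hpa, hyp⟩ := not_smooth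
    exact hyp.trans (hsep a ha p q hp hq hpa hqa)
  rw [← card_filter_add_card_filter_not fun a ↦ a / f a ∈ Nat.smoothNumbers y, Nat.cast_add]
  linarith

theorem card_le_of_mem_dyadic (hA : MulSidon3 A) (h0 : 0 ∉ A) (hT : 0 < T)
    (hA_le : ∀ a ∈ A, (a : ℝ) ≤ T ^ 3)
    (hsmooth : ∀ x, T ≤ x → (#(⌊x⌋₊.smoothNumbersUpTo y) : ℝ) ≤ κ * x)
    (hrough : ∀ x, T ≤ x → (#(coprimeToPrimesBelow ⌊x⌋₊ y) : ℝ) ≤ κ * x)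
    {u : ℕ → ℕ} (hu : ∀ a ∈ A, u a ∣ a) (u_le : ∀ a ∈ A, (u a : ℝ) ≤ T ^ 2)
    (hsep : ∀ a ∈ A, ∀ p q : ℕ, p.Prime → q.Prime → p ∣ a / u a → q ∣ u a → p ≤ q)
    {i : ℕ} (le_u : ∀ a ∈ A, T * 2 ^ i ≤ u a) (u_le_right : ∀ a ∈ A, (u a : ℝ) ≤ T * 2 ^ (i + 1)) :
    (#A : ℝ) ≤ 4 * (T * 2 ^ (i + 1) + T ^ 2 / 2 ^ i) +
      6 * (κ * (2 * T ^ 3)) ^ ((2 : ℝ) / 3) := by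
  have two_pow_pos : (0 : ℝ) < 2 ^ i := by positivity
  have hκ : 0 ≤ κ := nonneg_of_mul_nonneg_left ((Nat.cast_nonneg _).trans (hsmooth T le_rfl)) hT
  obtain rfl | ⟨a₀, ha₀⟩ := A.eq_empty_or_nonempty
  · rw [card_empty, Nat.cast_zero]
    positivity
  have u_pos (a : ℕ) (ha : a ∈ A) : (0 : ℝ) < u a :=
    (mul_pos hT two_pow_pos).trans_le (le_u a ha)
  have cofactor_le : ∀ a ∈ A, ((a / u a : ℕ) : ℝ) ≤ T ^ 2 / 2 ^ i := fun a ha ↦ calc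
    ((a / u a : ℕ) : ℝ) = a / u a := Nat.cast_div (hu a ha) (u_pos a ha).ne'
    _ ≤ T ^ 3 / (T * 2 ^ i) := by gcongr; exacts [hA_le a ha, le_u a ha]
    _ = T ^ 2 / 2 ^ i := by field_simp
  have T_le : T ≤ T ^ 2 / 2 ^ i := by
    rw [le_div_iff₀ two_pow_pos]
    exact (le_u a₀ ha₀).trans (u_le a₀ ha₀)
  convert hA.card_le_of_separated h0 hu hsep (P := T * 2 ^ (i + 1)) (Q := T ^ 2 / 2 ^ i)
    (by positivity) (by positivity) u_le_right cofactor_le (hsmooth _ T_le) (hrough _ ?_) using 5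
  · field_simp
    ring
  · exact le_mul_of_one_le_right hT.le (one_le_pow₀ one_le_two)

theorem card_le_of_sieve_bounds (hA : MulSidon3 A) (hT : 1 ≤ T) (le_A : ∀ a ∈ A, T ≤ a)
    (hA_le : ∀ a ∈ A, (a : ℝ) ≤ T ^ 3)
    (hprime : ∀ a ∈ A, ∀ p : ℕ, p.Prime → p ∣ a → (p : ℝ) ≤ T ^ 2)
    (hsmooth : ∀ x, T ≤ x → (#(⌊x⌋₊.smoothNumbersUpTo y) : ℝ) ≤ κ * x)
    (hrough : ∀ x, T ≤ x → (#(coprimeToPrimesBelow ⌊x⌋₊ y) : ℝ) ≤ κ * x)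
    (hTK : T < 2 ^ K) (hKT : 2 ^ K ≤ 2 * T) :
    (#A : ℝ) ≤ 24 * T ^ 2 + 6 * K * (κ * (2 * T ^ 3)) ^ ((2 : ℝ) / 3) := by
  have hT0 : 0 < T := by linarith
  have h0 : 0 ∉ A := fun h ↦ hT0.not_ge (by simpa only [Nat.cast_zero] using le_A 0 h)
  have exists_u (a : ℕ) (ha : a ∈ A) :=
    exists_dvd_and_forall_prime_dvd_div_le hT (le_A a ha) (hprime a ha)
  choose! u hu le_u u_le hsep using exists_u
  set D : ℕ → Finset ℕ := fun i ↦ {a ∈ A | T * 2 ^ i ≤ u a ∧ (u a : ℝ) ≤ T * 2 ^ (i + 1)}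
  have A_subset : A ⊆ (range K).biUnion D := by
    intro a ha
    obtain ⟨i, hiK, hi⟩ :=
      exists_mul_two_pow_le_and_le_mul_two_pow hT0 (le_u a ha) (u_le a ha) hTK
    exact mem_biUnion.2 ⟨i, mem_range.2 hiK, mem_filter.2 ⟨ha, hi⟩⟩
  have card_D_le (i : ℕ) : (#(D i) : ℝ) ≤
      4 * (T * 2 ^ (i + 1) + T ^ 2 / 2 ^ i) + 6 * (κ * (2 * T ^ 3)) ^ ((2 : ℝ) / 3) :=
    have mem_A {a : ℕ} (ha : a ∈ D i) : a ∈ A := (mem_filter.1 ha).1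
    (hA.mono (filter_subset _ _)).card_le_of_mem_dyadic (fun ha ↦ h0 (mem_A ha)) hT0
      (fun a ha ↦ hA_le a (mem_A ha)) hsmooth hrough
      (fun a ha ↦ hu a (mem_A ha)) (fun a ha ↦ u_le a (mem_A ha)) (fun a ha ↦ hsep a (mem_A ha))
      (fun a ha ↦ (mem_filter.1 ha).2.1) (fun a ha ↦ (mem_filter.1 ha).2.2)
  calc (#A : ℝ) ≤ ∑ i ∈ range K, (#(D i) : ℝ) := by
        exact_mod_cast (card_le_card A_subset).trans card_biUnion_le
    _ ≤ ∑ i ∈ range K,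
        (4 * (T * 2 ^ (i + 1) + T ^ 2 / 2 ^ i) + 6 * (κ * (2 * T ^ 3)) ^ ((2 : ℝ) / 3)) :=
      sum_le_sum fun i _ ↦ card_D_le i
    _ = 4 * ∑ i ∈ range K, (T * 2 ^ (i + 1) + T ^ 2 / 2 ^ i) +
        6 * K * (κ * (2 * T ^ 3)) ^ ((2 : ℝ) / 3) := by
      rw [sum_add_distrib, ← mul_sum, sum_const, card_range, nsmul_eq_mul]
      ring
    _ ≤ 24 * T ^ 2 + 6 * K * (κ * (2 * T ^ 3)) ^ ((2 : ℝ) / 3) := by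
      linarith [sum_range_dyadic_le hT0.le hKT]

theorem card_le_of_le_of_forall_prime_le (hA : MulSidon3 A) (hT1 : 1 ≤ T)
    (hT : 1 ≤ 3 * Real.log T) (le_A : ∀ a ∈ A, T ≤ a) (hA_le : ∀ a ∈ A, (a : ℝ) ≤ T ^ 3)
    (hprime : ∀ a ∈ A, ∀ p : ℕ, p.Prime → p ∣ a → (p : ℝ) ≤ T ^ 2) :
    (#A : ℝ) ≤ 24 * T ^ 2 + 1143 * T ^ 2 * (3 * Real.log T) ^ ((2 : ℝ) / 3) := by
  set L : ℝ := 3 * Real.log T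
  have L_pos : 0 < L := by linarith
  obtain ⟨y, hy⟩ := exists_card_smooth_le_and_card_coprime_le (Real.one_le_sqrt.2 hT)
  have sieve_bounds (x : ℝ) (hx : T ≤ x) := hy x (hT1.trans hx) (by
    rw [Real.sq_sqrt L_pos.le]
    linarith [Real.log_le_log (by linarith) hx])
  obtain ⟨K, hTK, hKT, K_le⟩ := exists_lt_two_pow_le_two_mul hT1
  set r : ℝ := L ^ ((1 : ℝ) / 3) with r_def
  have r_pos : 0 < r := Real.rpow_pos_of_pos L_pos _
  have r_cube : r ^ 3 = L := by
    rw [r_def, ← Real.rpow_mul_natCast L_pos.le]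
    norm_num
  have r_sq : r ^ 2 = L ^ ((2 : ℝ) / 3) := by
    rw [r_def, ← Real.rpow_mul_natCast L_pos.le]
    norm_num
  have rpow_le : (714 / √L * (2 * T ^ 3)) ^ ((2 : ℝ) / 3) ≤ 127 * T ^ 2 / r := by
    refine rpow_two_thirds_le_of_sq_le_cube (by positivity) (by positivity) ?_
    rw [mul_pow, div_pow, Real.sq_sqrt L_pos.le, div_pow, r_cube, div_mul_eq_mul_div]
    gcongr
    nlinarith [pow_nonneg (by linarith : 0 ≤ T) 6]
  calc (#A : ℝ) ≤ 24 * T ^ 2 + 6 * K * (714 / √L * (2 * T ^ 3)) ^ ((2 : ℝ) / 3) :=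
        hA.card_le_of_sieve_bounds hT1 le_A hA_le hprime (fun x hx ↦ (sieve_bounds x hx).1)
          (fun x hx ↦ (sieve_bounds x hx).2) hTK hKT
    _ ≤ 24 * T ^ 2 + 6 * (3 / 2 * r ^ 3) * (127 * T ^ 2 / r) := by
        gcongr
        linarith
    _ = 24 * T ^ 2 + 1143 * T ^ 2 * L ^ ((2 : ℝ) / 3) := by
        rw [← r_sq]
        field_simp
        ring

theorem card_le_of_forall_prime_le (hA : MulSidon3 A) (h0 : 0 ∉ A) (hT1 : 1 ≤ T)
    (hT : 1 ≤ 3 * Real.log T) (hA_le : ∀ a ∈ A, (a : ℝ) ≤ T ^ 3)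
    (hprime : ∀ a ∈ A, ∀ p : ℕ, p.Prime → p ∣ a → (p : ℝ) ≤ T ^ 2) :
    (#A : ℝ) ≤ 25 * T ^ 2 + 1143 * T ^ 2 * (3 * Real.log T) ^ ((2 : ℝ) / 3) := by
  set small : Finset ℕ := A.filter fun a ↦ (a : ℝ) < T
  set large : Finset ℕ := A.filter fun a ↦ ¬ (a : ℝ) < T
  have card_small_le : (#small : ℝ) ≤ T := by
    have small_subset : small ⊆ Icc 1 ⌊T⌋₊ := fun a ha ↦ by
      obtain ⟨ha, haT⟩ := mem_filter.1 ha
      exact mem_Icc_one_floor_of_dvd (ne_of_mem_of_not_mem ha h0) dvd_rfl haT.le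
    exact (Nat.le_floor_iff (by linarith)).1 ((card_le_card small_subset).trans (by simp))
  have card_large_le : (#large : ℝ) ≤
      24 * T ^ 2 + 1143 * T ^ 2 * (3 * Real.log T) ^ ((2 : ℝ) / 3) :=
    (hA.mono (filter_subset _ _)).card_le_of_le_of_forall_prime_le hT1 hT
      (fun a ha ↦ not_lt.1 (mem_filter.1 ha).2) (fun a ha ↦ hA_le a (mem_filter.1 ha).1)
      (fun a ha ↦ hprime a (mem_filter.1 ha).1)
  have card_eq : (#A : ℝ) = #small + #large := by
    exact_mod_cast (card_filter_add_card_filter_not _).symm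
  nlinarith

theorem card_le_of_cube_eq (hA : MulSidon3 A) {n : ℕ} (hAn : A ⊆ Icc 1 n) (hT1 : 1 ≤ T)
    (hT : 1 ≤ 3 * Real.log T) (hTn : T ^ 3 = n) :
    (#A : ℝ) ≤ Nat.primeCounting n + Nat.primeCounting (n / 2) +
      (27 * T ^ 2 + 1143 * T ^ 2 * (3 * Real.log T) ^ ((2 : ℝ) / 3)) := by
  classical
  have h0 : 0 ∉ A := fun h ↦ Nat.not_succ_le_zero 0 (mem_Icc.1 (hAn h)).1
  have le_T_cube (a : ℕ) (ha : a ∈ A) : (a : ℝ) ≤ T ^ 3 := by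
    rw [hTn]
    exact_mod_cast (mem_Icc.1 (hAn ha)).2
  set large : Finset ℕ := A.filter fun a ↦ ∃ p : ℕ, p.Prime ∧ p ∣ a ∧ T ^ 2 < p
  set small : Finset ℕ := A.filter fun a ↦ ¬ ∃ p : ℕ, p.Prime ∧ p ∣ a ∧ T ^ 2 < p
  have card_large_le : (#large : ℝ) ≤
      Nat.primeCounting n + Nat.primeCounting (n / 2) + 2 * T ^ 2 := by
    have exists_prime_dvd (a : ℕ) (ha : a ∈ large) : ∃ p, p.Prime ∧ p ∣ a ∧ a / p ≤ ⌊T⌋₊ := by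
      obtain ⟨ha, p, hp, hpa, hTp⟩ := mem_filter.1 ha
      refine ⟨p, hp, hpa, Nat.le_floor ?_⟩
      have p_pos : (0 : ℝ) < p := by exact_mod_cast hp.pos
      rw [Nat.cast_div hpa p_pos.ne', div_le_iff₀ p_pos]
      nlinarith [le_T_cube a ha]
    calc (#large : ℝ)
        ≤ Nat.primeCounting n + Nat.primeCounting (n / 2) + 2 * (⌊T⌋₊ : ℝ) ^ 2 := by
          exact_mod_cast (hA.mono (filter_subset _ _)).card_le_of_exists_prime_dvd
            ((filter_subset _ _).trans hAn) exists_prime_dvd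
      _ ≤ Nat.primeCounting n + Nat.primeCounting (n / 2) + 2 * T ^ 2 := by
          gcongr
          exact Nat.floor_le (by linarith)
  have card_small_le : (#small : ℝ) ≤
      25 * T ^ 2 + 1143 * T ^ 2 * (3 * Real.log T) ^ ((2 : ℝ) / 3) :=
    (hA.mono (filter_subset _ _)).card_le_of_forall_prime_le (fun h ↦ h0 (mem_filter.1 h).1) hT1 hT
      (fun a ha ↦ le_T_cube a (mem_filter.1 ha).1)
      fun a ha p hp hpa ↦ not_lt.1 fun hTp ↦ (mem_filter.1 ha).2 ⟨p, hp, hpa, hTp⟩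
  have card_eq : (#A : ℝ) = #large + #small := by
    exact_mod_cast (card_filter_add_card_filter_not _).symm
  linarith

theorem card_le (hA : MulSidon3 A) {n : ℕ} (hn : 3 ≤ n) (hAn : A ⊆ Icc 1 n) :
    (#A : ℝ) ≤ Nat.primeCounting n + Nat.primeCounting (n / 2) +
      1170 * (n : ℝ) ^ ((2 : ℝ) / 3) * Real.log n ^ ((2 : ℝ) / 3) := by
  have hn0 : (0 : ℝ) < n := by exact_mod_cast (by lia : 0 < n)
  have one_le_log : 1 ≤ Real.log n := by
    rw [Real.le_log_iff_exp_le hn0]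
    exact (Real.exp_one_lt_three.trans_le (by exact_mod_cast hn)).le
  have one_le_log_rpow : 1 ≤ Real.log n ^ ((2 : ℝ) / 3) :=
    Real.one_le_rpow one_le_log (by norm_num)
  have log_root : 3 * Real.log ((n : ℝ) ^ ((1 : ℝ) / 3)) = Real.log n := by
    rw [Real.log_rpow hn0]
    ring
  have root_sq : ((n : ℝ) ^ ((1 : ℝ) / 3)) ^ 2 = (n : ℝ) ^ ((2 : ℝ) / 3) := by
    rw [← Real.rpow_mul_natCast hn0.le]
    norm_num
  have main := hA.card_le_of_cube_eq hAn (T := (n : ℝ) ^ ((1 : ℝ) / 3))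
    (Real.one_le_rpow (by exact_mod_cast (by lia : 1 ≤ n)) (by norm_num)) (log_root ▸ one_le_log)
    (by rw [← Real.rpow_mul_natCast hn0.le]; norm_num)
  rw [log_root, root_sq] at main
  nlinarith [Real.rpow_pos_of_pos hn0 (2 / 3)]

end MulSidon3

theorem mulSidon3_card_upper_bound_general {α : ℝ} (hα : 2 / 3 < α) :
    ∃ N : ℕ, ∀ n : ℕ, N ≤ n → ∀ A : Finset ℕ, A ⊆ Finset.Icc 1 n → MulSidon3 A →
      (A.card : ℝ) ≤ (Nat.primeCounting n : ℝ) + (Nat.primeCounting (n / 2) : ℝ) +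
        (n : ℝ) ^ ((2 : ℝ) / 3) * (Real.log (n : ℝ)) ^ α := by
  have tendsto_log_rpow : Filter.Tendsto (fun n : ℕ ↦ Real.log n ^ (α - 2 / 3)) .atTop .atTop :=
    (tendsto_rpow_atTop (sub_pos.2 hα)).comp
      (Real.tendsto_log_atTop.comp tendsto_natCast_atTop_atTop)
  obtain ⟨N, hN⟩ := Filter.eventually_atTop.1 (tendsto_log_rpow.eventually_ge_atTop 1170)
  refine ⟨max N 3, fun n hn A hAn hA ↦ (hA.card_le (le_of_max_le_right hn) hAn).trans ?_⟩
  have log_pos : 0 < Real.log n :=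
    Real.log_pos (by exact_mod_cast (by lia : 1 < n))
  gcongr _ + ?_
  calc 1170 * (n : ℝ) ^ ((2 : ℝ) / 3) * Real.log n ^ ((2 : ℝ) / 3)
      ≤ Real.log n ^ (α - 2 / 3) * (n : ℝ) ^ ((2 : ℝ) / 3) * Real.log n ^ ((2 : ℝ) / 3) := by
        gcongr
        exact hN n (le_of_max_le_left hn)
    _ = (n : ℝ) ^ ((2 : ℝ) / 3) * Real.log n ^ α := by
        rw [mul_assoc, mul_left_comm, ← Real.rpow_add log_pos, sub_add_cancel]

theorem mulSidon3_card_upper_bound :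
    ∀ ε : ℝ, 0 < ε → ∃ N : ℕ, ∀ n : ℕ, N ≤ n → ∀ A : Finset ℕ, A ⊆ Finset.Icc 1 n →
      MulSidon3 A →
      (A.card : ℝ) ≤ (Nat.primeCounting n : ℝ) + (Nat.primeCounting (n / 2) : ℝ) +
        (n : ℝ) ^ ((2 : ℝ) / 3) *
          Real.log n ^ ((2 : ℝ) ^ ((1 : ℝ) / 3) - 1 / 3 + ε) := by
  intro ε hε
  have one_lt : 1 < (2 : ℝ) ^ ((1 : ℝ) / 3) := Real.one_lt_rpow one_lt_two (by norm_num)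
  exact mulSidon3_card_upper_bound_general (by linarith)
end

section
/- There exists a constant c > 0 and an integer N such that for all n ≥ N, every multiplicative 3-Sidon subset A of {1,2,…,n} satisfies |A| ≤ π(n) + π(n/2) + c · n^{2/3} (log n)^{2^{1/3} − 1/3} (log log n)^2. -/
/-!
Write each `a ∈ A` as a product `u * v` in which `u` is prime or `u ≤ n ^ (2/3)`, while
`v ≤ n ^ (2/3)` and `v` has at least about twice as many prime factors as `u`. A hexagon in the
bipartite graph of the pairs `(u, v)` would be a solution of `s₁ s₂ s₃ = t₁ t₂ t₃` in `A`, so the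
graph is hexagon-free.

Edges with `u > n ^ (2/3)` start at a prime and end in `v < n ^ (1/3)`. A hexagon-free graph with
a second vertex class this small has, up to `O(n ^ (2/3))`, at most `min (deg u) 2` edges at each
`u`, and `deg u ≥ 2` forces `u ≤ n / 2`: this gives `π(n) + π(n/2)`. The remaining edges are cut
into dyadic blocks and bounded by `4 (|X| |Y|) ^ (2/3) + 2 |X| + 2 |Y|`. Since `v` has many prime
factors whenever `u` does, Rankin weights `y⁻² ^ Ω u` and `y ^ Ω v` save a power of `log n` in
`|X| |Y|`, and `y = 2 ^ (1/3)` is the best weight.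
-/

open Finset
open scoped ArithmeticFunction.Omega

/-! ### Hexagon-free bipartite graphs -/

theorem three_mul_mul_le_sq_add {u v : ℝ} (hu : 0 ≤ u) (hv : 0 ≤ v) :
    3 * (u * v) ≤ (u * v) ^ 2 + u + v := by
  obtain ⟨a, ha, rfl⟩ : ∃ a, 0 ≤ a ∧ u = a ^ 2 := ⟨√u, Real.sqrt_nonneg u, (Real.sq_sqrt hu).symm⟩
  obtain ⟨b, hb, rfl⟩ : ∃ b, 0 ≤ b ∧ v = b ^ 2 := ⟨√v, Real.sqrt_nonneg v, (Real.sq_sqrt hv).symm⟩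
  have : 0 ≤ (a - b) ^ 2 + a * b * (a * b - 1) ^ 2 * (a * b + 2) := by positivity
  linarith

/-- Sum `3 ≤ uv + u⁻¹ + v⁻¹` (AM–GM) with `u = f i * A / #s` and `v = g i * B / #s`. -/
theorem card_cube_le_of_sum_inv_le {ι : Type*} {s : Finset ι} {f g : ι → ℝ} {A B : ℝ}
    (hf : ∀ i ∈ s, 0 < f i) (hg : ∀ i ∈ s, 0 < g i)
    (hA : ∑ i ∈ s, (f i)⁻¹ ≤ A) (hB : ∑ i ∈ s, (g i)⁻¹ ≤ B) :
    (#s : ℝ) ^ 3 ≤ A * B * ∑ i ∈ s, f i * g i := by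
  rcases s.eq_empty_or_nonempty with rfl | hs
  · simp
  have : (0 : ℝ) < #s := by exact_mod_cast hs.card_pos
  have hA' : 0 < A := (sum_pos (fun i hi ↦ inv_pos.2 (hf i hi)) hs).trans_le hA
  have hB' : 0 < B := (sum_pos (fun i hi ↦ inv_pos.2 (hg i hi)) hs).trans_le hB
  have pointwise : ∀ i ∈ s, 3 ≤ A * B / #s ^ 2 * (f i * g i) + #s / A * (f i)⁻¹ +
      #s / B * (g i)⁻¹ := by
    intro i hi
    have hfi := hf i hi
    have hgi := hg i hi
    have amgm := three_mul_mul_le_sq_add (u := f i * A / #s) (v := g i * B / #s)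
      (by positivity) (by positivity)
    have huv : 0 < f i * A / #s * (g i * B / #s) := by positivity
    refine le_of_mul_le_mul_right (amgm.trans_eq ?_) huv
    field_simp
    ring
  have summed : 3 * (#s : ℝ) ≤ A * B / #s ^ 2 * (∑ i ∈ s, f i * g i) + #s + #s := by
    calc 3 * (#s : ℝ) = ∑ _i ∈ s, (3 : ℝ) := by rw [sum_const, nsmul_eq_mul, mul_comm]
      _ ≤ A * B / #s ^ 2 * (∑ i ∈ s, f i * g i) + #s / A * (∑ i ∈ s, (f i)⁻¹) +
          #s / B * ∑ i ∈ s, (g i)⁻¹ := by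
        simp only [mul_sum, ← sum_add_distrib]
        exact sum_le_sum pointwise
      _ ≤ A * B / #s ^ 2 * (∑ i ∈ s, f i * g i) + #s / A * A + #s / B * B := by gcongr
      _ = _ := by rw [div_mul_cancel₀ _ hA'.ne', div_mul_cancel₀ _ hB'.ne']
  have : (#s : ℝ) ≤ A * B * (∑ i ∈ s, f i * g i) / #s ^ 2 := by
    rw [mul_div_right_comm]
    linarith
  calc (#s : ℝ) ^ 3 = #s * #s ^ 2 := by ring
    _ ≤ _ := (le_div_iff₀ (by positivity)).1 this

section Hexagon

variable {α β : Type*}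

/-- The bipartite graph with edge set `E ⊆ α × β` contains no cycle of length six. -/
def HexagonFree (E : Finset (α × β)) : Prop :=
  ∀ ⦃x₁ x₂ x₃ : α⦄ ⦃y₁ y₂ y₃ : β⦄, x₁ ≠ x₂ → x₁ ≠ x₃ → x₂ ≠ x₃ → y₁ ≠ y₂ → y₁ ≠ y₃ → y₂ ≠ y₃ →
    (x₁, y₁) ∈ E → (x₂, y₁) ∈ E → (x₂, y₂) ∈ E → (x₃, y₂) ∈ E → (x₃, y₃) ∈ E → (x₁, y₃) ∉ E

/-- The bipartite graph `E` with the roles of its two vertex classes exchanged. -/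
def transposeEdges (E : Finset (α × β)) : Finset (β × α) :=
  E.map (Equiv.prodComm α β).toEmbedding

@[simp]
theorem mem_transposeEdges {E : Finset (α × β)} {x : α} {y : β} :
    (y, x) ∈ transposeEdges E ↔ (x, y) ∈ E := by
  simp [transposeEdges]

@[simp]
theorem transposeEdges_transposeEdges (E : Finset (α × β)) :
    transposeEdges (transposeEdges E) = E := by
  ext ⟨x, y⟩
  simp only [mem_transposeEdges]

theorem transposeEdges_subset_product {E : Finset (α × β)} {X : Finset α} {Y : Finset β}
    (hXY : E ⊆ X ×ˢ Y) : transposeEdges E ⊆ Y ×ˢ X := by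
  rintro ⟨y, x⟩ h
  exact mem_product.2 (mem_product.1 (hXY (mem_transposeEdges.1 h))).symm

theorem HexagonFree.mono {E F : Finset (α × β)} (hF : HexagonFree F) (hEF : E ⊆ F) :
    HexagonFree E := fun _ _ _ _ _ _ h₁ h₂ h₃ h₄ h₅ h₆ e₁ e₂ e₃ e₄ e₅ e₆ ↦
  hF h₁ h₂ h₃ h₄ h₅ h₆ (hEF e₁) (hEF e₂) (hEF e₃) (hEF e₄) (hEF e₅) (hEF e₆)

theorem HexagonFree.transpose {E : Finset (α × β)} (hE : HexagonFree E) :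
    HexagonFree (transposeEdges E) := by
  intro y₁ y₂ y₃ x₁ x₂ x₃ hy₁₂ hy₁₃ hy₂₃ hx₁₂ hx₁₃ hx₂₃ e₁ e₂ e₃ e₄ e₅ e₆
  simp only [mem_transposeEdges] at e₁ e₂ e₃ e₄ e₅ e₆
  exact hE hx₁₃ hx₁₂ hx₂₃.symm hy₁₃ hy₁₂ hy₂₃.symm e₁ e₆ e₅ e₄ e₃ e₂

variable [DecidableEq α] [DecidableEq β]

/-- The neighbourhood of the left vertex `x` in the bipartite graph `E`; the neighbourhood of a
right vertex `y` is `nbrs (transposeEdges E) y`. -/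
def nbrs (E : Finset (α × β)) (x : α) : Finset β := {e ∈ E | e.1 = x}.image Prod.snd

@[simp]
theorem mem_nbrs {E : Finset (α × β)} {x : α} {y : β} : y ∈ nbrs E x ↔ (x, y) ∈ E := by
  simp [nbrs]

theorem card_nbrs (E : Finset (α × β)) (x : α) : #(nbrs E x) = #{e ∈ E | e.1 = x} := by
  refine card_image_of_injOn fun e he e' he' h ↦ Prod.ext ?_ h
  rw [(mem_filter.1 he).2, (mem_filter.1 he').2]

/-- The neighbours of the right vertex `y`, other than `x`, that share at most two
neighbours with `x`. -/
def lightNbrs (E : Finset (α × β)) (x : α) (y : β) : Finset α :=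
  {a ∈ nbrs (transposeEdges E) y | a ≠ x ∧ #(nbrs E x ∩ nbrs E a) ≤ 2}

theorem mem_lightNbrs {E : Finset (α × β)} {x a : α} {y : β} :
    a ∈ lightNbrs E x y ↔ (a, y) ∈ E ∧ a ≠ x ∧ #(nbrs E x ∩ nbrs E a) ≤ 2 := by
  simp [lightNbrs]

/-- Two further neighbours of `y`, each sharing three neighbours with `x`, would close
a hexagon through `x` and `y`. -/
theorem HexagonFree.card_nbrs_le_card_lightNbrs_add_two {E : Finset (α × β)} (hE : HexagonFree E)
    (x : α) (y : β) : #(nbrs (transposeEdges E) y) ≤ #(lightNbrs E x y) + 2 := by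
  set heavy := {a ∈ nbrs (transposeEdges E) y | a ≠ x ∧ 2 < #(nbrs E x ∩ nbrs E a)} with heavy_def
  have heavy_le_one : #heavy ≤ 1 := by
    refine card_le_one.2 fun a ha b hb ↦ by_contra fun hab ↦ ?_
    simp only [heavy_def, mem_filter, mem_nbrs, mem_transposeEdges] at ha hb
    obtain ⟨u, hu, huy⟩ := exists_mem_notMem_of_card_lt_card
      (s := {y}) (t := nbrs E x ∩ nbrs E b) (by rw [card_singleton]; omega)
    obtain ⟨v, hv, hvyu⟩ := exists_mem_notMem_of_card_lt_card
      (s := {y, u}) (t := nbrs E x ∩ nbrs E a) (card_le_two.trans_lt ha.2.2)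
    simp only [mem_inter, mem_nbrs, mem_singleton, mem_insert, not_or] at hu huy hv hvyu
    exact hE hab ha.2.1 hb.2.1 (Ne.symm huy) (Ne.symm hvyu.1) (Ne.symm hvyu.2)
      ha.1 hb.1 hu.2 hu.1 hv.1 hv.2
  have cover : nbrs (transposeEdges E) y ⊆ lightNbrs E x y ∪ insert x heavy := by
    intro a ha
    by_cases hax : a = x
    · simp [hax]
    · rcases le_or_gt #(nbrs E x ∩ nbrs E a) 2 with h | h
      · exact mem_union_left _ (mem_filter.2 ⟨ha, hax, h⟩)
      · exact mem_union_right _ (mem_insert_of_mem (mem_filter.2 ⟨ha, hax, h⟩))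
  calc #(nbrs (transposeEdges E) y) ≤ #(lightNbrs E x y) + #(insert x heavy) :=
        (card_le_card cover).trans (card_union_le _ _)
    _ ≤ #(lightNbrs E x y) + 2 := by grind [card_insert_le]

/-- Disjoint middle edges of two paths `x y₁ x₁ y` and `x y₂ x₂ y` close a hexagon, so all middle
edges share a vertex with a fixed one of them; lightness leaves two choices at either end. -/
theorem HexagonFree.card_middle_edges_le {E : Finset (α × β)} (hE : HexagonFree E)
    (x : α) (y : β) :
    #{e ∈ E | x ∈ lightNbrs E e.1 e.2 ∧ y ∈ lightNbrs (transposeEdges E) e.2 e.1} ≤ 4 := by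
  set M := {e ∈ E | x ∈ lightNbrs E e.1 e.2 ∧ y ∈ lightNbrs (transposeEdges E) e.2 e.1} with M_def
  rcases M.eq_empty_or_nonempty with hM | ⟨⟨x₀, y₀⟩, h₀⟩
  · simp [hM]
  have mem_M {a b} : (a, b) ∈ M ↔ (a, b) ∈ E ∧ ((x, b) ∈ E ∧ x ≠ a ∧ #(nbrs E a ∩ nbrs E x) ≤ 2) ∧
      (a, y) ∈ E ∧ y ≠ b ∧
        #(nbrs (transposeEdges E) b ∩ nbrs (transposeEdges E) y) ≤ 2 := by
    simp [M_def, mem_lightNbrs]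
  have h₀' := mem_M.1 h₀
  have cover : M ⊆ (nbrs E x₀ ∩ nbrs E x).image (fun b ↦ (x₀, b)) ∪
      (nbrs (transposeEdges E) y₀ ∩ nbrs (transposeEdges E) y).image (fun a ↦ (a, y₀)) := by
    rintro ⟨a, b⟩ hab
    have hab' := mem_M.1 hab
    by_cases ha : a = x₀
    · exact mem_union_left _ (mem_image.2 ⟨b, by simp_all, by rw [ha]⟩)
    by_cases hb : b = y₀
    · exact mem_union_right _ (mem_image.2 ⟨a, by simp_all, by rw [hb]⟩)
    exact absurd hab'.2.1.1 (hE h₀'.2.1.2.1 hab'.2.1.2.1 (Ne.symm ha) (Ne.symm h₀'.2.2.2.1)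
      (Ne.symm hb) hab'.2.2.2.1 h₀'.2.1.1 h₀'.1 h₀'.2.2.1 hab'.2.2.1 hab'.1)
  calc #M ≤ _ := (card_le_card cover).trans (card_union_le _ _)
    _ ≤ 2 + 2 := add_le_add (card_image_le.trans h₀'.2.1.2.2) (card_image_le.trans h₀'.2.2.2.2)

theorem HexagonFree.sum_card_lightNbrs_mul_le {E : Finset (α × β)} (hE : HexagonFree E)
    {X : Finset α} {Y : Finset β} (hXY : E ⊆ X ×ˢ Y) :
    ∑ e ∈ E, #(lightNbrs E e.1 e.2) * #(lightNbrs (transposeEdges E) e.2 e.1) ≤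
      4 * (#X * #Y) := by
  let r (e q : α × β) : Prop :=
    q.1 ∈ lightNbrs E e.1 e.2 ∧ q.2 ∈ lightNbrs (transposeEdges E) e.2 e.1
  have light_pairs (e : α × β) :
      lightNbrs E e.1 e.2 ×ˢ lightNbrs (transposeEdges E) e.2 e.1 ⊆
        (X ×ˢ Y).bipartiteAbove r e := by
    rintro ⟨a, b⟩ hab
    obtain ⟨ha, hb⟩ := mem_product.1 hab
    refine mem_filter.2 ⟨mem_product.2 ⟨?_, ?_⟩, ha, hb⟩
    · exact (mem_product.1 (hXY (mem_lightNbrs.1 ha).1)).1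
    · exact (mem_product.1 (hXY (mem_transposeEdges.1 (mem_lightNbrs.1 hb).1))).2
  calc ∑ e ∈ E, #(lightNbrs E e.1 e.2) * #(lightNbrs (transposeEdges E) e.2 e.1)
      ≤ ∑ e ∈ E, #((X ×ˢ Y).bipartiteAbove r e) :=
        sum_le_sum fun e _ ↦ (card_product _ _).symm.trans_le (card_le_card (light_pairs e))
    _ = ∑ q ∈ X ×ˢ Y, #(E.bipartiteBelow r q) :=
        sum_card_bipartiteAbove_eq_sum_card_bipartiteBelow r
    _ ≤ ∑ _q ∈ X ×ˢ Y, 4 := sum_le_sum fun q _ ↦ hE.card_middle_edges_le q.1 q.2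
    _ = 4 * (#X * #Y) := by rw [sum_const, card_product, smul_eq_mul, mul_comm]

theorem card_eq_sum_card_nbrs {E : Finset (α × β)} {X : Finset α} {Y : Finset β}
    (hXY : E ⊆ X ×ˢ Y) : #E = ∑ x ∈ X, #(nbrs E x) := by
  rw [card_eq_sum_card_fiberwise fun e he ↦ (mem_product.1 (hXY he)).1]
  exact sum_congr rfl fun x _ ↦ (card_nbrs E x).symm

/-- Beyond its first two edges, a vertex `x` of positive degree pays for each edge with a light pair
in `Y × Y`, and a light pair is used by at most two vertices. -/
theorem HexagonFree.card_le_sum_min_add_two_mul_sq {E : Finset (α × β)} (hE : HexagonFree E)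
    {X : Finset α} {Y : Finset β} (hXY : E ⊆ X ×ˢ Y) :
    #E ≤ ∑ x ∈ X, min #(nbrs E x) 2 + 2 * #Y ^ 2 := by
  let r (x : α) (q : β × β) : Prop := (x, q.1) ∈ E ∧ q.2 ∈ lightNbrs (transposeEdges E) q.1 x
  have degree_le (x : α) :
      #(nbrs E x) ≤ min #(nbrs E x) 2 + #((Y ×ˢ Y).bipartiteAbove r x) := by
    rcases le_or_gt #(nbrs E x) 2 with h | h
    · omega
    obtain ⟨y, hy⟩ : (nbrs E x).Nonempty := card_pos.1 (by omega)
    have hsub : (lightNbrs (transposeEdges E) y x).image (Prod.mk y) ⊆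
        (Y ×ˢ Y).bipartiteAbove r x := by
      intro q hq
      obtain ⟨b, hb, rfl⟩ := mem_image.1 hq
      have hxy := mem_nbrs.1 hy
      have hxb := mem_transposeEdges.1 (mem_lightNbrs.1 hb).1
      exact mem_filter.2
        ⟨mem_product.2 ⟨(mem_product.1 (hXY hxy)).2, (mem_product.1 (hXY hxb)).2⟩, hxy, hb⟩
    have hlight := hE.transpose.card_nbrs_le_card_lightNbrs_add_two y x
    rw [transposeEdges_transposeEdges] at hlight
    have hcard := card_le_card hsub
    rw [card_image_of_injective _ (Prod.mk_right_injective y)] at hcard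
    omega
  have multiplicity_le (q : β × β) : #(X.bipartiteBelow r q) ≤ 2 := by
    rcases (X.bipartiteBelow r q).eq_empty_or_nonempty with h | ⟨x, hx⟩
    · simp [h]
    refine (card_le_card fun a ha ↦ ?_).trans (mem_lightNbrs.1 (mem_filter.1 hx).2.2).2.2
    have ha' := (mem_filter.1 ha).2
    simp only [mem_inter, mem_nbrs, mem_transposeEdges]
    exact ⟨ha'.1, mem_transposeEdges.1 (mem_lightNbrs.1 ha'.2).1⟩
  calc #E = ∑ x ∈ X, #(nbrs E x) := card_eq_sum_card_nbrs hXY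
    _ ≤ ∑ x ∈ X, (min #(nbrs E x) 2 + #((Y ×ˢ Y).bipartiteAbove r x)) :=
        sum_le_sum fun x _ ↦ degree_le x
    _ = ∑ x ∈ X, min #(nbrs E x) 2 + ∑ q ∈ Y ×ˢ Y, #(X.bipartiteBelow r q) := by
        rw [sum_add_distrib, sum_card_bipartiteAbove_eq_sum_card_bipartiteBelow]
    _ ≤ ∑ x ∈ X, min #(nbrs E x) 2 + ∑ _q ∈ Y ×ˢ Y, 2 := by
        gcongr with q
        exact multiplicity_le q
    _ = ∑ x ∈ X, min #(nbrs E x) 2 + 2 * #Y ^ 2 := by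
        rw [sum_const, card_product, smul_eq_mul, mul_comm, sq]

theorem card_filter_card_nbrs_le_two {E : Finset (α × β)} {X : Finset α} {Y : Finset β}
    (hXY : E ⊆ X ×ˢ Y) : #{e ∈ E | #(nbrs E e.1) ≤ 2} ≤ 2 * #X := by
  refine card_le_mul_card_image_of_maps_to (f := Prod.fst)
    (fun e he ↦ (mem_product.1 (hXY (mem_filter.1 he).1)).1) 2 fun x _ ↦ ?_
  rw [filter_filter]
  rcases le_or_gt #(nbrs E x) 2 with h | h
  · rw [card_nbrs] at h
    exact (card_le_card (monotone_filter_right E fun e _ he ↦ he.2)).trans h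
  · refine (card_eq_zero.2 (filter_eq_empty_iff.2 ?_)).trans_le zero_le_two
    rintro e - ⟨he, rfl⟩
    exact h.not_ge he

theorem sum_inv_card_nbrs_le {E : Finset (α × β)} {X : Finset α} {Y : Finset β}
    (hXY : E ⊆ X ×ˢ Y) : ∑ e ∈ E, (#(nbrs E e.1) : ℝ)⁻¹ ≤ #X := by
  calc ∑ e ∈ E, (#(nbrs E e.1) : ℝ)⁻¹
      = ∑ x ∈ X, ∑ e ∈ E with e.1 = x, (#(nbrs E e.1) : ℝ)⁻¹ :=
        (sum_fiberwise_of_maps_to (fun e he ↦ (mem_product.1 (hXY he)).1) _).symm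
    _ = ∑ x ∈ X, (#(nbrs E x) : ℝ) * (#(nbrs E x) : ℝ)⁻¹ := by
        refine sum_congr rfl fun x _ ↦ ?_
        rw [sum_congr rfl fun e he ↦ by rw [(mem_filter.1 he).2], sum_const, nsmul_eq_mul,
          card_nbrs]
    _ ≤ ∑ _x ∈ X, (1 : ℝ) := sum_le_sum fun x _ ↦ mul_inv_le_one
    _ = #X := by rw [sum_const, nsmul_eq_mul, mul_one]

theorem HexagonFree.card_cube_le_of_three_le_degrees {E : Finset (α × β)} (hE : HexagonFree E)
    {X : Finset α} {Y : Finset β} (hXY : E ⊆ X ×ˢ Y) :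
    (#{e ∈ E | 3 ≤ #(nbrs E e.1) ∧ 3 ≤ #(nbrs (transposeEdges E) e.2)} : ℝ) ^ 3 ≤
      36 * (#X * #Y) ^ 2 := by
  set G := {e ∈ E | 3 ≤ #(nbrs E e.1) ∧ 3 ≤ #(nbrs (transposeEdges E) e.2)} with G_def
  have degree_products : ∑ e ∈ G, #(nbrs E e.1) * #(nbrs (transposeEdges E) e.2) ≤
      36 * (#X * #Y) := by
    calc ∑ e ∈ G, #(nbrs E e.1) * #(nbrs (transposeEdges E) e.2)
        ≤ ∑ e ∈ G, 9 * (#(lightNbrs E e.1 e.2) * #(lightNbrs (transposeEdges E) e.2 e.1)) := by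
          refine sum_le_sum fun e he ↦ ?_
          have h₁ := hE.card_nbrs_le_card_lightNbrs_add_two e.1 e.2
          have h₂ := hE.transpose.card_nbrs_le_card_lightNbrs_add_two e.2 e.1
          rw [transposeEdges_transposeEdges] at h₂
          have hdeg := (mem_filter.1 he).2
          calc _ ≤ (3 * #(lightNbrs (transposeEdges E) e.2 e.1)) * (3 * #(lightNbrs E e.1 e.2)) :=
                Nat.mul_le_mul (by omega) (by omega)
            _ = _ := by ring
      _ ≤ 9 * (4 * (#X * #Y)) := by
          rw [← mul_sum]
          exact Nat.mul_le_mul_left _ ((sum_le_sum_of_subset (filter_subset _ _)).trans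
            (hE.sum_card_lightNbrs_mul_le hXY))
      _ = 36 * (#X * #Y) := by ring
  have left_inv : ∑ e ∈ G, (#(nbrs E e.1) : ℝ)⁻¹ ≤ #X :=
    (sum_le_sum_of_subset_of_nonneg (filter_subset _ _) fun _ _ _ ↦ by positivity).trans
      (sum_inv_card_nbrs_le hXY)
  have right_inv : ∑ e ∈ G, (#(nbrs (transposeEdges E) e.2) : ℝ)⁻¹ ≤ #Y := by
    refine (sum_le_sum_of_subset_of_nonneg (filter_subset _ _) fun _ _ _ ↦ by positivity).trans ?_
    have := sum_inv_card_nbrs_le (transposeEdges_subset_product hXY)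
    rwa [transposeEdges, sum_map] at this
  calc (#G : ℝ) ^ 3
      ≤ #X * #Y * ∑ e ∈ G, (#(nbrs E e.1) : ℝ) * #(nbrs (transposeEdges E) e.2) :=
        card_cube_le_of_sum_inv_le
          (fun e he ↦ Nat.cast_pos.2 (by have := (mem_filter.1 he).2; omega))
          (fun e he ↦ Nat.cast_pos.2 (by have := (mem_filter.1 he).2; omega)) left_inv right_inv
    _ ≤ #X * #Y * (36 * (#X * #Y)) := by
        gcongr
        exact_mod_cast degree_products
    _ = 36 * (#X * #Y) ^ 2 := by ring

end Hexagon

theorem HexagonFree.card_le {α β : Type*} {E : Finset (α × β)} (hE : HexagonFree E)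
    {X : Finset α} {Y : Finset β} (hXY : E ⊆ X ×ˢ Y) :
    (#E : ℝ) ≤ 4 * ((#X : ℝ) * #Y) ^ (2 / 3 : ℝ) + 2 * #X + 2 * #Y := by
  classical
  set G := {e ∈ E | 3 ≤ #(nbrs E e.1) ∧ 3 ≤ #(nbrs (transposeEdges E) e.2)} with G_def
  have card_G : (#G : ℝ) ≤ 4 * ((#X : ℝ) * #Y) ^ (2 / 3 : ℝ) := by
    refine le_of_pow_le_pow_left₀ three_ne_zero (by positivity) ?_
    calc (#G : ℝ) ^ 3 ≤ 36 * ((#X : ℝ) * #Y) ^ 2 := hE.card_cube_le_of_three_le_degrees hXY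
      _ ≤ 64 * ((#X : ℝ) * #Y) ^ 2 := by gcongr; norm_num
      _ = (4 * ((#X : ℝ) * #Y) ^ (2 / 3 : ℝ)) ^ 3 := by
        rw [mul_pow 4, ← Real.rpow_mul_natCast (by positivity), ← Real.rpow_natCast _ 2]
        norm_num
  have right_sparse : #{e ∈ E | #(nbrs (transposeEdges E) e.2) ≤ 2} ≤ 2 * #Y := by
    have := card_filter_card_nbrs_le_two (transposeEdges_subset_product hXY)
    rwa [transposeEdges, filter_map, card_map] at this
  have cover : E ⊆ G ∪ {e ∈ E | #(nbrs E e.1) ≤ 2} ∪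
      {e ∈ E | #(nbrs (transposeEdges E) e.2) ≤ 2} := by
    intro e he
    simp only [G_def, mem_union, mem_filter, he, true_and]
    omega
  have : #E ≤ #G + 2 * #X + 2 * #Y := by
    grw [cover, card_union_le, card_union_le, card_filter_card_nbrs_le_two hXY, right_sparse]
  calc (#E : ℝ) ≤ #G + 2 * #X + 2 * #Y := by exact_mod_cast this
    _ ≤ _ := by grw [card_G]

/-! ### Balanced factorizations -/

section Factorization

open ArithmeticFunction (cardFactors_mul cardFactors_apply_prime cardFactors_one
  cardFactors_eq_zero_iff_eq_zero_or_one)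

theorem two_pow_cardFactors_le {n : ℕ} (hn : n ≠ 0) : 2 ^ Ω n ≤ n := by
  calc 2 ^ Ω n ≤ n.primeFactorsList.prod :=
        List.pow_card_le_prod _ 2 fun p hp ↦ (Nat.prime_of_mem_primeFactorsList hp).two_le
    _ = n := Nat.prod_primeFactorsList hn

theorem exists_dvd_cardFactors_eq {a i : ℕ} (ha : a ≠ 0) (hi : i ≤ Ω a) : ∃ d, d ∣ a ∧ Ω d = i := by
  induction i with
  | zero => exact ⟨1, one_dvd a, cardFactors_one⟩
  | succ i ih =>
    obtain ⟨d, ⟨c, rfl⟩, hd⟩ := ih (by omega)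
    obtain ⟨hd₀, hc₀⟩ := mul_ne_zero_iff.1 ha
    rw [cardFactors_mul hd₀ hc₀] at hi
    have hp := Nat.minFac_prime (n := c) (by rintro rfl; simp only [cardFactors_one] at hi; omega)
    refine ⟨d * c.minFac, mul_dvd_mul_left d c.minFac_dvd, ?_⟩
    rw [cardFactors_mul hd₀ hp.ne_zero, hd, cardFactors_apply_prime hp]

/-- Split the prime factors of `a` into three groups of nearly equal size; the largest of the three
products is at least the cube root of `a`. -/
theorem exists_dvd_le_cube_cardFactors_le {a : ℕ} (ha : a ≠ 0) :
    ∃ d, d ∣ a ∧ a ≤ d ^ 3 ∧ 3 * Ω d ≤ Ω a + 2 := by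
  set q := (Ω a + 2) / 3 with hq
  obtain ⟨d₁, ⟨c, rfl⟩, hd₁⟩ := exists_dvd_cardFactors_eq ha (min_le_right q (Ω a))
  obtain ⟨hd₁₀, hc₀⟩ := mul_ne_zero_iff.1 ha
  obtain ⟨d₂, ⟨d₃, rfl⟩, hd₂⟩ := exists_dvd_cardFactors_eq hc₀ (min_le_right q (Ω c))
  obtain ⟨hd₂₀, hd₃₀⟩ := mul_ne_zero_iff.1 hc₀
  rw [cardFactors_mul hd₁₀ hc₀] at *
  rw [cardFactors_mul hd₂₀ hd₃₀] at *
  have large_factor : d₁ * (d₂ * d₃) ≤ d₁ ^ 3 ∨ d₁ * (d₂ * d₃) ≤ d₂ ^ 3 ∨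
      d₁ * (d₂ * d₃) ≤ d₃ ^ 3 := by
    by_contra! h
    exact (Nat.mul_lt_mul'' h.1 (Nat.mul_lt_mul'' h.2.1 h.2.2)).ne (by ring)
  rcases large_factor with h | h | h
  · exact ⟨d₁, ⟨d₂ * d₃, rfl⟩, h, by omega⟩
  · exact ⟨d₂, ⟨d₁ * d₃, by ring⟩, h, by omega⟩
  · exact ⟨d₃, ⟨d₁ * d₂, by ring⟩, h, by omega⟩

/-- Take for `u` a divisor with `a ≤ u ^ 3` having as few prime factors as possible: a proper
factorization `u = p * w` then has `p ^ 3 < a` and `w ^ 3 < a`. -/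
theorem exists_balanced_factorization {a : ℕ} (ha : a ≠ 0) :
    ∃ u v, a = u * v ∧ (u.Prime ∨ u ^ 3 ≤ a ^ 2) ∧ v ^ 3 ≤ a ^ 2 ∧ 2 * Ω u ≤ Ω v + 2 := by
  obtain ⟨d, hda, had, hd⟩ := exists_dvd_le_cube_cardFactors_le ha
  obtain ⟨u, hu, u_min⟩ := exists_min_image {d ∈ a.divisors | a ≤ d ^ 3} (fun d ↦ Ω d)
    ⟨d, mem_filter.2 ⟨Nat.mem_divisors.2 ⟨hda, ha⟩, had⟩⟩
  have u_min' {w : ℕ} (hwa : w ∣ a) (hw : Ω w < Ω u) : w ^ 3 ≤ a := by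
    by_contra! h
    exact hw.not_ge (u_min w (mem_filter.2 ⟨Nat.mem_divisors.2 ⟨hwa, ha⟩, h.le⟩))
  obtain ⟨hua, hau⟩ := mem_filter.1 hu
  obtain ⟨v, huv⟩ := (Nat.mem_divisors.1 hua).1
  obtain ⟨hu₀, hv₀⟩ := mul_ne_zero_iff.1 (huv ▸ ha)
  refine ⟨u, v, huv, or_iff_not_imp_left.2 fun hu_prime ↦ ?_, ?_, ?_⟩
  · rcases eq_or_ne u 1 with rfl | hu₁
    · rw [one_pow]
      exact Nat.one_le_pow _ _ (Nat.pos_of_ne_zero ha)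
    obtain ⟨p, w, hp, hw₁, rfl⟩ : ∃ p w, p.Prime ∧ w ≠ 1 ∧ u = p * w := by
      obtain ⟨w, hw⟩ := u.minFac_dvd
      refine ⟨u.minFac, w, Nat.minFac_prime hu₁, ?_, hw⟩
      rintro rfl
      exact hu_prime (by rw [hw, mul_one]; exact Nat.minFac_prime hu₁)
    have hw₀ := (mul_ne_zero_iff.1 hu₀).2
    have hΩ := cardFactors_mul hp.ne_zero hw₀
    rw [cardFactors_apply_prime hp] at hΩ
    have hΩw : Ω w ≠ 0 := fun h ↦
      (cardFactors_eq_zero_iff_eq_zero_or_one.1 h).elim hw₀ hw₁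
    calc (p * w) ^ 3 = p ^ 3 * w ^ 3 := mul_pow p w 3
      _ ≤ a * a := Nat.mul_le_mul
          (u_min' ⟨w * v, by rw [huv, mul_assoc]⟩ (by rw [cardFactors_apply_prime hp]; omega))
          (u_min' ⟨p * v, by rw [huv]; ring⟩ (by omega))
      _ = a ^ 2 := (sq a).symm
  · refine Nat.le_of_mul_le_mul_left ?_ (Nat.pos_of_ne_zero ha)
    calc a * v ^ 3 ≤ u ^ 3 * v ^ 3 := Nat.mul_le_mul_right _ hau
      _ = a * a ^ 2 := by rw [huv]; ring
  · have hu_min := u_min d (mem_filter.2 ⟨Nat.mem_divisors.2 ⟨hda, ha⟩, had⟩)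
    have hΩ := cardFactors_mul hu₀ hv₀
    rw [← huv] at hΩ
    omega

/-- The properties of the factorizations `u * v` of numbers up to `n` that are chosen as the edges
`(u, v)` of a bipartite graph. -/
structure IsBalanced (n : ℕ) (e : ℕ × ℕ) : Prop where
  fst_pos : 0 < e.1
  snd_pos : 0 < e.2
  mul_le : e.1 * e.2 ≤ n
  prime_or_cube_le : e.1.Prime ∨ e.1 ^ 3 ≤ n ^ 2
  snd_cube_le : e.2 ^ 3 ≤ n ^ 2
  two_mul_cardFactors_le : 2 * Ω e.1 ≤ Ω e.2 + 2

theorem MulSidon3.hexagonFree {A : Finset ℕ} (hA : MulSidon3 A) {E : Finset (ℕ × ℕ)}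
    (hmem : ∀ e ∈ E, e.1 * e.2 ∈ A) (hinj : Set.InjOn (fun e : ℕ × ℕ ↦ e.1 * e.2) E) :
    HexagonFree E := by
  intro x₁ x₂ x₃ y₁ y₂ y₃ hx₁₂ hx₁₃ hx₂₃ hy₁₂ hy₁₃ hy₂₃ e₁ e₂ e₃ e₄ e₅ e₆
  refine hA ⟨x₁ * y₁, x₂ * y₂, x₃ * y₃, x₂ * y₁, x₃ * y₂, x₁ * y₃, hmem _ e₁, hmem _ e₃, hmem _ e₅,
    hmem _ e₂, hmem _ e₄, hmem _ e₆, ?_, by ring⟩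
  have edges_nodup :
      [(x₁, y₁), (x₂, y₂), (x₃, y₃), (x₂, y₁), (x₃, y₂), (x₁, y₃)].Nodup := by
    simp [*, Ne.symm hx₁₂, Ne.symm hx₁₃, Ne.symm hx₂₃, Ne.symm hy₁₂, Ne.symm hy₁₃, Ne.symm hy₂₃]
  exact edges_nodup.map_on fun e he e' he' h ↦ hinj (by grind) (by grind) h

theorem MulSidon3.exists_balanced_hexagonFree {n : ℕ} {A : Finset ℕ} (hA : MulSidon3 A)
    (hAn : A ⊆ Icc 1 n) :
    ∃ E : Finset (ℕ × ℕ), #E = #A ∧ HexagonFree E ∧ ∀ e ∈ E, IsBalanced n e := by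
  have pos_of_mem {a} (ha : a ∈ A) : a ≠ 0 := (Nat.one_le_iff_ne_zero).1 (mem_Icc.1 (hAn ha)).1
  choose! u v huv hu hv hΩ using fun a (ha : a ∈ A) ↦ exists_balanced_factorization (pos_of_mem ha)
  refine ⟨A.image fun a ↦ (u a, v a), card_image_of_injOn fun a ha b hb hab ↦ ?_,
    hA.hexagonFree ?_ ?_, ?_⟩
  · obtain ⟨hu_eq, hv_eq⟩ := Prod.mk.inj hab
    rw [huv a ha, huv b hb, hu_eq, hv_eq]
  · simpa only [forall_mem_image] using fun a ha ↦ huv a ha ▸ ha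
  · intro e he e' he' h
    obtain ⟨a, ha, rfl⟩ := mem_image.1 he
    obtain ⟨b, hb, rfl⟩ := mem_image.1 he'
    obtain rfl : a = b := (huv a ha).trans (h.trans (huv b hb).symm)
    rfl
  · simp only [forall_mem_image]
    intro a ha
    have han : a ≤ n := (mem_Icc.1 (hAn ha)).2
    have hsq : a ^ 2 ≤ n ^ 2 := Nat.pow_le_pow_left han 2
    have ⟨hu₀, hv₀⟩ := mul_ne_zero_iff.1 (huv a ha ▸ pos_of_mem ha)
    exact ⟨Nat.pos_of_ne_zero hu₀, Nat.pos_of_ne_zero hv₀, (huv a ha).symm.trans_le han,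
      (hu a ha).imp_right hsq.trans', (hv a ha).trans hsq, hΩ a ha⟩

end Factorization

/-! ### Sums of completely multiplicative functions -/

section WeightedSums

open ArithmeticFunction (vonMangoldt_nonneg vonMangoldt_sum vonMangoldt_apply_prime)
open scoped ArithmeticFunction.vonMangoldt

/-- The Dirichlet convolution `f · log = f * (Λ · f)`. -/
theorem mul_log_eq_sum_divisors_vonMangoldt (f : ℕ →*₀ ℝ) (n : ℕ) :
    f n * Real.log n = ∑ d ∈ n.divisors, f (n / d) * (Λ d * f d) := by
  rw [← vonMangoldt_sum, mul_sum]
  refine sum_congr rfl fun d hd ↦ ?_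
  rw [mul_left_comm, ← map_mul, Nat.div_mul_cancel (Nat.dvd_of_mem_divisors hd), mul_comm]

theorem sum_mul_log_eq_sum_sum_vonMangoldt (f : ℕ →*₀ ℝ) (N : ℕ) :
    ∑ n ∈ Ioc 0 N, f n * Real.log n =
      ∑ m ∈ Ioc 0 N, f m * ∑ d ∈ Ioc 0 (N / m), Λ d * f d := by
  let F : ArithmeticFunction ℝ := ⟨f, map_zero f⟩
  have := ArithmeticFunction.sum_Ioc_mul_eq_sum_sum F (ArithmeticFunction.pmul Λ F) N
  simp only [ArithmeticFunction.mul_apply, ArithmeticFunction.pmul_apply] at this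
  refine (sum_congr rfl fun n _ ↦ ?_).trans this
  rw [mul_log_eq_sum_divisors_vonMangoldt]
  exact (Nat.sum_divisorsAntidiagonal' fun a b ↦ f a * (Λ b * f b)).symm

/-- Write `log N = log n + log (N / n)` and bound the second term by `N / n`. -/
theorem log_mul_sum_le_of_sum_vonMangoldt_le {f : ℕ →*₀ ℝ} (hf : ∀ n, 0 ≤ f n) {C : ℝ}
    (hC : ∀ t : ℕ, ∑ d ∈ Ioc 0 t, Λ d * f d ≤ C * t) (N : ℕ) :
    Real.log N * ∑ n ∈ Ioc 0 N, f n ≤ (C + 1) * N * ∑ n ∈ Ioc 0 N, f n / n := by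
  have C_nonneg : 0 ≤ C := by simpa using hC 1
  have log_part : ∑ n ∈ Ioc 0 N, f n * Real.log n ≤ C * N * ∑ n ∈ Ioc 0 N, f n / n := by
    rw [sum_mul_log_eq_sum_sum_vonMangoldt, mul_sum]
    refine sum_le_sum fun m _ ↦ ?_
    calc f m * ∑ d ∈ Ioc 0 (N / m), Λ d * f d ≤ f m * (C * (N / m)) := by
          gcongr
          · exact hf m
          · exact (hC _).trans (mul_le_mul_of_nonneg_left Nat.cast_div_le C_nonneg)
      _ = C * N * (f m / m) := by ring
  have quotient_part : ∑ n ∈ Ioc 0 N, f n * Real.log (N / n) ≤ N * ∑ n ∈ Ioc 0 N, f n / n := by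
    rw [mul_sum]
    refine sum_le_sum fun n _ ↦ ?_
    calc f n * Real.log (N / n) ≤ f n * (N / n) :=
          mul_le_mul_of_nonneg_left (Real.log_le_self (by positivity)) (hf n)
      _ = N * (f n / n) := by ring
  calc Real.log N * ∑ n ∈ Ioc 0 N, f n
      = ∑ n ∈ Ioc 0 N, f n * Real.log n + ∑ n ∈ Ioc 0 N, f n * Real.log (N / n) := by
        rw [mul_sum, ← sum_add_distrib]
        refine sum_congr rfl fun n hn ↦ ?_
        have ⟨hn₀, hnN⟩ := mem_Ioc.1 hn
        rw [Real.log_div (by norm_cast; omega) (by norm_cast; omega)]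
        ring
    _ ≤ C * N * ∑ n ∈ Ioc 0 N, f n / n + N * ∑ n ∈ Ioc 0 N, f n / n :=
        add_le_add log_part quotient_part
    _ = (C + 1) * N * ∑ n ∈ Ioc 0 N, f n / n := by ring

theorem sum_Ioc_le_prod_primesBelow {f : ℕ →*₀ ℝ} (hf : ∀ n, 0 ≤ f n)
    (hf_lt : ∀ {p : ℕ}, p.Prime → f p < 1) (N : ℕ) :
    ∑ n ∈ Ioc 0 N, f n ≤ ∏ p ∈ (N + 1).primesBelow, (1 - f p)⁻¹ := by
  have euler := (EulerProduct.summable_and_hasSum_smoothNumbers_prod_primesBelow_geometric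
    (f := (f : ℕ →* ℝ)) (fun hp ↦ by simpa [abs_of_nonneg (hf _)] using hf_lt hp) (N + 1)).2
  have hasSum_indicator := hasSum_subtype_iff_indicator.1 euler
  calc ∑ n ∈ Ioc 0 N, f n = ∑ n ∈ Ioc 0 N, (N + 1).smoothNumbers.indicator f n := by
        refine sum_congr rfl fun n hn ↦ (Set.indicator_of_mem ?_ _).symm
        have ⟨hn₀, hnN⟩ := mem_Ioc.1 hn
        exact Nat.mem_smoothNumbers_of_lt hn₀ (Nat.lt_succ_of_le hnN)
    _ ≤ _ := sum_le_hasSum _ (fun n _ ↦ Set.indicator_nonneg (fun n _ ↦ hf n) n) hasSum_indicator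

/-- The completely multiplicative function `n ↦ z ^ Ω n / n ^ s`. -/
noncomputable def omegaTwist (z s : ℝ) : ℕ →*₀ ℝ where
  toFun n := if n = 0 then 0 else z ^ Ω n * (n : ℝ) ^ (-s)
  map_zero' := if_pos rfl
  map_one' := by simp
  map_mul' m n := by
    rcases eq_or_ne m 0 with rfl | hm
    · simp
    rcases eq_or_ne n 0 with rfl | hn
    · simp
    rw [if_neg hm, if_neg hn, if_neg (mul_ne_zero hm hn), ArithmeticFunction.cardFactors_mul hm hn,
      Nat.cast_mul, Real.mul_rpow (by positivity) (by positivity)]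
    ring

theorem omegaTwist_apply {z s : ℝ} {n : ℕ} (hn : n ≠ 0) :
    omegaTwist z s n = z ^ Ω n * (n : ℝ) ^ (-s) := if_neg hn

theorem omegaTwist_zero_right_apply {z : ℝ} {n : ℕ} (hn : n ≠ 0) : omegaTwist z 0 n = z ^ Ω n := by
  rw [omegaTwist_apply hn, neg_zero, Real.rpow_zero, mul_one]

theorem omegaTwist_prime {z s : ℝ} {p : ℕ} (hp : p.Prime) :
    omegaTwist z s p = z * (p : ℝ) ^ (-s) := by
  rw [omegaTwist_apply hp.ne_zero, ArithmeticFunction.cardFactors_apply_prime hp, pow_one]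

theorem omegaTwist_nonneg {z : ℝ} (hz : 0 ≤ z) (s : ℝ) (n : ℕ) : 0 ≤ omegaTwist z s n := by
  rcases eq_or_ne n 0 with rfl | hn
  · rw [map_zero]
  · rw [omegaTwist_apply hn]
    positivity

theorem rpow_neg_le_half {x s : ℝ} (hx : 2 ≤ x) (hs : 1 ≤ s) : x ^ (-s) ≤ 1 / 2 := by
  calc x ^ (-s) ≤ x ^ (-1 : ℝ) := Real.rpow_le_rpow_of_exponent_le (by linarith) (by linarith)
    _ ≤ 1 / 2 := by
        rw [Real.rpow_neg_one, ← one_div]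
        gcongr

/-- Both sides are `exp (z * t + O(t ^ 2))`. -/
theorem inv_one_sub_mul_le {z t : ℝ} (hz : 0 ≤ z) (hz₂ : z < 2) (ht : t ≤ 1 / 2) :
    (1 - z * t)⁻¹ ≤ (1 - t)⁻¹ ^ z * Real.exp (z ^ 2 / (1 - z / 2) * t ^ 2) := by
  have hz_half : 0 < 1 - z / 2 := by linarith
  have hzt_half : 1 - z / 2 ≤ 1 - z * t := by linarith [mul_le_mul_of_nonneg_left ht hz]
  have hzt : 0 < 1 - z * t := by linarith
  have ht₁ : 0 < 1 - t := by linarith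
  have exp_le : Real.exp (z * t) ≤ (1 - t)⁻¹ ^ z := by
    rw [mul_comm, Real.exp_mul]
    gcongr
    rw [← inv_inv (Real.exp t), ← Real.exp_neg]
    exact inv_anti₀ ht₁ (by linarith [Real.add_one_le_exp (-t)])
  calc (1 - z * t)⁻¹ = Real.exp (Real.log (1 - z * t)⁻¹) := (Real.exp_log (by positivity)).symm
    _ ≤ Real.exp ((1 - z * t)⁻¹ - 1) :=
        Real.exp_le_exp.2 (Real.log_le_sub_one_of_pos (by positivity))
    _ = Real.exp (z * t) * Real.exp (z ^ 2 / (1 - z * t) * t ^ 2) := by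
        rw [← Real.exp_add]
        congr 1
        field_simp
        ring
    _ ≤ (1 - t)⁻¹ ^ z * Real.exp (z ^ 2 / (1 - z / 2) * t ^ 2) := by gcongr

theorem tsum_rpow_neg_le {s : ℝ} (hs : 1 < s) : ∑' n : ℕ, (n : ℝ) ^ (-s) ≤ 1 + 1 / (s - 1) := by
  have summable : Summable fun n : ℕ ↦ (n : ℝ) ^ (-s) := Real.summable_nat_rpow.2 (by linarith)
  have shifted : ∑' n : ℕ, (n : ℝ) ^ (-s) = ∑' n : ℕ, 1 / (n + 1 : ℝ) ^ s := by
    rw [summable.tsum_eq_zero_add, Nat.cast_zero, Real.zero_rpow (by linarith), zero_add]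
    exact tsum_congr fun n ↦ by rw [Real.rpow_neg (by positivity), one_div, Nat.cast_add_one]
  have remainder_nonneg : 0 ≤ s * ZetaAsymptotics.termTSum s :=
    mul_nonneg (by linarith) (tsum_nonneg fun n ↦ ZetaAsymptotics.term_nonneg _ s)
  linarith [ZetaAsymptotics.zeta_limit_aux1 hs]

theorem prod_primesBelow_inv_one_sub_rpow_le {s : ℝ} (hs : 1 < s) (N : ℕ) :
    ∏ p ∈ N.primesBelow, (1 - (p : ℝ) ^ (-s))⁻¹ ≤ 1 + 1 / (s - 1) := by
  have twist_one : ⇑(omegaTwist 1 s) = fun n : ℕ ↦ (n : ℝ) ^ (-s) := by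
    funext n
    rcases eq_or_ne n 0 with rfl | hn
    · rw [map_zero, Nat.cast_zero, Real.zero_rpow (by linarith)]
    · rw [omegaTwist_apply hn, one_pow, one_mul]
  have summable : Summable (omegaTwist 1 s) := by
    rw [twist_one]
    exact Real.summable_nat_rpow.2 (by linarith)
  have euler := EulerProduct.prod_primesBelow_geometric_eq_tsum_smoothNumbers
    (f := (omegaTwist 1 s : ℕ →* ℝ)) summable N
  calc ∏ p ∈ N.primesBelow, (1 - (p : ℝ) ^ (-s))⁻¹
      = ∏ p ∈ N.primesBelow, (1 - omegaTwist 1 s p)⁻¹ := by rw [twist_one]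
    _ = ∑' m : N.smoothNumbers, omegaTwist 1 s m := euler
    _ ≤ ∑' n : ℕ, omegaTwist 1 s n :=
        summable.tsum_subtype_le _ _ (omegaTwist_nonneg zero_le_one s)
    _ ≤ 1 + 1 / (s - 1) := by
        rw [twist_one]
        exact tsum_rpow_neg_le hs

theorem sum_primesBelow_rpow_neg_sq_le {s : ℝ} (hs : 1 ≤ s) (N : ℕ) :
    ∑ p ∈ N.primesBelow, ((p : ℝ) ^ (-s)) ^ 2 ≤ 2 := by
  calc ∑ p ∈ N.primesBelow, ((p : ℝ) ^ (-s)) ^ 2 ≤ ∑ p ∈ N.primesBelow, (p : ℝ) ^ (-2 : ℝ) := by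
        refine sum_le_sum fun p hp ↦ ?_
        have hp₁ : (1 : ℝ) ≤ p := by exact_mod_cast (Nat.prime_of_mem_primesBelow hp).one_le
        rw [← Real.rpow_mul_natCast (by positivity)]
        exact Real.rpow_le_rpow_of_exponent_le hp₁ (by push_cast; linarith)
    _ ≤ ∑' n : ℕ, (n : ℝ) ^ (-2 : ℝ) :=
        (Real.summable_nat_rpow.2 (by norm_num)).sum_le_tsum _ fun n _ ↦ by positivity
    _ ≤ 1 + 1 / (2 - 1) := tsum_rpow_neg_le one_lt_two
    _ = 2 := by norm_num

theorem sum_omegaTwist_le {z s : ℝ} (hz : 0 ≤ z) (hz₂ : z < 2) (hs : 1 < s) (N : ℕ) :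
    ∑ n ∈ Ioc 0 N, omegaTwist z s n ≤
      (1 + 1 / (s - 1)) ^ z * Real.exp (z ^ 2 / (1 - z / 2) * 2) := by
  have hz_half : 0 < 1 - z / 2 := by linarith
  have prime_bound {p : ℕ} (hp : p.Prime) : (p : ℝ) ^ (-s) ≤ 1 / 2 :=
    rpow_neg_le_half (by exact_mod_cast hp.two_le) hs.le
  have twist_lt_one {p : ℕ} (hp : p.Prime) : omegaTwist z s p < 1 := by
    rw [omegaTwist_prime hp]
    have := mul_le_mul_of_nonneg_left (prime_bound hp) hz
    linarith
  have factor_nonneg : ∀ p ∈ (N + 1).primesBelow, 0 ≤ (1 - (p : ℝ) ^ (-s))⁻¹ := fun p hp ↦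
    inv_nonneg.2 (by linarith [prime_bound (Nat.prime_of_mem_primesBelow hp)])
  calc ∑ n ∈ Ioc 0 N, omegaTwist z s n
      ≤ ∏ p ∈ (N + 1).primesBelow, (1 - omegaTwist z s p)⁻¹ :=
        sum_Ioc_le_prod_primesBelow (omegaTwist_nonneg hz s) twist_lt_one N
    _ ≤ ∏ p ∈ (N + 1).primesBelow, ((1 - (p : ℝ) ^ (-s))⁻¹ ^ z *
          Real.exp (z ^ 2 / (1 - z / 2) * ((p : ℝ) ^ (-s)) ^ 2)) := by
        refine prod_le_prod (fun p hp ↦ ?_) fun p hp ↦ ?_ <;>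
          have hp := Nat.prime_of_mem_primesBelow hp
        · exact inv_nonneg.2 (sub_nonneg.2 (twist_lt_one hp).le)
        · rw [omegaTwist_prime hp]
          exact inv_one_sub_mul_le hz hz₂ (prime_bound hp)
    _ = (∏ p ∈ (N + 1).primesBelow, (1 - (p : ℝ) ^ (-s))⁻¹) ^ z *
          Real.exp (z ^ 2 / (1 - z / 2) * ∑ p ∈ (N + 1).primesBelow, ((p : ℝ) ^ (-s)) ^ 2) := by
        rw [prod_mul_distrib, Real.finsetProd_rpow _ _ factor_nonneg, mul_sum, Real.exp_sum]
    _ ≤ (1 + 1 / (s - 1)) ^ z * Real.exp (z ^ 2 / (1 - z / 2) * 2) := by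
        gcongr
        · exact prod_nonneg factor_nonneg
        · exact prod_primesBelow_inv_one_sub_rpow_le hs (N + 1)
        · exact sum_primesBelow_rpow_neg_sq_le hs.le (N + 1)

/-- Rankin's trick: `n ^ (1 / log N) ≤ e` for `n ≤ N`. -/
theorem div_le_exp_one_mul_omegaTwist {z : ℝ} (hz : 0 ≤ z) {n N : ℕ} (hn : n ≠ 0) (hnN : n ≤ N)
    (hN : 1 < N) :
    omegaTwist z 0 n / n ≤ Real.exp 1 * omegaTwist z (1 + 1 / Real.log N) n := by
  have hn' : (0 : ℝ) < n := by exact_mod_cast Nat.pos_of_ne_zero hn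
  have log_pos : 0 < Real.log N := Real.log_pos (by exact_mod_cast hN)
  have rpow_le : (n : ℝ) ^ (1 / Real.log N) ≤ Real.exp 1 := by
    rw [Real.rpow_def_of_pos hn', mul_one_div]
    gcongr
    rw [div_le_one log_pos]
    exact Real.log_le_log hn' (by exact_mod_cast hnN)
  calc omegaTwist z 0 n / n
      = (n : ℝ) ^ (1 / Real.log N) * (z ^ Ω n * (n : ℝ) ^ (-(1 + 1 / Real.log N))) := by
        rw [omegaTwist_zero_right_apply hn, mul_left_comm, ← Real.rpow_add hn', div_eq_mul_inv,
          ← Real.rpow_neg_one]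
        ring_nf
    _ ≤ Real.exp 1 * omegaTwist z (1 + 1 / Real.log N) n := by
        rw [omegaTwist_apply hn]
        gcongr

theorem exists_sum_omegaTwist_div_le {z : ℝ} (hz : 0 ≤ z) (hz₂ : z < 2) :
    ∃ C : ℝ, 0 < C ∧ ∀ N : ℕ, 2 ≤ N →
      ∑ n ∈ Ioc 0 N, omegaTwist z 0 n / n ≤ C * Real.log N ^ z := by
  refine ⟨Real.exp 1 * 3 ^ z * Real.exp (z ^ 2 / (1 - z / 2) * 2), by positivity, fun N hN ↦ ?_⟩
  have log_ge : 1 / 2 ≤ Real.log N :=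
    (by linarith [Real.log_two_gt_d9] : 1 / 2 ≤ Real.log 2).trans
      (Real.log_le_log two_pos (by exact_mod_cast hN))
  have log_pos : 0 < Real.log N := by linarith
  calc ∑ n ∈ Ioc 0 N, omegaTwist z 0 n / n
      ≤ Real.exp 1 * ∑ n ∈ Ioc 0 N, omegaTwist z (1 + 1 / Real.log N) n := by
        rw [mul_sum]
        refine sum_le_sum fun n hn ↦ ?_
        have ⟨hn₀, hnN⟩ := mem_Ioc.1 hn
        exact div_le_exp_one_mul_omegaTwist hz hn₀.ne' hnN hN
    _ ≤ Real.exp 1 * ((1 + 1 / (1 + 1 / Real.log N - 1)) ^ z *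
          Real.exp (z ^ 2 / (1 - z / 2) * 2)) := by
        gcongr
        exact sum_omegaTwist_le hz hz₂ (lt_add_of_pos_right 1 (by positivity)) N
    _ ≤ Real.exp 1 * ((3 * Real.log N) ^ z * Real.exp (z ^ 2 / (1 - z / 2) * 2)) := by
        rw [add_sub_cancel_left, one_div_one_div]
        gcongr
        linarith
    _ = Real.exp 1 * 3 ^ z * Real.exp (z ^ 2 / (1 - z / 2) * 2) * Real.log N ^ z := by
        rw [Real.mul_rpow three_pos.le log_pos.le]
        ring

theorem pow_cardFactors_le_sqrt {z : ℝ} (hz : z ^ 2 ≤ 2) {n : ℕ} (hn : n ≠ 0) :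
    z ^ Ω n ≤ √n := by
  refine Real.le_sqrt_of_sq_le ?_
  calc (z ^ Ω n) ^ 2 = (z ^ 2) ^ Ω n := pow_right_comm z _ 2
    _ ≤ 2 ^ Ω n := by gcongr
    _ ≤ n := by exact_mod_cast two_pow_cardFactors_le hn

theorem exists_sum_vonMangoldt_mul_omegaTwist_le {z : ℝ} (hz : 0 ≤ z) (hz₂ : z ^ 2 ≤ 2) :
    ∃ C : ℝ, 0 < C ∧ ∀ t : ℕ, ∑ d ∈ Ioc 0 t, Λ d * omegaTwist z 0 d ≤ C * t := by
  obtain ⟨C, hC⟩ := Chebyshev.psi_sub_theta_le_mul_sqrt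
  refine ⟨z * Real.log 4 + |C| + 1, by positivity, fun t ↦ ?_⟩
  have prime_part : ∑ d ∈ Ioc 0 t with d.Prime, Λ d * omegaTwist z 0 d ≤ z * Real.log 4 * t := by
    calc ∑ d ∈ Ioc 0 t with d.Prime, Λ d * omegaTwist z 0 d = z * Chebyshev.theta t := by
          rw [Chebyshev.theta, Nat.floor_natCast, mul_sum]
          refine sum_congr rfl fun p hp ↦ ?_
          rw [vonMangoldt_apply_prime (mem_filter.1 hp).2, omegaTwist_prime (mem_filter.1 hp).2,
            neg_zero, Real.rpow_zero, mul_one, mul_comm]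
      _ ≤ z * (Real.log 4 * t) := by
          gcongr
          exact Chebyshev.theta_le_log4_mul_x (Nat.cast_nonneg t)
      _ = z * Real.log 4 * t := by ring
  have nonprime_part : ∑ d ∈ Ioc 0 t with ¬ d.Prime, Λ d * omegaTwist z 0 d ≤ |C| * t := by
    calc ∑ d ∈ Ioc 0 t with ¬ d.Prime, Λ d * omegaTwist z 0 d
        ≤ ∑ d ∈ Ioc 0 t with ¬ d.Prime, Λ d * √t := by
          refine sum_le_sum fun d hd ↦ ?_
          obtain ⟨hd₀, hdt⟩ := mem_Ioc.1 (mem_filter.1 hd).1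
          rw [omegaTwist_zero_right_apply hd₀.ne']
          refine mul_le_mul_of_nonneg_left ?_ vonMangoldt_nonneg
          exact (pow_cardFactors_le_sqrt hz₂ hd₀.ne').trans (by gcongr)
      _ = (Chebyshev.psi t - Chebyshev.theta t) * √t := by
          rw [← sum_mul, Chebyshev.psi_sub_theta_eq_sum_not_prime, Nat.floor_natCast]
      _ ≤ (|C| * √t) * √t := by
          gcongr
          exact (hC t).trans (by gcongr; exact le_abs_self C)
      _ = |C| * t := by rw [mul_assoc, Real.mul_self_sqrt (Nat.cast_nonneg t)]
  calc ∑ d ∈ Ioc 0 t, Λ d * omegaTwist z 0 d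
      ≤ z * Real.log 4 * t + |C| * t := by
        rw [← sum_filter_add_sum_filter_not (Ioc 0 t) Nat.Prime]
        exact add_le_add prime_part nonprime_part
    _ ≤ (z * Real.log 4 + |C| + 1) * t := by
        linarith [Nat.cast_nonneg (α := ℝ) t]

theorem exists_sum_pow_cardFactors_le {z : ℝ} (hz : 0 ≤ z) (hz₂ : z ^ 2 ≤ 2) :
    ∃ C : ℝ, 0 < C ∧ ∀ N : ℕ, 2 ≤ N →
      ∑ n ∈ Ioc 0 N, z ^ Ω n ≤ C * N * Real.log N ^ (z - 1) := by
  obtain ⟨C, hC₀, hC⟩ := exists_sum_omegaTwist_div_le hz (by nlinarith)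
  obtain ⟨D, hD₀, hD⟩ := exists_sum_vonMangoldt_mul_omegaTwist_le hz hz₂
  refine ⟨(D + 1) * C, by positivity, fun N hN ↦ ?_⟩
  have log_pos : 0 < Real.log N := Real.log_pos (by exact_mod_cast hN)
  rw [Real.rpow_sub_one log_pos.ne', mul_div_assoc', le_div_iff₀ log_pos]
  calc (∑ n ∈ Ioc 0 N, z ^ Ω n) * Real.log N
      = Real.log N * ∑ n ∈ Ioc 0 N, omegaTwist z 0 n := by
        rw [mul_comm]
        congr 1
        exact sum_congr rfl fun n hn ↦ (omegaTwist_zero_right_apply (mem_Ioc.1 hn).1.ne').symm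
    _ ≤ (D + 1) * N * ∑ n ∈ Ioc 0 N, omegaTwist z 0 n / n :=
        log_mul_sum_le_of_sum_vonMangoldt_le (omegaTwist_nonneg hz 0) hD N
    _ ≤ (D + 1) * N * (C * Real.log N ^ z) := by
        gcongr
        exact hC N hN
    _ = (D + 1) * C * N * Real.log N ^ z := by ring

end WeightedSums

/-! ### Edges in a block -/

theorem card_mul_pow_le_sum_pow_cardFactors {z : ℝ} (hz : 0 ≤ z) (hz₁ : z ≤ 1) {X : Finset ℕ}
    {N j : ℕ} (hX : X ⊆ Ioc 0 N) (hΩ : ∀ u ∈ X, Ω u ≤ j) :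
    #X * z ^ j ≤ ∑ n ∈ Ioc 0 N, z ^ Ω n := by
  calc #X * z ^ j = ∑ _u ∈ X, z ^ j := by rw [sum_const, nsmul_eq_mul]
    _ ≤ ∑ u ∈ X, z ^ Ω u := sum_le_sum fun u hu ↦ pow_le_pow_of_le_one hz hz₁ (hΩ u hu)
    _ ≤ ∑ n ∈ Ioc 0 N, z ^ Ω n := sum_le_sum_of_subset_of_nonneg hX fun _ _ _ ↦ by positivity

theorem card_mul_pow_le_mul_sum_pow_cardFactors {y : ℝ} (hy : 1 ≤ y) {Y : Finset ℕ}
    {N k m : ℕ} (hY : Y ⊆ Ioc 0 N) (hΩ : ∀ v ∈ Y, k ≤ Ω v + m) :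
    #Y * y ^ k ≤ y ^ m * ∑ n ∈ Ioc 0 N, y ^ Ω n := by
  calc #Y * y ^ k = ∑ _v ∈ Y, y ^ k := by rw [sum_const, nsmul_eq_mul]
    _ ≤ ∑ v ∈ Y, y ^ (Ω v + m) := sum_le_sum fun v hv ↦ pow_le_pow_right₀ hy (hΩ v hv)
    _ ≤ ∑ n ∈ Ioc 0 N, y ^ (Ω n + m) := sum_le_sum_of_subset_of_nonneg hY fun _ _ _ ↦ by positivity
    _ = y ^ m * ∑ n ∈ Ioc 0 N, y ^ Ω n := by
        rw [mul_sum]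
        exact sum_congr rfl fun n _ ↦ by rw [pow_add, mul_comm]

/-- `log N` agrees with `l` up to a factor of three, so that powers of `log N` may be replaced by
powers of `l`, uniformly over a range of `N`. -/
def LogComparable (l : ℝ) (N : ℕ) : Prop := l ≤ 3 * Real.log N ∧ Real.log N ≤ 3 * l

theorem LogComparable.log_rpow_le {l : ℝ} {N : ℕ} (h : LogComparable l N) (hl : 0 < l) {a : ℝ}
    (ha : |a| ≤ 1) : Real.log N ^ a ≤ 3 * l ^ a := by
  obtain ⟨ha₁, ha₂⟩ := abs_le.1 ha
  have log_pos : 0 < Real.log N := by linarith [h.1]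
  rcases le_total 0 a with ha₀ | ha₀
  · calc Real.log N ^ a ≤ (3 * l) ^ a := by gcongr; exact h.2
      _ = 3 ^ a * l ^ a := Real.mul_rpow three_pos.le hl.le
      _ ≤ 3 ^ (1 : ℝ) * l ^ a := by gcongr; norm_num
      _ = 3 * l ^ a := by rw [Real.rpow_one]
  · calc Real.log N ^ a ≤ (3⁻¹ * l) ^ a :=
          Real.rpow_le_rpow_of_nonpos (by positivity) (by linarith [h.1]) ha₀
      _ = 3 ^ (-a) * l ^ a := by
          rw [Real.mul_rpow (by positivity) hl.le, Real.inv_rpow three_pos.le,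
            Real.rpow_neg three_pos.le]
      _ ≤ 3 ^ (1 : ℝ) * l ^ a := by gcongr <;> linarith
      _ = 3 * l ^ a := by rw [Real.rpow_one]

theorem exists_sum_pow_cardFactors_le_of_logComparable {z : ℝ} (hz : 0 ≤ z) (hz₂ : z ^ 2 ≤ 2) :
    ∃ C : ℝ, 0 < C ∧ ∀ (N : ℕ) (l : ℝ), 0 < l → LogComparable l N →
      ∑ n ∈ Ioc 0 N, z ^ Ω n ≤ C * N * l ^ (z - 1) := by
  obtain ⟨C, hC₀, hC⟩ := exists_sum_pow_cardFactors_le hz hz₂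
  refine ⟨C * 3, by positivity, fun N l hl hN ↦ ?_⟩
  have hN₂ : 2 ≤ N := by
    by_contra! h
    have : Real.log N = 0 := by interval_cases N <;> simp
    linarith [hN.1]
  calc ∑ n ∈ Ioc 0 N, z ^ Ω n ≤ C * N * Real.log N ^ (z - 1) := hC N hN₂
    _ ≤ C * N * (3 * l ^ (z - 1)) := by
        gcongr
        exact hN.log_rpow_le hl (abs_le.2 ⟨by linarith, by nlinarith⟩)
    _ = C * 3 * N * l ^ (z - 1) := by ring

section Block

variable {y : ℝ}

/-- The weights `y⁻² ^ Ω u` and `y ^ Ω v` cancel because `Ω u ≤ j` while `Ω v` is about `2 * j`;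
once `y ^ (2 * j)` exceeds `l`, no condition on `u` is needed. -/
theorem exists_card_mul_card_le (hy : 1 ≤ y) (hy₂ : y ^ 2 ≤ 2) :
    ∃ C : ℝ, 0 < C ∧ ∀ (X Y : Finset ℕ) (W V j : ℕ) (l : ℝ), 1 ≤ l → LogComparable l W →
      LogComparable l V → X ⊆ Ioc 0 W → Y ⊆ Ioc 0 V → (∀ v ∈ Y, 2 * j ≤ Ω v + 2) →
      ((∀ u ∈ X, Ω u ≤ j) ∨ l ≤ y ^ (2 * j)) →
      (#X : ℝ) * #Y ≤ C * (W * V * l ^ (y + (y ^ 2)⁻¹ - 2)) := by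
  have inv_le_one : (y ^ 2)⁻¹ ≤ 1 := inv_le_one_of_one_le₀ (one_le_pow₀ hy)
  have inv_nonneg : 0 ≤ (y ^ 2)⁻¹ := by positivity
  obtain ⟨C, hC₀, hC⟩ := exists_sum_pow_cardFactors_le_of_logComparable (z := y) (by linarith) hy₂
  obtain ⟨D, hD₀, hD⟩ := exists_sum_pow_cardFactors_le_of_logComparable inv_nonneg
    (by nlinarith : ((y ^ 2)⁻¹) ^ 2 ≤ 2)
  refine ⟨(D + 1) * (y ^ 2 * C), by positivity, fun X Y W V j l hl hW hV hX hY hΩY hcase ↦ ?_⟩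
  have hl₀ : 0 < l := by linarith
  have hYcard : #Y * y ^ (2 * j) ≤ y ^ 2 * (C * V * l ^ (y - 1)) :=
    (card_mul_pow_le_mul_sum_pow_cardFactors hy hY hΩY).trans (by gcongr; exact hC V l hl₀ hV)
  rcases hcase with hΩX | hlj
  · have hXcard : #X * ((y ^ 2)⁻¹) ^ j ≤ D * W * l ^ ((y ^ 2)⁻¹ - 1) :=
      (card_mul_pow_le_sum_pow_cardFactors inv_nonneg inv_le_one hX hΩX).trans (hD W l hl₀ hW)
    calc (#X : ℝ) * #Y = (#X * ((y ^ 2)⁻¹) ^ j) * (#Y * y ^ (2 * j)) := by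
          rw [inv_pow, pow_mul]
          field_simp
      _ ≤ (D * W * l ^ ((y ^ 2)⁻¹ - 1)) * (y ^ 2 * (C * V * l ^ (y - 1))) := by gcongr
      _ = D * (y ^ 2 * C) * (W * V * (l ^ ((y ^ 2)⁻¹ - 1) * l ^ (y - 1))) := by ring
      _ = D * (y ^ 2 * C) * (W * V * l ^ (y + (y ^ 2)⁻¹ - 2)) := by
          rw [← Real.rpow_add hl₀]
          ring_nf
      _ ≤ (D + 1) * (y ^ 2 * C) * (W * V * l ^ (y + (y ^ 2)⁻¹ - 2)) := by gcongr; linarith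
  · have hXcard : (#X : ℝ) ≤ W := by exact_mod_cast (card_le_card hX).trans_eq (by simp)
    have hYl : #Y * l ≤ y ^ 2 * (C * V * l ^ (y - 1)) := (by gcongr : _ ≤ _).trans hYcard
    calc (#X : ℝ) * #Y ≤ W * (y ^ 2 * (C * V * l ^ (y - 1)) / l) := by
          gcongr
          exact (le_div_iff₀ hl₀).2 hYl
      _ = y ^ 2 * C * (W * V * l ^ (y - 2)) := by
          rw [show y - 2 = y - 1 - 1 by ring, Real.rpow_sub_one hl₀.ne' (y - 1)]
          ring
      _ ≤ (D + 1) * (y ^ 2 * C) * (W * V * l ^ (y + (y ^ 2)⁻¹ - 2)) := by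
          gcongr ?_ * (_ * _ * _ ^ ?_)
          · exact le_mul_of_one_le_left (by positivity) (by linarith)
          · linarith

theorem exists_card_class_le (hy : 1 ≤ y) (hy₂ : y ^ 2 ≤ 2) :
    ∃ C : ℝ, 0 < C ∧ ∀ (E : Finset (ℕ × ℕ)) (W V j : ℕ) (l : ℝ), HexagonFree E → 1 ≤ l →
      LogComparable l W → LogComparable l V → E ⊆ Ioc 0 W ×ˢ Ioc 0 V →
      (∀ e ∈ E, 2 * j ≤ Ω e.2 + 2) → ((∀ e ∈ E, Ω e.1 ≤ j) ∨ l ≤ y ^ (2 * j)) →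
      (#E : ℝ) ≤ C * ((W * V : ℝ) ^ (2 / 3 : ℝ) * l ^ (2 / 3 * (y + (y ^ 2)⁻¹ - 2)) + W + V) := by
  obtain ⟨C, hC₀, hC⟩ := exists_card_mul_card_le hy hy₂
  refine ⟨4 * C ^ (2 / 3 : ℝ) + 2, by positivity,
    fun E W V j l hE hl hW hV hEWV hΩ₂ hcase ↦ ?_⟩
  have hX : E.image Prod.fst ⊆ Ioc 0 W :=
    image_subset_iff.2 fun e he ↦ (mem_product.1 (hEWV he)).1
  have hY : E.image Prod.snd ⊆ Ioc 0 V :=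
    image_subset_iff.2 fun e he ↦ (mem_product.1 (hEWV he)).2
  have hXcard : (#(E.image Prod.fst) : ℝ) ≤ W := by
    exact_mod_cast (card_le_card hX).trans_eq (by simp)
  have hYcard : (#(E.image Prod.snd) : ℝ) ≤ V := by
    exact_mod_cast (card_le_card hY).trans_eq (by simp)
  have hprod := hC _ _ W V j l hl hW hV hX hY (by simpa only [forall_mem_image] using hΩ₂)
    (by simpa only [forall_mem_image] using hcase)
  have main_nonneg : 0 ≤ (W * V : ℝ) ^ (2 / 3 : ℝ) * l ^ (2 / 3 * (y + (y ^ 2)⁻¹ - 2)) := by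
    positivity
  calc (#E : ℝ) ≤ 4 * ((#(E.image Prod.fst) : ℝ) * #(E.image Prod.snd)) ^ (2 / 3 : ℝ) +
          2 * #(E.image Prod.fst) + 2 * #(E.image Prod.snd) := hE.card_le subset_product
    _ ≤ 4 * (C * (W * V * l ^ (y + (y ^ 2)⁻¹ - 2))) ^ (2 / 3 : ℝ) + 2 * W + 2 * V := by gcongr
    _ = 4 * C ^ (2 / 3 : ℝ) *
          ((W * V : ℝ) ^ (2 / 3 : ℝ) * l ^ (2 / 3 * (y + (y ^ 2)⁻¹ - 2))) + 2 * W + 2 * V := by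
        rw [Real.mul_rpow hC₀.le (by positivity), Real.mul_rpow (by positivity) (by positivity),
          ← Real.rpow_mul (by positivity), mul_comm (2 / 3 : ℝ) (_ - _)]
        ring
    _ ≤ _ := by
        have : 0 ≤ C ^ (2 / 3 : ℝ) * (W + V : ℝ) := by positivity
        linarith

/-- Split the edges `(u, v)` according to `Ω u`, all values with `y ^ (2 * Ω u) ≥ l` forming a
single class. -/
theorem exists_card_block_le (hy : 1 < y) (hy₂ : y ^ 2 ≤ 2) :
    ∃ C : ℝ, 0 < C ∧ ∀ (E : Finset (ℕ × ℕ)) (W V : ℕ) (l : ℝ), HexagonFree E → Real.exp 1 ≤ l →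
      LogComparable l W → LogComparable l V → E ⊆ Ioc 0 W ×ˢ Ioc 0 V →
      (∀ e ∈ E, 2 * Ω e.1 ≤ Ω e.2 + 2) →
      (#E : ℝ) ≤ C * Real.log l *
        ((W * V : ℝ) ^ (2 / 3 : ℝ) * l ^ (2 / 3 * (y + (y ^ 2)⁻¹ - 2)) + W + V) := by
  obtain ⟨C, hC₀, hC⟩ := exists_card_class_le hy.le hy₂
  have log_y_pos : 0 < Real.log (y ^ 2) := Real.log_pos (one_lt_pow₀ hy two_ne_zero)
  refine ⟨((Real.log (y ^ 2))⁻¹ + 2) * C, by positivity, fun E W V l hE hl hW hV hEWV hΩ ↦ ?_⟩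
  have hl₀ : 0 < l := (Real.exp_pos 1).trans_le hl
  have hl₁ : 1 ≤ l := (Real.one_le_exp zero_le_one).trans hl
  have one_le_log : 1 ≤ Real.log l := (Real.le_log_iff_exp_le hl₀).2 hl
  set B := C * ((W * V : ℝ) ^ (2 / 3 : ℝ) * l ^ (2 / 3 * (y + (y ^ 2)⁻¹ - 2)) + W + V) with hB
  set m := ⌈Real.log l / Real.log (y ^ 2)⌉₊
  have hlm : l ≤ y ^ (2 * m) := by
    rw [pow_mul, ← Real.log_le_log_iff hl₀ (by positivity), Real.log_pow]
    exact (div_le_iff₀ log_y_pos).1 (Nat.le_ceil _)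
  have class_le (j) (hj : j ∈ range (m + 1)) : (#{e ∈ E | min (Ω e.1) m = j} : ℝ) ≤ B := by
    refine hC _ W V j l (hE.mono (filter_subset _ _)) hl₁ hW hV ((filter_subset _ _).trans hEWV)
      (fun e he ↦ ?_) ?_
    · have := hΩ e (mem_filter.1 he).1
      have := (mem_filter.1 he).2
      omega
    · rcases (Nat.lt_succ_iff.1 (mem_range.1 hj)).lt_or_eq with hjm | rfl
      · exact Or.inl fun e he ↦ by have := (mem_filter.1 he).2; omega
      · exact Or.inr hlm
  have m_le : (m : ℝ) ≤ Real.log l / Real.log (y ^ 2) + 1 :=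
    (Nat.ceil_lt_add_one (by positivity)).le
  calc (#E : ℝ) = ∑ j ∈ range (m + 1), (#{e ∈ E | min (Ω e.1) m = j} : ℝ) := by
        exact_mod_cast card_eq_sum_card_fiberwise fun e _ ↦ mem_range.2 (by omega)
    _ ≤ ∑ _j ∈ range (m + 1), B := sum_le_sum class_le
    _ = (m + 1) * B := by rw [sum_const, card_range, nsmul_eq_mul, Nat.cast_add_one]
    _ ≤ (((Real.log (y ^ 2))⁻¹ + 2) * Real.log l) * B := by
        gcongr
        rw [div_eq_mul_inv] at m_le
        linarith
    _ = _ := by rw [hB]; ring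

end Block

/-! ### Dyadic decomposition -/

section Ranges

variable {n : ℕ} {E : Finset (ℕ × ℕ)}

theorem HexagonFree.card_le_primeCounting (hE : HexagonFree E) {M : ℕ}
    (hprime : ∀ e ∈ E, e.1.Prime) (hmul : ∀ e ∈ E, e.1 * e.2 ≤ n) (hM : ∀ e ∈ E, e.2 ∈ Ioc 0 M) :
    #E ≤ Nat.primeCounting n + Nat.primeCounting (n / 2) + 2 * M ^ 2 := by
  have hEX : E ⊆ (n + 1).primesBelow ×ˢ Ioc 0 M := fun e he ↦ by
    have : e.1 ≤ n := (Nat.le_mul_of_pos_right _ (mem_Ioc.1 (hM e he)).1).trans (hmul e he)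
    exact mem_product.2 ⟨Nat.mem_primesBelow.2 ⟨by omega, hprime e he⟩, hM e he⟩
  have min_le (p : ℕ) : min #(nbrs E p) 2 ≤ 1 + if p ≤ n / 2 then 1 else 0 := by
    split_ifs with hp
    · exact min_le_right _ _
    · refine (min_le_left _ _).trans (card_le_one_iff_subset_singleton.2 ⟨1, fun v hv ↦ ?_⟩)
      have hv := mem_nbrs.1 hv
      have v_pos : 0 < v := (mem_Ioc.1 (hM _ hv)).1
      have : p * v ≤ n := hmul _ hv
      have : v < 2 := by
        by_contra! hv₂
        have : p * 2 ≤ p * v := Nat.mul_le_mul_left p hv₂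
        omega
      rw [mem_singleton]
      omega
  have filter_eq : {p ∈ (n + 1).primesBelow | p ≤ n / 2} = (n / 2 + 1).primesBelow := by
    ext p
    simp only [mem_filter, Nat.mem_primesBelow]
    grind
  calc #E ≤ ∑ p ∈ (n + 1).primesBelow, min #(nbrs E p) 2 + 2 * #(Ioc 0 M) ^ 2 :=
        hE.card_le_sum_min_add_two_mul_sq hEX
    _ ≤ ∑ p ∈ (n + 1).primesBelow, (1 + if p ≤ n / 2 then 1 else 0) + 2 * #(Ioc 0 M) ^ 2 := by
        gcongr with p
        exact min_le p
    _ = _ := by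
        rw [sum_add_distrib, ← card_eq_sum_ones, sum_boole, filter_eq, Nat.cast_id,
          Nat.primesBelow_card_eq_primeCounting', Nat.primesBelow_card_eq_primeCounting',
          Nat.card_Ioc, Nat.sub_zero]
        rfl

variable {T : ℝ}

theorem IsBalanced.prime_of_sq_lt {e : ℕ × ℕ} (he : IsBalanced n e) (hTn : T ^ 3 = n)
    (h : T ^ 2 < e.1) : e.1.Prime := by
  refine he.prime_or_cube_le.resolve_right fun hle ↦ ?_
  have cube_lt : (T ^ 2) ^ 3 < (e.1 : ℝ) ^ 3 := pow_lt_pow_left₀ h (by positivity) three_ne_zero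
  have cube_le : (e.1 : ℝ) ^ 3 ≤ (n : ℝ) ^ 2 := by exact_mod_cast hle
  rw [← hTn] at cube_le
  linarith [show (T ^ 2) ^ 3 = (T ^ 3) ^ 2 by ring]

theorem IsBalanced.snd_le_sq {e : ℕ × ℕ} (he : IsBalanced n e) (hTn : T ^ 3 = n) :
    (e.2 : ℝ) ≤ T ^ 2 := by
  refine le_of_pow_le_pow_left₀ three_ne_zero (by positivity) ?_
  calc (e.2 : ℝ) ^ 3 ≤ (n : ℝ) ^ 2 := by exact_mod_cast he.snd_cube_le
    _ = (T ^ 2) ^ 3 := by rw [← hTn]; ring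

theorem HexagonFree.card_le_of_sq_lt (hE : HexagonFree E) (hbal : ∀ e ∈ E, IsBalanced n e)
    (hT : 0 < T) (hTn : T ^ 3 = n) (hlt : ∀ e ∈ E, T ^ 2 < e.1) :
    (#E : ℝ) ≤ Nat.primeCounting n + Nat.primeCounting (n / 2) + 2 * T ^ 2 := by
  have snd_mem (e) (he : e ∈ E) : e.2 ∈ Ioc 0 ⌊T⌋₊ := by
    refine mem_Ioc.2 ⟨(hbal e he).snd_pos, Nat.le_floor ?_⟩
    have mul_le : (e.1 : ℝ) * e.2 ≤ T ^ 2 * T := by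
      rw [← pow_succ, hTn]
      exact_mod_cast (hbal e he).mul_le
    exact le_of_mul_le_mul_left
      ((mul_le_mul_of_nonneg_right (hlt e he).le (Nat.cast_nonneg _)).trans mul_le) (by positivity)
  calc (#E : ℝ) ≤ Nat.primeCounting n + Nat.primeCounting (n / 2) + 2 * (⌊T⌋₊ : ℝ) ^ 2 := by
        exact_mod_cast hE.card_le_primeCounting
          (fun e he ↦ (hbal e he).prime_of_sq_lt hTn (hlt e he))
          (fun e he ↦ (hbal e he).mul_le) snd_mem
    _ ≤ _ := by gcongr; exact Nat.floor_le hT.le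

theorem cube_rpow_two_thirds {T : ℝ} (hT : 0 ≤ T) : (T ^ 3) ^ (2 / 3 : ℝ) = T ^ 2 := by
  rw [← Real.rpow_natCast_mul hT]
  norm_num

theorem HexagonFree.card_le_of_le (hE : HexagonFree E) (hbal : ∀ e ∈ E, IsBalanced n e)
    (hT : 1 ≤ T) (hTn : T ^ 3 = n) (hle : ∀ e ∈ E, (e.1 : ℝ) ≤ T) : (#E : ℝ) ≤ 8 * T ^ 2 := by
  have hET : E ⊆ Ioc 0 ⌊T⌋₊ ×ˢ Ioc 0 ⌊T ^ 2⌋₊ := fun e he ↦ mem_product.2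
    ⟨mem_Ioc.2 ⟨(hbal e he).fst_pos, Nat.le_floor (hle e he)⟩,
      mem_Ioc.2 ⟨(hbal e he).snd_pos, Nat.le_floor ((hbal e he).snd_le_sq hTn)⟩⟩
  have card_le := hE.card_le hET
  simp only [Nat.card_Ioc, Nat.sub_zero] at card_le
  calc (#E : ℝ) ≤ 4 * (T * T ^ 2) ^ (2 / 3 : ℝ) + 2 * T + 2 * T ^ 2 := by
        refine card_le.trans ?_
        gcongr <;> exact Nat.floor_le (by positivity)
    _ = 4 * T ^ 2 + 2 * T + 2 * T ^ 2 := by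
        rw [← pow_succ', cube_rpow_two_thirds (by linarith)]
    _ ≤ 8 * T ^ 2 := by nlinarith

theorem logComparable_log {N : ℕ} (hT : 3 ≤ T) (hN : T ≤ N + 1) (hN₂ : (N : ℝ) ≤ 2 * T ^ 2) :
    LogComparable (Real.log T) N := by
  have N_pos : (0 : ℝ) < N := by linarith
  have le_cube : T ≤ (N : ℝ) ^ 3 := by
    have : (2 : ℝ) ≤ N := by linarith
    nlinarith [mul_nonneg (sub_nonneg.2 this) N_pos.le, sq_nonneg ((N : ℝ) - 2)]
  have le_pow : (N : ℝ) ≤ T ^ 3 := hN₂.trans (by nlinarith [sq_nonneg T])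
  constructor
  · simpa only [Real.log_pow, Nat.cast_ofNat] using Real.log_le_log (by linarith) le_cube
  · simpa only [Real.log_pow, Nat.cast_ofNat] using Real.log_le_log N_pos le_pow

/-- The exponents `k` of the blocks `[2 ^ k, 2 ^ (k + 1))` that meet `(T, T ^ 2]`. -/
noncomputable def dyadicExponents (T : ℝ) : Finset ℕ :=
  Ico (Nat.log 2 ⌊T⌋₊) (Nat.log 2 ⌊T ^ 2⌋₊ + 1)

theorem log_mem_dyadicExponents {m : ℕ} (hm : T < m) (hm₂ : (m : ℝ) ≤ T ^ 2) :
    Nat.log 2 m ∈ dyadicExponents T :=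
  mem_Ico.2 ⟨Nat.log_mono_right (Nat.floor_le_of_le hm.le),
    Nat.lt_succ_of_le (Nat.log_mono_right (Nat.le_floor hm₂))⟩

theorem lt_two_pow_log_floor_add_one : T < (2 : ℝ) ^ (Nat.log 2 ⌊T⌋₊ + 1) := by
  exact_mod_cast Nat.lt_of_floor_lt (Nat.lt_pow_succ_log_self one_lt_two ⌊T⌋₊)

theorem two_pow_log_floor_le {x : ℝ} (hx : 1 ≤ x) : (2 : ℝ) ^ Nat.log 2 ⌊x⌋₊ ≤ x := by
  refine le_trans ?_ (Nat.floor_le (by linarith))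
  exact_mod_cast Nat.pow_log_le_self 2 (Nat.floor_pos.2 hx).ne'

theorem lt_two_pow_and_two_pow_le (hT : 1 ≤ T) {k : ℕ} (hk : k ∈ dyadicExponents T) :
    T < 2 ^ (k + 1) ∧ (2 : ℝ) ^ k ≤ T ^ 2 := by
  obtain ⟨hk₁, hk₂⟩ := mem_Ico.1 hk
  exact ⟨lt_two_pow_log_floor_add_one.trans_le (by gcongr; norm_num),
    (pow_le_pow_right₀ one_le_two (Nat.lt_succ_iff.1 hk₂)).trans
      (two_pow_log_floor_le (one_le_pow₀ hT))⟩

theorem card_dyadicExponents_le (hT : 1 ≤ Real.log T) (hT₁ : 1 ≤ T) :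
    (#(dyadicExponents T) : ℝ) ≤ 4 * Real.log T := by
  have log_le : (Nat.log 2 ⌊T ^ 2⌋₊ : ℝ) * Real.log 2 ≤ 2 * Real.log T := by
    have := Real.log_le_log (by positivity) (two_pow_log_floor_le (one_le_pow₀ hT₁ (n := 2)))
    simpa only [Real.log_pow, Nat.cast_ofNat] using this
  have card_le : (#(dyadicExponents T) : ℝ) ≤ Nat.log 2 ⌊T ^ 2⌋₊ + 1 := by
    exact_mod_cast (Nat.card_Ico _ _).trans_le (Nat.sub_le _ _)
  nlinarith [Real.log_two_gt_d9]

theorem sum_dyadicExponents_two_pow_le (hT : 1 ≤ T) :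
    ∑ k ∈ dyadicExponents T, (2 : ℝ) ^ (k + 1) ≤ 4 * T ^ 2 := by
  calc ∑ k ∈ dyadicExponents T, (2 : ℝ) ^ (k + 1)
      ≤ ∑ k ∈ range (Nat.log 2 ⌊T ^ 2⌋₊ + 1), (2 : ℝ) ^ (k + 1) :=
        sum_le_sum_of_subset_of_nonneg (fun k hk ↦ mem_range.2 (mem_Ico.1 hk).2)
          fun _ _ _ ↦ by positivity
    _ = (2 ^ (Nat.log 2 ⌊T ^ 2⌋₊ + 1) - 1) * 2 := by
        simp_rw [pow_succ (2 : ℝ), ← sum_mul]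
        rw [geom_sum_eq (by norm_num), pow_succ]
        ring
    _ ≤ 4 * T ^ 2 := by
        have := two_pow_log_floor_le (one_le_pow₀ hT (n := 2))
        rw [pow_succ]
        linarith

theorem sum_dyadicExponents_div_two_pow_le (hT : 0 < T) :
    ∑ k ∈ dyadicExponents T, T ^ 3 / (2 : ℝ) ^ k ≤ 4 * T ^ 2 := by
  calc ∑ k ∈ dyadicExponents T, T ^ 3 / (2 : ℝ) ^ k
      = T ^ 3 * ∑ k ∈ dyadicExponents T, (2⁻¹ : ℝ) ^ k := by
        simp_rw [mul_sum, inv_pow, div_eq_mul_inv]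
    _ ≤ T ^ 3 * ((2⁻¹ : ℝ) ^ Nat.log 2 ⌊T⌋₊ / (1 - 2⁻¹)) := by
        gcongr
        exact geom_sum_Ico_le_of_lt_one (by norm_num) (by norm_num)
    _ = T ^ 3 * 4 / 2 ^ (Nat.log 2 ⌊T⌋₊ + 1) := by
        rw [inv_pow, pow_succ]
        field_simp
        ring
    _ ≤ T ^ 3 * 4 / T := by
        gcongr
        exact lt_two_pow_log_floor_add_one.le
    _ = 4 * T ^ 2 := by field_simp

theorem cube_div_two_pow_mem_Icc {k : ℕ} (hT : 1 ≤ T) (hk : k ∈ dyadicExponents T) :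
    T ^ 3 / 2 ^ k ∈ Set.Icc T (2 * T ^ 2) := by
  obtain ⟨lt_pow, pow_le⟩ := lt_two_pow_and_two_pow_le hT hk
  constructor
  · calc T ≤ T ^ 3 / T ^ 2 := by field_simp; rfl
      _ ≤ T ^ 3 / 2 ^ k := by gcongr
  · calc T ^ 3 / 2 ^ k = 2 * T ^ 3 / 2 ^ (k + 1) := by
          rw [pow_succ' (2 : ℝ) k, mul_div_mul_left _ _ two_ne_zero]
      _ ≤ 2 * T ^ 3 / T := by gcongr
      _ = 2 * T ^ 2 := by field_simp

theorem natCast_div_two_pow_le (hTn : T ^ 3 = n) (k : ℕ) :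
    ((n / 2 ^ k : ℕ) : ℝ) ≤ T ^ 3 / 2 ^ k := by
  rw [hTn]
  exact_mod_cast Nat.cast_div_le (α := ℝ) (m := n) (n := 2 ^ k)

theorem logComparable_two_pow {k : ℕ} (hT : 3 ≤ T) (hk : k ∈ dyadicExponents T) :
    LogComparable (Real.log T) (2 ^ (k + 1)) := by
  obtain ⟨lt_pow, pow_le⟩ := lt_two_pow_and_two_pow_le (by linarith) hk
  exact logComparable_log hT (by push_cast; linarith) (by push_cast; rw [pow_succ]; linarith)

theorem logComparable_div_two_pow {k : ℕ} (hT : 3 ≤ T) (hTn : T ^ 3 = n)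
    (hk : k ∈ dyadicExponents T) : LogComparable (Real.log T) (n / 2 ^ k) := by
  obtain ⟨le_div, div_le⟩ := cube_div_two_pow_mem_Icc (by linarith) hk
  refine logComparable_log hT (le_div.trans ?_) ((natCast_div_two_pow_le hTn k).trans div_le)
  rw [hTn, ← Nat.floor_div_eq_div (K := ℝ)]
  push_cast
  exact (Nat.lt_floor_add_one _).le

theorem block_area_rpow_le (hT : 0 ≤ T) (hTn : T ^ 3 = n) (k : ℕ) :
    (((2 ^ (k + 1) : ℕ) : ℝ) * (n / 2 ^ k : ℕ)) ^ (2 / 3 : ℝ) ≤ 2 * T ^ 2 := by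
  have area_le : ((2 ^ (k + 1) : ℕ) : ℝ) * (n / 2 ^ k : ℕ) ≤ 2 * T ^ 3 := by
    calc ((2 ^ (k + 1) : ℕ) : ℝ) * (n / 2 ^ k : ℕ) ≤ 2 ^ (k + 1) * (T ^ 3 / 2 ^ k) := by
          rw [Nat.cast_pow, Nat.cast_two]
          gcongr
          exact natCast_div_two_pow_le hTn k
      _ = 2 * T ^ 3 := by rw [pow_succ]; field_simp
  calc (((2 ^ (k + 1) : ℕ) : ℝ) * (n / 2 ^ k : ℕ)) ^ (2 / 3 : ℝ)
      ≤ (2 * T ^ 3) ^ (2 / 3 : ℝ) := by gcongr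
    _ = 2 ^ (2 / 3 : ℝ) * T ^ 2 := by
        rw [Real.mul_rpow zero_le_two (by positivity), cube_rpow_two_thirds hT]
    _ ≤ 2 ^ (1 : ℝ) * T ^ 2 := by gcongr <;> norm_num
    _ = 2 * T ^ 2 := by rw [Real.rpow_one]

theorem subset_block {k : ℕ} (hbal : ∀ e ∈ E, IsBalanced n e) (hlog : ∀ e ∈ E, Nat.log 2 e.1 = k) :
    E ⊆ Ioc 0 (2 ^ (k + 1)) ×ˢ Ioc 0 (n / 2 ^ k) := fun e he ↦ by
  have pow_le_fst : 2 ^ k ≤ e.1 := hlog e he ▸ Nat.pow_log_le_self 2 (hbal e he).fst_pos.ne'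
  have fst_lt : e.1 < 2 ^ (k + 1) := hlog e he ▸ Nat.lt_pow_succ_log_self one_lt_two e.1
  have snd_le : e.2 ≤ n / 2 ^ k := (Nat.le_div_iff_mul_le (by positivity)).2 <|
    (Nat.mul_le_mul_left e.2 pow_le_fst).trans (mul_comm e.1 e.2 ▸ (hbal e he).mul_le)
  exact mem_product.2 ⟨mem_Ioc.2 ⟨(hbal e he).fst_pos, fst_lt.le⟩,
    mem_Ioc.2 ⟨(hbal e he).snd_pos, snd_le⟩⟩

theorem exists_card_dyadic_block_le {y : ℝ} (hy : 1 < y) (hy₂ : y ^ 2 ≤ 2) :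
    ∃ C : ℝ, 0 < C ∧ ∀ (n : ℕ) (T : ℝ) (E : Finset (ℕ × ℕ)), HexagonFree E →
      (∀ e ∈ E, IsBalanced n e) → T ^ 3 = n → 3 ≤ T → Real.exp 1 ≤ Real.log T →
      ∀ k ∈ dyadicExponents T, (∀ e ∈ E, Nat.log 2 e.1 = k) →
      (#E : ℝ) ≤ C * Real.log (Real.log T) *
        (2 * T ^ 2 * Real.log T ^ (2 / 3 * (y + (y ^ 2)⁻¹ - 2)) + 2 ^ (k + 1) + T ^ 3 / 2 ^ k) := by
  obtain ⟨C, hC₀, hC⟩ := exists_card_block_le hy hy₂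
  refine ⟨C, hC₀, fun n T E hE hbal hTn hT hl k hk hlog ↦ ?_⟩
  have l_pos : 0 < Real.log T := (Real.exp_pos 1).trans_le hl
  have loglog_nonneg : 0 ≤ Real.log (Real.log T) :=
    Real.log_nonneg ((Real.one_le_exp zero_le_one).trans hl)
  refine (hC E _ _ _ hE hl (logComparable_two_pow hT hk) (logComparable_div_two_pow hT hTn hk)
    (subset_block hbal hlog) fun e he ↦ (hbal e he).two_mul_cardFactors_le).trans ?_
  gcongr
  · exact block_area_rpow_le (by linarith) hTn k
  · exact_mod_cast le_rfl
  · exact natCast_div_two_pow_le hTn k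

theorem exists_card_middle_le {y : ℝ} (hy : 1 < y) (hy₂ : y ^ 2 ≤ 2) :
    ∃ C : ℝ, 0 < C ∧ ∀ (n : ℕ) (T : ℝ) (E : Finset (ℕ × ℕ)), HexagonFree E →
      (∀ e ∈ E, IsBalanced n e) → T ^ 3 = n → 3 ≤ T → Real.exp 1 ≤ Real.log T →
      (∀ e ∈ E, T < e.1 ∧ e.1 ≤ T ^ 2) →
      (#E : ℝ) ≤ C * Real.log (Real.log T) *
        (T ^ 2 * Real.log T ^ (1 + 2 / 3 * (y + (y ^ 2)⁻¹ - 2))) := by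
  obtain ⟨C, hC₀, hC⟩ := exists_card_dyadic_block_le hy hy₂
  refine ⟨C * 16, by positivity, fun n T E hE hbal hTn hT hl hmid ↦ ?_⟩
  set l := Real.log T
  set a := 2 / 3 * (y + (y ^ 2)⁻¹ - 2) with ha
  have one_le_l : 1 ≤ l := (Real.one_le_exp zero_le_one).trans hl
  have l_pos : 0 < l := by linarith
  have loglog_nonneg : 0 ≤ Real.log l := Real.log_nonneg one_le_l
  have one_le_T : 1 ≤ T := by linarith
  have one_le_rpow : 1 ≤ l ^ (1 + a) := by
    have : 0 ≤ (y ^ 2)⁻¹ := by positivity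
    exact Real.one_le_rpow one_le_l (by linarith)
  have block_le (k) (hk : k ∈ dyadicExponents T) : (#{e ∈ E | Nat.log 2 e.1 = k} : ℝ) ≤
      C * Real.log l * (2 * T ^ 2 * l ^ a + 2 ^ (k + 1) + T ^ 3 / 2 ^ k) :=
    hC n T _ (hE.mono (filter_subset _ _)) (fun e he ↦ hbal e (mem_filter.1 he).1) hTn hT hl k hk
      fun e he ↦ (mem_filter.1 he).2
  calc (#E : ℝ) = ∑ k ∈ dyadicExponents T, (#{e ∈ E | Nat.log 2 e.1 = k} : ℝ) := by
        exact_mod_cast card_eq_sum_card_fiberwise fun e he ↦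
          log_mem_dyadicExponents (hmid e he).1 (hmid e he).2
    _ ≤ ∑ k ∈ dyadicExponents T,
          C * Real.log l * (2 * T ^ 2 * l ^ a + 2 ^ (k + 1) + T ^ 3 / 2 ^ k) := sum_le_sum block_le
    _ = C * Real.log l * (#(dyadicExponents T) * (2 * T ^ 2 * l ^ a) +
          ∑ k ∈ dyadicExponents T, 2 ^ (k + 1) + ∑ k ∈ dyadicExponents T, T ^ 3 / 2 ^ k) := by
        rw [← mul_sum, sum_add_distrib, sum_add_distrib, sum_const, nsmul_eq_mul]
    _ ≤ C * Real.log l * (4 * l * (2 * T ^ 2 * l ^ a) + 4 * T ^ 2 + 4 * T ^ 2) := by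
        gcongr
        · exact card_dyadicExponents_le one_le_l one_le_T
        · exact sum_dyadicExponents_two_pow_le one_le_T
        · exact sum_dyadicExponents_div_two_pow_le (by linarith)
    _ = C * Real.log l * (8 * T ^ 2 * l ^ (1 + a) + 8 * T ^ 2 * 1) := by
        rw [Real.rpow_add l_pos, Real.rpow_one]
        ring
    _ ≤ C * Real.log l * (8 * T ^ 2 * l ^ (1 + a) + 8 * T ^ 2 * l ^ (1 + a)) := by gcongr
    _ = C * 16 * Real.log l * (T ^ 2 * l ^ (1 + a)) := by ring

theorem exists_card_balanced_le {y : ℝ} (hy : 1 < y) (hy₂ : y ^ 2 ≤ 2) :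
    ∃ C : ℝ, 0 < C ∧ ∀ (n : ℕ) (T : ℝ) (E : Finset (ℕ × ℕ)), HexagonFree E →
      (∀ e ∈ E, IsBalanced n e) → T ^ 3 = n → 3 ≤ T → Real.exp 1 ≤ Real.log T →
      (#E : ℝ) ≤ Nat.primeCounting n + Nat.primeCounting (n / 2) + C * Real.log (Real.log T) *
        (T ^ 2 * Real.log T ^ (1 + 2 / 3 * (y + (y ^ 2)⁻¹ - 2))) := by
  obtain ⟨C, hC₀, hC⟩ := exists_card_middle_le hy hy₂
  refine ⟨C + 10, by positivity, fun n T E hE hbal hTn hT hl ↦ ?_⟩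
  have one_le_rpow : 1 ≤ Real.log T ^ (1 + 2 / 3 * (y + (y ^ 2)⁻¹ - 2)) := by
    have : 0 ≤ (y ^ 2)⁻¹ := by positivity
    exact Real.one_le_rpow ((Real.one_le_exp zero_le_one).trans hl) (by linarith)
  set R := Real.log T ^ (1 + 2 / 3 * (y + (y ^ 2)⁻¹ - 2))
  have one_le_loglog : 1 ≤ Real.log (Real.log T) :=
    (Real.le_log_iff_exp_le ((Real.exp_pos 1).trans_le hl)).2 hl
  have restrict (p : ℕ × ℕ → Prop) [DecidablePred p] :
      HexagonFree {e ∈ E | p e} ∧ ∀ e ∈ {e ∈ E | p e}, IsBalanced n e :=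
    ⟨hE.mono (filter_subset _ _), fun e he ↦ hbal e (mem_filter.1 he).1⟩
  obtain ⟨small_hex, small_bal⟩ := restrict fun e ↦ e.1 ≤ T
  obtain ⟨middle_hex, middle_bal⟩ := restrict fun e ↦ T < e.1 ∧ e.1 ≤ T ^ 2
  obtain ⟨large_hex, large_bal⟩ := restrict fun e ↦ T ^ 2 < e.1
  have small := small_hex.card_le_of_le small_bal (by linarith) hTn fun e he ↦ (mem_filter.1 he).2
  have middle := hC n T _ middle_hex middle_bal hTn hT hl fun e he ↦ (mem_filter.1 he).2
  have large := large_hex.card_le_of_sq_lt large_bal (by linarith) hTn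
    fun e he ↦ (mem_filter.1 he).2
  have cover : E ⊆ {e ∈ E | (e.1 : ℝ) ≤ T} ∪ {e ∈ E | T < e.1 ∧ e.1 ≤ T ^ 2} ∪
      {e ∈ E | T ^ 2 < e.1} := fun e he ↦ by
    simp only [mem_union, mem_filter, he, true_and]
    grind
  have card_le : (#E : ℝ) ≤ #{e ∈ E | (e.1 : ℝ) ≤ T} + #{e ∈ E | T < e.1 ∧ e.1 ≤ T ^ 2} +
      #{e ∈ E | T ^ 2 < e.1} := by
    exact_mod_cast (card_le_card cover).trans
      ((card_union_le _ _).trans (Nat.add_le_add_right (card_union_le _ _) _))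
  have sq_le : 10 * T ^ 2 ≤ 10 * Real.log (Real.log T) * (T ^ 2 * R) := by
    calc 10 * T ^ 2 = 10 * 1 * (T ^ 2 * 1) := by ring
      _ ≤ _ := by gcongr
  linarith

open Filter in
theorem exists_card_le_eventually {y : ℝ} (hy : 1 < y) (hy₂ : y ^ 2 ≤ 2) :
    ∃ c : ℝ, 0 < c ∧ ∀ᶠ n : ℕ in atTop, ∀ A : Finset ℕ, A ⊆ Icc 1 n → MulSidon3 A →
      (#A : ℝ) ≤ Nat.primeCounting n + Nat.primeCounting (n / 2) +
        c * (n : ℝ) ^ (2 / 3 : ℝ) * Real.log n ^ (1 + 2 / 3 * (y + (y ^ 2)⁻¹ - 2)) *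
          Real.log (Real.log n) := by
  obtain ⟨C, hC₀, hC⟩ := exists_card_balanced_le hy hy₂
  have cbrt_tendsto : Tendsto (fun n : ℕ ↦ (n : ℝ) ^ (1 / 3 : ℝ)) atTop atTop :=
    (tendsto_rpow_atTop (by norm_num)).comp tendsto_natCast_atTop_atTop
  refine ⟨C, hC₀, ?_⟩
  filter_upwards [cbrt_tendsto.eventually_ge_atTop 3,
    (Real.tendsto_log_atTop.comp cbrt_tendsto).eventually_ge_atTop (Real.exp 1)]
    with n hT hl A hAn hA
  simp only [Function.comp_apply] at hl
  obtain ⟨E, hEA, hE, hbal⟩ := hA.exists_balanced_hexagonFree hAn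
  set T := (n : ℝ) ^ (1 / 3 : ℝ) with hTdef
  have hTn : T ^ 3 = n := by
    rw [hTdef, ← Real.rpow_mul_natCast n.cast_nonneg]
    norm_num
  have T_le : T ≤ n := hTn ▸ le_self_pow₀ (by linarith) three_ne_zero
  have log_pos : 0 < Real.log T := (Real.exp_pos 1).trans_le hl
  have log_le : Real.log T ≤ Real.log n := Real.log_le_log (by linarith) T_le
  have exponent_nonneg : 0 ≤ 1 + 2 / 3 * (y + (y ^ 2)⁻¹ - 2) := by
    have : 0 ≤ (y ^ 2)⁻¹ := by positivity
    linarith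
  have one_le_log : 1 ≤ Real.log T := (Real.one_le_exp zero_le_one).trans hl
  have loglog_nonneg : 0 ≤ Real.log (Real.log n) := Real.log_nonneg (one_le_log.trans log_le)
  calc (#A : ℝ) = #E := by rw [hEA]
    _ ≤ _ := hC n T E hE hbal hTn hT hl
    _ ≤ Nat.primeCounting n + Nat.primeCounting (n / 2) + C * Real.log (Real.log n) *
          (T ^ 2 * Real.log n ^ (1 + 2 / 3 * (y + (y ^ 2)⁻¹ - 2))) := by gcongr
    _ = _ := by
        rw [← hTn, cube_rpow_two_thirds (by linarith), hTn]
        ring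

end Ranges

open Filter in
theorem mulSidon3_card_upper_bound_explicit_general :
    ∃ c : ℝ, 0 < c ∧ ∀ᶠ n : ℕ in atTop, ∀ A : Finset ℕ, A ⊆ Icc 1 n → MulSidon3 A →
      (#A : ℝ) ≤ Nat.primeCounting n + Nat.primeCounting (n / 2) +
        c * (n : ℝ) ^ (2 / 3 : ℝ) * Real.log n ^ ((2 : ℝ) ^ (1 / 3 : ℝ) - 1 / 3) *
          Real.log (Real.log n) := by
  -- This value of `y` minimises `y + (y ^ 2)⁻¹`.
  set y := (2 : ℝ) ^ (1 / 3 : ℝ) with hy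
  have one_lt_y : 1 < y := Real.one_lt_rpow one_lt_two (by norm_num)
  have y_cube : y ^ 3 = 2 := by
    rw [hy, ← Real.rpow_mul_natCast zero_le_two]
    norm_num
  have y_sq_le : y ^ 2 ≤ 2 := y_cube ▸ pow_le_pow_right₀ one_lt_y.le (by norm_num)
  have exponent_eq : 1 + 2 / 3 * (y + (y ^ 2)⁻¹ - 2) = y - 1 / 3 := by
    have : (y ^ 2)⁻¹ = y / 2 := by
      rw [inv_eq_iff_eq_inv, inv_div, ← y_cube]
      field_simp
    rw [this]
    ring
  simpa only [exponent_eq] using exists_card_le_eventually one_lt_y y_sq_le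

open Filter in
theorem eventually_one_le_log_log : ∀ᶠ n : ℕ in atTop, 1 ≤ Real.log (Real.log n) :=
  ((Real.tendsto_log_atTop.comp Real.tendsto_log_atTop).comp
    tendsto_natCast_atTop_atTop).eventually_ge_atTop 1

theorem mulSidon3_card_upper_bound_explicit :
    ∃ c : ℝ, 0 < c ∧ ∃ N : ℕ, ∀ n : ℕ, N ≤ n → ∀ A : Finset ℕ, A ⊆ Finset.Icc 1 n →
      MulSidon3 A →
      (A.card : ℝ) ≤ (Nat.primeCounting n : ℝ) + (Nat.primeCounting (n / 2) : ℝ) +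
        c * (n : ℝ) ^ ((2 : ℝ) / 3) *
          Real.log n ^ ((2 : ℝ) ^ ((1 : ℝ) / 3) - 1 / 3) *
          Real.log (Real.log n) ^ (2 : ℕ) := by
  obtain ⟨c, hc, hbound⟩ := mulSidon3_card_upper_bound_explicit_general
  obtain ⟨N, hN⟩ := Filter.eventually_atTop.1 (hbound.and eventually_one_le_log_log)
  refine ⟨c, hc, N, fun n hn A hAn hA ↦ ((hN n hn).1 A hAn hA).trans ?_⟩
  gcongr
  exact le_self_pow₀ (hN n hn).2 two_ne_zero
end
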